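/- Equivalence of quasi-norms: Let p, q, r ∈ (0,∞], l ∈ ℕ, α₃ ≥ 0, α₁, α₂ ∈ ℝ, σ₁, σ₂ ∈ (0,∞], let {t_k} be a p-admissible weight sequence in X^{α₃}_{α,σ,p}, let {t_{k,m}} be its associated multiple sequence, and fix c > 1. Then the four quasi-norms ‖φ‖^{(1)} := ‖(Σ_m t_{k,m}^p [δ^l_r(Q^n_{k,m})φ]^p)^{1/p}‖_{l_q(k≥1)} + (Σ_m t_{0,m}^p ‖φ‖_{L_r(Q^n_{0,m})}^p)^{1/p}, ‖φ‖^{(2)} := ‖(Σ_m t_{k,m}^p [δ^l_r(cQ^n_{k,m}, cQ^n_{k,m})φ]^p)^{1/p}‖_{l_q(k≥1)} + (Σ_m t_{0,m}^p ‖φ‖_{L_r(Q^n_{0,m})}^p)^{1/p}, ‖φ‖^{(3)} := ‖(Σ_m t_{k,m}^p [2^{kn/r} E_l(φ, cQ^n_{k,m})_r]^p)^{1/p}‖_{l_q(k≥1)} + (Σ_m t_{0,m}^p ‖φ‖_{L_r(Q^n_{0,m})}^p)^{1/p}, and ‖φ‖^{(4)} := ‖(Σ_m t_{k,m}^p [2^{kn/r}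 ω_l(φ, cQ^n_{k,m})_r]^p)^{1/p}‖_{l_q(k≥1)} + (Σ_m t_{0,m}^p ‖φ‖_{L_r(Q^n_{0,m})}^p)^{1/p} are all equivalent on B̃^l_{p,q,r}(ℝⁿ,{t_k}) to its defining quasi-norm: there exist two-sided constants, independent of φ ∈ L_r^{loc}(ℝⁿ), comparing each of them with ‖φ | B̃^l_{p,q,r}(ℝⁿ,{t_k})‖ (usual modifications for p, q or r equal to ∞). -/

import Mathlib

open MeasureTheory ENNReal Filter
open scoped Classical

noncomputable section

/-- `ℓ_q` quasinorm of a family of extended nonnegative reals (supremum when `q = ∞`). -/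
def lqNorm {ι : Type*} (q : ℝ≥0∞) (c : ι → ℝ≥0∞) : ℝ≥0∞ :=
  if q = ∞ then ⨆ i, c i else (∑' i, c i ^ q.toReal) ^ (1 / q.toReal)

/-- `L_p` quasinorm of an `ℝ≥0∞`-valued function (essential supremum when `p = ∞`). -/
def lpNormE {α : Type*} [MeasurableSpace α] (p : ℝ≥0∞) (μ : Measure α) (f : α → ℝ≥0∞) : ℝ≥0∞ :=
  if p = ∞ then essSup f μ else (∫⁻ x, f x ^ p.toReal ∂μ) ^ (1 / p.toReal)

abbrev Rn (n : ℕ) := Fin n → ℝ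

/-- Open cube centred at `x` of half-side `s` (i.e. `x + s·Iⁿ`). -/
def openCube {n : ℕ} (x : Rn n) (s : ℝ) : Set (Rn n) := {y | ∀ i, |y i - x i| < s}

/-- Open axis-parallel cube with lower corner `c` and side `s`. -/
def cubeAt {n : ℕ} (c : Rn n) (s : ℝ) : Set (Rn n) := {x | ∀ i, c i < x i ∧ x i < c i + s}

/-- Open dyadic cube `Q^n_{k,m}` of side `2^{-k}`. -/
def dyadicCube (n k : ℕ) (m : Fin n → ℤ) : Set (Rn n) :=
  {x | ∀ i, (m i : ℝ) / 2 ^ k < x i ∧ x i < ((m i : ℝ) + 1) / 2 ^ k}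

/-- Half-open dyadic cube `Q̃^n_{k,m}`. -/
def dyadicCubeHalf (n k : ℕ) (m : Fin n → ℤ) : Set (Rn n) :=
  {x | ∀ i, (m i : ℝ) / 2 ^ k ≤ x i ∧ x i < ((m i : ℝ) + 1) / 2 ^ k}

def dyadicCenter (n k : ℕ) (m : Fin n → ℤ) : Rn n := fun i => ((m i : ℝ) + 1 / 2) / 2 ^ k

/-- The concentric dilate `c·Q^n_{k,m}` of a dyadic cube. -/
def dilatedCube (n k : ℕ) (m : Fin n → ℤ) (c : ℝ) : Set (Rn n) :=
  openCube (dyadicCenter n k m) (c / 2 ^ (k + 1))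

def euclNorm {d : ℕ} (y : Rn d) : ℝ := Real.sqrt (∑ i, y i ^ 2)

/-- The difference `Δ^l(h)g(x)`. -/
def diffl {n : ℕ} (l : ℕ) (h : Rn n) (g : Rn n → ℝ) (x : Rn n) : ℝ :=
  ∑ j ∈ Finset.range (l + 1), ((l.choose j : ℝ) * (-1 : ℝ) ^ (l + j)) * g (x + (j : ℝ) • h)

/-- The difference `Δ^l(h,Ω)g(x)`, vanishing unless the segment `[x, x + l·h]` lies in `Ω`. -/
def difflOn {n : ℕ} (l : ℕ) (Ω : Set (Rn n)) (h : Rn n) (g : Rn n → ℝ) (x : Rn n) : ℝ :=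
  if ∀ τ ∈ Set.Icc (0 : ℝ) 1, x + (τ * l) • h ∈ Ω then diffl l h g x else 0

/-- `δ^l_r(Q)g`, where `s` is the side length of the cube `Q`. -/
def deltaE (n l : ℕ) (r : ℝ≥0∞) (s : ℝ) (Q : Set (Rn n)) (g : Rn n → ℝ) : ℝ≥0∞ :=
  ENNReal.ofReal s ^ (-(2 * (n : ℝ)) / r.toReal) *
    eLpNorm (fun hx : Rn n × Rn n => diffl l hx.1 g hx.2) r
      ((volume.restrict (openCube (0 : Rn n) s)).prod (volume.restrict Q))

/-- `δ^l_r(Q,Ω)g`, where `s` is the side length of the cube `Q`. -/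
def deltaEOn (n l : ℕ) (r : ℝ≥0∞) (s : ℝ) (Q Ω : Set (Rn n)) (g : Rn n → ℝ) : ℝ≥0∞ :=
  ENNReal.ofReal s ^ (-(2 * (n : ℝ)) / r.toReal) *
    eLpNorm (fun hx : Rn n × Rn n => difflOn l Ω hx.1 g hx.2) r
      ((volume.restrict (openCube (0 : Rn n) s)).prod (volume.restrict Q))

/-- `Δ̄^l_r(s)g(x)`. -/
def barDelta (n l : ℕ) (r : ℝ≥0∞) (s : ℝ) (g : Rn n → ℝ) (x : Rn n) : ℝ≥0∞ :=
  ENNReal.ofReal s ^ (-(n : ℝ) / r.toReal) *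
    eLpNorm (fun h : Rn n => diffl l h g x) r (volume.restrict (openCube (0 : Rn n) s))

/-- Membership in `L_r^{loc}(ℝⁿ)`. -/
def MemLrLoc (n : ℕ) (r : ℝ≥0∞) (φ : Rn n → ℝ) : Prop :=
  Measurable φ ∧ ∀ K : Set (Rn n), IsCompact K → eLpNorm φ r (volume.restrict K) < ∞

def IsWeight {n : ℕ} (w : Rn n → ℝ) : Prop := Measurable w ∧ ∀ x, 0 < w x

/-- A `p`-admissible weight sequence. -/
def pAdmissible (n : ℕ) (p : ℝ≥0∞) (t : ℕ → Rn n → ℝ) : Prop :=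
  ∀ k, IsWeight (t k) ∧ MemLrLoc n p (t k)

/-- The multiple sequence `t_{k,m} = ‖t_k‖_{L_p(Q^n_{k,m})}` associated with a weight sequence. -/
def tkm (n : ℕ) (p : ℝ≥0∞) (t : ℕ → Rn n → ℝ) (k : ℕ) (m : Fin n → ℤ) : ℝ≥0∞ :=
  eLpNorm (t k) p (volume.restrict (dyadicCube n k m))

/-- The weight `t̄_k` built from a multiple sequence `T`. -/
def tbarOf (n : ℕ) (p : ℝ≥0∞) (T : ℕ → (Fin n → ℤ) → ℝ≥0∞) (k : ℕ) (x : Rn n) : ℝ≥0∞ :=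
  (2 : ℝ≥0∞) ^ (((k * n : ℕ) : ℝ) / p.toReal) *
    ∑' m : Fin n → ℤ, (dyadicCubeHalf n k m).indicator (fun _ => T k m) x

/-- `(2^{kn} ∫_Q f^e)^{1/e}`, with the essential supremum modification for `e = ∞`. -/
def avgNorm (n k : ℕ) (e : ℝ≥0∞) (Q : Set (Rn n)) (f : Rn n → ℝ≥0∞) : ℝ≥0∞ :=
  if e = ∞ then essSup f (volume.restrict Q)
  else ((2 : ℝ≥0∞) ^ (k * n) * ∫⁻ x in Q, f x ^ e.toReal) ^ (1 / e.toReal)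

/-- Conditions (2.14)–(2.16) of the class `X^{α₃}_{α,σ,p}`, expressed for a multiple
sequence `T`. -/
def MemXseq (n : ℕ) (α₁ α₂ α₃ : ℝ) (σ₁ σ₂ p : ℝ≥0∞) (T : ℕ → (Fin n → ℤ) → ℝ≥0∞) : Prop :=
  (∃ C₁ : ℝ≥0∞, 0 < C₁ ∧ C₁ < ∞ ∧ ∀ k j : ℕ, k ≤ j → ∀ m : Fin n → ℤ,
    avgNorm n k p (dyadicCube n k m) (tbarOf n p T k) *
      avgNorm n k σ₁ (dyadicCube n k m) (fun x => (tbarOf n p T j x)⁻¹) ≤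
      C₁ * (2 : ℝ≥0∞) ^ (α₁ * ((k : ℝ) - (j : ℝ)))) ∧
  (∃ C₂ : ℝ≥0∞, 0 < C₂ ∧ C₂ < ∞ ∧ ∀ k j : ℕ, k ≤ j → ∀ m : Fin n → ℤ,
    (avgNorm n k p (dyadicCube n k m) (tbarOf n p T k))⁻¹ *
      avgNorm n k σ₂ (dyadicCube n k m) (tbarOf n p T j) ≤
      C₂ * (2 : ℝ≥0∞) ^ (α₂ * ((j : ℝ) - (k : ℝ)))) ∧
  (∀ k : ℕ, ∀ m m' : Fin n → ℤ, (∀ i, |m i - m' i| ≤ 1) →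
    0 < T k m ∧ T k m ≤ (2 : ℝ≥0∞) ^ (α₃ : ℝ) * T k m')

/-- The weighted class `X^{α₃}_{α,σ,p}` of weight sequences. -/
def MemX (n : ℕ) (α₁ α₂ α₃ : ℝ) (σ₁ σ₂ p : ℝ≥0∞) (t : ℕ → Rn n → ℝ) : Prop :=
  pAdmissible n p t ∧ MemXseq n α₁ α₂ α₃ σ₁ σ₂ p (tkm n p t)

/-- Quasinorm of `B̃^l_{p,q,r}(ℝⁿ, T)` with an `ℝ≥0∞`-valued weight sequence `T`. -/
def tildeBnormE (n l : ℕ) (p q r : ℝ≥0∞) (T : ℕ → Rn n → ℝ≥0∞) (φ : Rn n → ℝ) : ℝ≥0∞ :=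
  lqNorm q (fun k : ℕ =>
    lpNormE p volume (fun x =>
      T (k + 1) x *
        deltaE n l r ((2 : ℝ) ^ (1 - ((k : ℤ) + 1))) (openCube x ((2 : ℝ) ^ (-((k : ℤ) + 1)))) φ)) +
  lpNormE p volume (fun x => T 0 x * eLpNorm φ r (volume.restrict (openCube x 1)))

/-- Quasinorm of `B̃^l_{p,q,r}(ℝⁿ, {t_k})`. -/
def tildeBnorm (n l : ℕ) (p q r : ℝ≥0∞) (t : ℕ → Rn n → ℝ) (φ : Rn n → ℝ) : ℝ≥0∞ :=
  tildeBnormE n l p q r (fun k x => ENNReal.ofReal (t k x)) φ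

/-- Membership in `B̃^l_{p,q,r}(ℝⁿ, {t_k})`. -/
def MemTildeB (n l : ℕ) (p q r : ℝ≥0∞) (t : ℕ → Rn n → ℝ) (φ : Rn n → ℝ) : Prop :=
  MemLrLoc n r φ ∧ tildeBnorm n l p q r t φ < ∞

/-- Quasinorm of `B̄^l_{p,q,r}(ℝⁿ, {t_k})`. -/
def barBnorm (n l : ℕ) (p q r : ℝ≥0∞) (t : ℕ → Rn n → ℝ) (φ : Rn n → ℝ) : ℝ≥0∞ :=
  lqNorm q (fun k : ℕ =>
    lpNormE p volume (fun x =>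
      ENNReal.ofReal (t (k + 1) x) * barDelta n l r ((2 : ℝ) ^ (-((k : ℤ) + 1))) φ x)) +
  lpNormE p volume (fun x => ENNReal.ofReal (t 0 x) * eLpNorm φ r (volume.restrict (openCube x 1)))

/-- Membership in `B̄^l_{p,q,r}(ℝⁿ, {t_k})`. -/
def MemBarB (n l : ℕ) (p q r : ℝ≥0∞) (t : ℕ → Rn n → ℝ) (φ : Rn n → ℝ) : Prop :=
  MemLrLoc n r φ ∧ barBnorm n l p q r t φ < ∞

/-- The class `A^{loc}_∞`. -/
def MemAlocInfty (n : ℕ) (w : Rn n → ℝ) : Prop :=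
  ∃ α : ℝ, α ∈ Set.Ioo (0 : ℝ) 1 ∧ ∃ M : ℝ≥0∞, M < ∞ ∧
    ∀ (c : Rn n) (s : ℝ), 0 < s → s ≤ 1 →
      ∀ F : Set (Rn n), F ⊆ cubeAt c s → MeasurableSet F →
        ENNReal.ofReal α * volume (cubeAt c s) ≤ volume F →
        (∫⁻ x in cubeAt c s, ENNReal.ofReal (w x)) ≤ M * ∫⁻ x in F, ENNReal.ofReal (w x)

/-- The class `A^{loc}_1`. -/
def MemAloc1 (n : ℕ) (w : Rn n → ℝ) : Prop :=
  ∃ C : ℝ≥0∞, C < ∞ ∧ ∀ (c : Rn n) (s : ℝ), 0 < s → s ≤ 1 →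
    ∀ᵐ x ∂volume.restrict (cubeAt c s),
      (∫⁻ y in cubeAt c s, ENNReal.ofReal (w y)) ≤ C * volume (cubeAt c s) * ENNReal.ofReal (w x)

/-- The class `A^{loc}_{p₀}` for `p₀ > 1`. -/
def MemAlocGt (n : ℕ) (p₀ : ℝ) (w : Rn n → ℝ) : Prop :=
  ∃ C : ℝ≥0∞, C < ∞ ∧ ∀ (c : Rn n) (s : ℝ), 0 < s → s ≤ 1 →
    ((volume (cubeAt c s))⁻¹ * ∫⁻ y in cubeAt c s, ENNReal.ofReal (w y)) *
      ((volume (cubeAt c s))⁻¹ *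
        ∫⁻ y in cubeAt c s, ENNReal.ofReal (w y) ^ (-(1 : ℝ) / (p₀ - 1))) ^ (p₀ - 1) ≤ C

/-- The class `A^{loc}_{p₀}` for `p₀ ∈ [1,∞)`. -/
def MemAlocP (n : ℕ) (p₀ : ℝ) (w : Rn n → ℝ) : Prop :=
  if p₀ = 1 then MemAloc1 n w else MemAlocGt n p₀ w

/-- The class `{}^{loc}Y^{α₃}_{α₁,α₂}` of weight sequences of variable smoothness. -/
def MemLocY (n : ℕ) (α₁ α₂ α₃ : ℝ) (s : ℕ → Rn n → ℝ) : Prop :=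
  (∀ k, IsWeight (s k)) ∧
  (∃ C : ℝ, 0 < C ∧ ∀ j k : ℕ, j ≤ k → ∀ x : Rn n,
    C⁻¹ * (2 : ℝ) ^ (α₁ * ((k : ℝ) - (j : ℝ))) ≤ s k x / s j x ∧
      s k x / s j x ≤ C * (2 : ℝ) ^ (α₂ * ((k : ℝ) - (j : ℝ)))) ∧
  (∀ k : ℕ, ∀ x y : Rn n, euclNorm (x - y) ≤ (2 : ℝ) ^ (-(k : ℤ)) →
    s k x ≤ (2 : ℝ) ^ α₃ * s k y)

/-- The set `Ξ^{d,n}_{k,m} = Q^n_{k,m} × (2^{-k}B^d ∖ 2^{-k-1}B^d) ⊂ ℝ^{n+d}`. -/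
def Xi (n d k : ℕ) (m : Fin n → ℤ) : Set (Rn (n + d)) :=
  {z | (fun i => z (Fin.castAdd d i)) ∈ dyadicCube n k m ∧
       euclNorm (fun i : Fin d => z (Fin.natAdd n i)) < (2 : ℝ) ^ (-(k : ℤ)) ∧
       (2 : ℝ) ^ (-(k : ℤ) - 1) ≤ euclNorm (fun i : Fin d => z (Fin.natAdd n i))}

/-- The multiple sequence `γ̂_{k,m} = ‖γ‖_{L_p(Ξ^{d,n}_{k,m})}` generated by a weight `γ`. -/
def gammaHat (n d : ℕ) (p : ℝ≥0∞) (γ : Rn (n + d) → ℝ) (k : ℕ) (m : Fin n → ℤ) : ℝ≥0∞ :=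
  eLpNorm γ p (volume.restrict (Xi n d k m))

def delta1Good (n d : ℕ) (p : ℝ≥0∞) (γ : Rn (n + d) → ℝ) (δ : ℝ) : Prop :=
  ∃ C : ℝ≥0∞, C < ∞ ∧ ∀ k j : ℕ, k ≤ j → ∀ m : Fin n → ℤ,
    (∑' m' : {m' : Fin n → ℤ // dyadicCube n j m' ⊆ dyadicCube n k m},
        gammaHat n d p γ j m'.1 ^ p.toReal) ≤
      C * (2 : ℝ≥0∞) ^ ((((k : ℝ) - (j : ℝ)) * (d : ℝ)) * δ) * gammaHat n d p γ k m ^ p.toReal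

/-- `δ₁(γ,n,d)`. -/
def delta1 (n d : ℕ) (p : ℝ≥0∞) (γ : Rn (n + d) → ℝ) : ℝ :=
  sSup {δ : ℝ | 0 < δ ∧ delta1Good n d p γ δ}

def delta2Good (n d : ℕ) (p : ℝ≥0∞) (γ : Rn (n + d) → ℝ) (δ : ℝ) : Prop :=
  ∃ C : ℝ≥0∞, C < ∞ ∧ ∀ k j : ℕ, k ≤ j → ∀ m : Fin n → ℤ,
    ∀ G : Set (Fin n → ℤ), (∀ m' ∈ G, dyadicCube n j m' ⊆ dyadicCube n k m) →
      (∑' m' : G, gammaHat n d p γ j m'.1 ^ p.toReal) ≤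
        C * (volume (⋃ m' ∈ G, dyadicCube n j m') / volume (dyadicCube n k m)) ^ δ *
          ∑' m' : {m' : Fin n → ℤ // dyadicCube n j m' ⊆ dyadicCube n k m},
            gammaHat n d p γ j m'.1 ^ p.toReal

/-- `δ₂(γ,n,d)`. -/
def delta2 (n d : ℕ) (p : ℝ≥0∞) (γ : Rn (n + d) → ℝ) : ℝ :=
  sSup {δ : ℝ | 0 < δ ∧ delta2Good n d p γ δ}

/-- The cardinal B-spline of degree `deg` with knots `0, 1, …, deg + 1`. -/
def cardB : ℕ → ℝ → ℝ
  | 0, x => if 0 ≤ x ∧ x < 1 then 1 else 0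
  | (d + 1), x => (x / (d + 1)) * cardB d x + (((d : ℝ) + 2 - x) / (d + 1)) * cardB d (x - 1)

/-- The tensor-product B-spline `N^{deg}_{k,m}` on `ℝⁿ`. -/
def Bspl (n deg k : ℕ) (m : Fin n → ℤ) (x : Rn n) : ℝ :=
  ∏ i, cardB deg (2 ^ k * x i - (m i : ℝ))

/-- The spline `Σ_m β_m N^{deg}_{k,m}`. -/
def splineSum (n deg k : ℕ) (β : (Fin n → ℤ) → ℝ) (x : Rn n) : ℝ :=
  ∑' m, β m * Bspl n deg k m x

/-- A dyadic spline of degree `deg` (an element of `Σ^{deg} = ⋃_k Σ^{deg}_k`). -/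
def IsSplineFn (n deg : ℕ) (S : Rn n → ℝ) : Prop :=
  ∃ (k : ℕ) (β : (Fin n → ℤ) → ℝ), S = splineSum n deg k β

/-- The weighted best spline approximation `s_k(φ)` by splines of degree `deg`. -/
def sApprox (n deg : ℕ) (p r : ℝ≥0∞) (T : ℕ → (Fin n → ℤ) → ℝ≥0∞) (φ : Rn n → ℝ) (k : ℕ) :
    ℝ≥0∞ :=
  ⨅ β : (Fin n → ℤ) → ℝ,
    lqNorm p (fun m => T k m *
      eLpNorm (fun x => φ x - splineSum n deg k β x) r (volume.restrict (dyadicCube n k m)))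

/-- `s_j(φ)` for `j ∈ {-1, 0, 1, 2, …}`, including the term `s_{-1}`. -/
def sApproxZ (n deg : ℕ) (p r : ℝ≥0∞) (T : ℕ → (Fin n → ℤ) → ℝ≥0∞) (φ : Rn n → ℝ) (j : ℤ) :
    ℝ≥0∞ :=
  if j < 0 then
    lqNorm p (fun m => T 0 m * eLpNorm φ r (volume.restrict (dyadicCube n 0 m)))
  else sApprox n deg p r T φ j.toNat

/-- Local best polynomial approximation `E_l(φ,Q)_r` by polynomials of total degree `< l`. -/
def bestApproxE (n l : ℕ) (r : ℝ≥0∞) (φ : Rn n → ℝ) (Q : Set (Rn n)) : ℝ≥0∞ :=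
  ⨅ P : {P : MvPolynomial (Fin n) ℝ // P.totalDegree < l},
    eLpNorm (fun x => φ x - MvPolynomial.eval x P.1) r (volume.restrict Q)

/-- The modulus of continuity `ω_l(φ,Q)_r`. -/
def modulusE (n l : ℕ) (r : ℝ≥0∞) (φ : Rn n → ℝ) (Q : Set (Rn n)) : ℝ≥0∞ :=
  ⨆ h : Rn n, eLpNorm (difflOn l Q h φ) r (volume : Measure (Rn n))

def partialDeriv {N : ℕ} (i : Fin N) (ψ : Rn N → ℝ) : Rn N → ℝ :=
  fun x => fderiv ℝ ψ x (Pi.single i 1)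

def iterPD {N : ℕ} : List (Fin N) → (Rn N → ℝ) → Rn N → ℝ
  | [], ψ => ψ
  | i :: L, ψ => partialDeriv i (iterPD L ψ)

def multiIdxList {N : ℕ} (α : Fin N → ℕ) : List (Fin N) :=
  (List.finRange N).foldr (fun i L => List.replicate (α i) i ++ L) []

/-- Iterated partial derivative `D^α`. -/
def multiDeriv {N : ℕ} (α : Fin N → ℕ) (ψ : Rn N → ℝ) : Rn N → ℝ :=
  iterPD (multiIdxList α) ψ

/-- `g` is the weak (Sobolev) derivative `D^α f`. -/
def IsWeakDeriv {N : ℕ} (α : Fin N → ℕ) (f g : Rn N → ℝ) : Prop :=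
  ∀ ψ : Rn N → ℝ, ContDiff ℝ (⊤ : ℕ∞) ψ → HasCompactSupport ψ →
    ∫ x, f x * multiDeriv α ψ x = (-1 : ℝ) ^ (∑ i, α i) * ∫ x, g x * ψ x

/-- The weighted Sobolev norm `Σ_{|α| ≤ l} ‖γ · D^α f‖_{L_p}` computed from a system `D` of
weak derivatives. -/
def sobNorm (N : ℕ) (p : ℝ≥0∞) (l : ℕ) (γ : Rn N → ℝ) (D : (Fin N → ℕ) → Rn N → ℝ) : ℝ≥0∞ :=
  ∑' α : Fin N → ℕ,
    if (∑ i, α i) ≤ l then eLpNorm (fun x => γ x * D α x) p volume else 0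

/-- Membership in the weighted Sobolev space `W^l_p(ℝ^N, γ)`, witnessed by the system `D`
of weak derivatives of `f`. -/
def MemW (N : ℕ) (p : ℝ≥0∞) (l : ℕ) (γ : Rn N → ℝ) (f : Rn N → ℝ)
    (D : (Fin N → ℕ) → Rn N → ℝ) : Prop :=
  MeasureTheory.LocallyIntegrable f volume ∧ D 0 = f ∧
    (∀ α : Fin N → ℕ, (∑ i, α i) ≤ l →
      MeasureTheory.LocallyIntegrable (D α) volume ∧ IsWeakDeriv α f (D α)) ∧
    sobNorm N p l γ D < ∞

/-- `φ` is the trace of `f` on the plane `y = 0`. -/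
def IsTraceSob {n d : ℕ} (f : Rn (n + d) → ℝ) (φ : Rn n → ℝ) : Prop :=
  ∃ f' : Rn (n + d) → ℝ, f' =ᵐ[volume] f ∧
    ∀ (c : Rn n) (s : ℝ), 0 < s →
      Filter.Tendsto (fun y : Rn d => ∫ x in cubeAt c s, |f' (Fin.append x y) - φ x|)
        (nhds 0) (nhds 0)

/-- The weight sequence `γ_k(x) = 2^{k(l+n/p)} Σ_m χ_{Q̃^n_{k,m}}(x) γ̂_{k,m}`. -/
def gammaSeq (n d : ℕ) (p : ℝ≥0∞) (l : ℕ) (γ : Rn (n + d) → ℝ) (k : ℕ) (x : Rn n) : ℝ≥0∞ :=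
  (2 : ℝ≥0∞) ^ ((k : ℝ) * ((l : ℝ) + (n : ℝ) / p.toReal)) *
    ∑' m : Fin n → ℤ, (dyadicCubeHalf n k m).indicator (fun _ => gammaHat n d p γ k m) x

/-- Conjugate exponent in `ℝ≥0∞`. -/
def conjE (e : ℝ≥0∞) : ℝ≥0∞ := (1 - e⁻¹)⁻¹

/-- The exponent `p_θ`. -/
def pTheta (p θ : ℝ≥0∞) : ℝ≥0∞ := if θ = ∞ ∧ p = ∞ then 1 else p / θ

/-- Generic discrete quasinorm built from a multiple sequence `T` and local quantities `A`. -/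
def discNorm (n : ℕ) (p q r : ℝ≥0∞) (T : ℕ → (Fin n → ℤ) → ℝ≥0∞)
    (A : ℕ → (Fin n → ℤ) → ℝ≥0∞) (φ : Rn n → ℝ) : ℝ≥0∞ :=
  lqNorm q (fun k : ℕ => lqNorm p (fun m : Fin n → ℤ => T (k + 1) m * A (k + 1) m)) +
    lqNorm p (fun m : Fin n → ℤ =>
      T 0 m * eLpNorm φ r (volume.restrict (dyadicCube n 0 m)))

/-- The quasinorm `‖φ‖^{(1)}` built from `δ^l_r(Q^n_{k,m})φ`. -/
def discNorm1 (n l : ℕ) (p q r : ℝ≥0∞) (T : ℕ → (Fin n → ℤ) → ℝ≥0∞) (φ : Rn n → ℝ) : ℝ≥0∞ :=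
  discNorm n p q r T
    (fun k m => deltaE n l r ((2 : ℝ) ^ (-(k : ℤ))) (dyadicCube n k m) φ) φ

/-- The quasinorm `‖φ‖^{(2)}` built from `δ^l_r(cQ^n_{k,m}, cQ^n_{k,m})φ`. -/
def discNorm2 (n l : ℕ) (p q r : ℝ≥0∞) (c : ℝ) (T : ℕ → (Fin n → ℤ) → ℝ≥0∞)
    (φ : Rn n → ℝ) : ℝ≥0∞ :=
  discNorm n p q r T
    (fun k m => deltaEOn n l r (c * (2 : ℝ) ^ (-(k : ℤ)))
      (dilatedCube n k m c) (dilatedCube n k m c) φ) φ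

/-- The quasinorm `‖φ‖^{(3)}` built from `2^{kn/r} E_l(φ, cQ^n_{k,m})_r`. -/
def discNorm3 (n l : ℕ) (p q r : ℝ≥0∞) (c : ℝ) (T : ℕ → (Fin n → ℤ) → ℝ≥0∞)
    (φ : Rn n → ℝ) : ℝ≥0∞ :=
  discNorm n p q r T
    (fun k m => (2 : ℝ≥0∞) ^ (((k * n : ℕ) : ℝ) / r.toReal) *
      bestApproxE n l r φ (dilatedCube n k m c)) φ

/-- The quasinorm `‖φ‖^{(4)}` built from `2^{kn/r} ω_l(φ, cQ^n_{k,m})_r`. -/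
def discNorm4 (n l : ℕ) (p q r : ℝ≥0∞) (c : ℝ) (T : ℕ → (Fin n → ℤ) → ℝ≥0∞)
    (φ : Rn n → ℝ) : ℝ≥0∞ :=
  discNorm n p q r T
    (fun k m => (2 : ℝ≥0∞) ^ (((k * n : ℕ) : ℝ) / r.toReal) *
      modulusE n l r φ (dilatedCube n k m c)) φ

/-! ### Algebra of difference operators -/

/-- Group algebra of shift operators. -/
abbrev ShiftAlg (n : ℕ) := AddMonoidAlgebra ℝ (Rn n)

/-- The shift by `v`. -/
def Sh {n : ℕ} (v : Rn n) : ShiftAlg n := AddMonoidAlgebra.single v 1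

/-- Apply an element of the shift algebra to `φ` and evaluate at `x`. -/
def EvS {n : ℕ} (φ : Rn n → ℝ) (x : Rn n) : ShiftAlg n →ₗ[ℝ] ℝ :=
  (Finsupp.linearCombination ℝ (fun v => φ (x + v))) ∘ₗ
    (AddMonoidAlgebra.coeffLinearEquiv ℝ).toLinearMap

lemma Sh_add {n : ℕ} (v w : Rn n) : Sh v * Sh w = Sh (v + w) := by
  simp [Sh, AddMonoidAlgebra.single_mul_single]

lemma Sh_zero {n : ℕ} : Sh (0 : Rn n) = 1 := by
  simp [Sh, AddMonoidAlgebra.one_def]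

lemma Sh_pow {n : ℕ} (v : Rn n) (k : ℕ) : Sh v ^ k = Sh ((k : ℝ) • v) := by
  induction k with
  | zero => simp [Sh_zero]
  | succ k ih => rw [pow_succ, ih, Sh_add]; congr 1; push_cast; module

lemma Sh_sum {n : ℕ} {ι : Type*} (s : Finset ι) (f : ι → Rn n) :
    ∏ i ∈ s, Sh (f i) = Sh (∑ i ∈ s, f i) := by
  induction s using Finset.induction_on with
  | empty => simp [Sh_zero]
  | insert a s ha ih => rw [Finset.prod_insert ha, Finset.sum_insert ha, ih, Sh_add]

lemma EvS_Sh {n : ℕ} (φ : Rn n → ℝ) (x v : Rn n) : EvS φ x (Sh v) = φ (x + v) := by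
  simp [EvS, Sh]

lemma EvS_one {n : ℕ} (φ : Rn n → ℝ) (x : Rn n) : EvS φ x 1 = φ x := by
  rw [← Sh_zero, EvS_Sh, add_zero]

lemma ShiftAlg_induction {n : ℕ} {p : ShiftAlg n → Prop} (a : ShiftAlg n)
    (h0 : p 0) (hadd : ∀ a b, p a → p b → p (a + b)) (hs : ∀ (c : ℝ) v, p (c • Sh v)) : p a := by
  have key : ∀ f : Rn n →₀ ℝ, p ((AddMonoidAlgebra.coeffLinearEquiv ℝ).symm f) := by
    intro f
    induction f using Finsupp.induction_linear with
    | zero => simpa using h0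
    | add f g hf hg => rw [map_add]; exact hadd _ _ hf hg
    | single v c =>
      have := hs c v
      convert this using 1
      apply (AddMonoidAlgebra.coeffLinearEquiv ℝ).injective
      simp [Sh]
  simpa using key (AddMonoidAlgebra.coeffLinearEquiv ℝ a)

lemma EvS_Sh_mul {n : ℕ} (φ : Rn n → ℝ) (x v : Rn n) (a : ShiftAlg n) :
    EvS φ x (Sh v * a) = EvS φ (x + v) a := by
  induction a using ShiftAlg_induction with
  | h0 => simp
  | hadd a b ha hb => rw [mul_add, map_add, map_add, ha, hb]
  | hs c w => rw [mul_smul_comm, Sh_add, map_smul, map_smul, EvS_Sh, EvS_Sh, add_assoc]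

lemma EvS_measurable {n : ℕ} {φ : Rn n → ℝ} (hφ : Measurable φ) (a : ShiftAlg n) :
    Measurable (fun x => EvS φ x a) := by
  induction a using ShiftAlg_induction with
  | h0 => simp
  | hadd a b ha hb => simp only [map_add]; exact ha.add hb
  | hs c w => simp only [map_smul, EvS_Sh]; exact (hφ.comp (measurable_id.add_const w)).const_smul c

lemma Sh_sub_pow {n : ℕ} (l : ℕ) (h : Rn n) :
    (Sh h - 1) ^ l = ∑ j ∈ Finset.range (l + 1), ((l.choose j : ℝ) * (-1 : ℝ) ^ (l + j)) • Sh ((j : ℝ) • h) := by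
  rw [sub_eq_add_neg, add_pow]
  apply Finset.sum_congr rfl
  intro j hj
  have hj' : j ≤ l := Nat.lt_succ_iff.mp (Finset.mem_range.mp hj)
  rw [Sh_pow]
  have : ((-1 : ShiftAlg n)) ^ (l - j) = (-1 : ShiftAlg n) ^ (l + j) := by
    have : l + j = (l - j) + 2 * j := by omega
    rw [this, pow_add, pow_mul]; simp
  rw [this, Algebra.smul_def ((l.choose j : ℝ) * (-1 : ℝ) ^ (l + j))]
  simp only [map_mul, map_natCast, map_pow, map_neg, map_one]
  ring

lemma EvS_diff {n : ℕ} (l : ℕ) (h : Rn n) (φ : Rn n → ℝ) (x : Rn n) :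
    EvS φ x ((Sh h - 1) ^ l) = diffl l h φ x := by
  rw [Sh_sub_pow, map_sum]
  simp [diffl, EvS_Sh]

/-- Mixed differences as combinations of pure differences, with a free step `s`. -/
lemma mixed_identity {n : ℕ} (l : ℕ) (h : Fin l → Rn n) (s : Rn n) :
    ∏ a : Fin l, (Sh (h a) - 1) = ∑ S : Finset (Fin l), ((-1 : ℝ) ^ S.card) •
      (Sh (∑ a ∈ S, h a) * (Sh (s - ∑ a ∈ S, (((a : ℕ) : ℝ) + 1)⁻¹ • h a) - 1) ^ l) := by
  have key : ∀ k ∈ Finset.range (l + 1), (∑ S : Finset (Fin l), ((-1 : ℝ) ^ S.card) •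
      (Sh (∑ a ∈ S, h a) * Sh ((k : ℝ) • (s - ∑ a ∈ S, (((a : ℕ) : ℝ) + 1)⁻¹ • h a)))) =
      Sh ((k : ℝ) • s) * ∏ a : Fin l, (1 - Sh ((1 - (k : ℝ) * (((a : ℕ) : ℝ) + 1)⁻¹) • h a)) := by
    intro k _
    have : ∀ a : Fin l, 1 - Sh ((1 - (k : ℝ) * (((a : ℕ) : ℝ) + 1)⁻¹) • h a) =
      (-Sh ((1 - (k : ℝ) * (((a : ℕ) : ℝ) + 1)⁻¹) • h a)) + 1 := fun a => by ring
    simp_rw [this]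
    rw [Finset.prod_add, Finset.powerset_univ, Finset.mul_sum]
    apply Finset.sum_congr rfl
    intro S _
    rw [Finset.prod_const_one, mul_one, Finset.prod_neg, Sh_sum, Sh_add, Algebra.smul_def]
    simp only [map_pow, map_neg, map_one]
    rw [mul_left_comm, Sh_add]
    congr 2
    simp only [sub_smul, one_smul, smul_sub, Finset.sum_sub_distrib, mul_smul, Finset.smul_sum]
    abel
  simp_rw [Sh_sub_pow l, Finset.mul_sum, Finset.smul_sum]
  rw [Finset.sum_comm]
  have : ∀ k ∈ Finset.range (l+1), (∑ S : Finset (Fin l), ((-1 : ℝ) ^ S.card) •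
      (Sh (∑ a ∈ S, h a) * ((l.choose k : ℝ) * (-1 : ℝ) ^ (l + k)) • Sh ((k : ℝ) • (s - ∑ a ∈ S, (((a : ℕ) : ℝ) + 1)⁻¹ • h a))))
      = ((l.choose k : ℝ) * (-1 : ℝ) ^ (l + k)) • (Sh ((k : ℝ) • s) * ∏ a : Fin l, (1 - Sh ((1 - (k : ℝ) * (((a : ℕ) : ℝ) + 1)⁻¹) • h a))) := by
    intro k hk
    rw [← key k hk, Finset.smul_sum]
    apply Finset.sum_congr rfl
    intro S _
    rw [mul_smul_comm, smul_comm]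
  rw [Finset.sum_congr rfl this, Finset.sum_eq_single 0]
  · have h1 : ∀ a : Fin l, (1 - Sh (h a)) = (-1) * (Sh (h a) - 1) := fun a => by ring
    simp only [Nat.choose_zero_right, Nat.cast_one, one_mul, add_zero, Nat.cast_zero, zero_smul, Sh_zero, zero_mul, sub_zero, one_smul]
    simp_rw [h1]
    rw [Finset.prod_mul_distrib, Finset.prod_const, Algebra.smul_def]
    simp only [map_pow, map_neg, map_one, Finset.card_univ, Fintype.card_fin]
    rw [← mul_assoc, ← pow_add, ← two_mul, pow_mul]; simp
  · intro k hk hk0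
    have hkl : k < l + 1 := Finset.mem_range.mp hk
    have : ∏ a : Fin l, (1 - Sh ((1 - (k : ℝ) * (((a : ℕ) : ℝ) + 1)⁻¹) • h a)) = 0 := by
      apply Finset.prod_eq_zero (Finset.mem_univ (⟨k - 1, by omega⟩ : Fin l))
      have : (((⟨k - 1, by omega⟩ : Fin l) : ℕ) : ℝ) + 1 = k := by
        have : k - 1 + 1 = k := by omega
        simp only []
        exact_mod_cast this
      rw [this, mul_inv_cancel₀ (by exact_mod_cast hk0), sub_self, zero_smul, Sh_zero, sub_self]
    rw [this]; simp
  · simp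

/-! ### Quasi-norm tools -/

/-- Quasi-triangle constant, at least one. -/
def QC (r : ℝ≥0∞) : ℝ≥0∞ := max 1 (LpAddConst r)

lemma one_le_QC (r : ℝ≥0∞) : 1 ≤ QC r := le_max_left _ _
lemma QC_ne_top (r : ℝ≥0∞) : QC r ≠ ∞ := by
  simp [QC, (LpAddConst_lt_top r).ne]
lemma QC_pow_ne_top (r : ℝ≥0∞) (k : ℕ) : QC r ^ k ≠ ∞ := ENNReal.pow_ne_top (QC_ne_top r)

section
variable {α : Type*} [MeasurableSpace α] {μ : Measure α} {r : ℝ≥0∞}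

lemma qadd {f g : α → ℝ} (hf : AEStronglyMeasurable f μ) (hg : AEStronglyMeasurable g μ)
    (r : ℝ≥0∞) :
    eLpNorm (fun x => f x + g x) r μ ≤ QC r * (eLpNorm f r μ + eLpNorm g r μ) :=
  (eLpNorm_add_le' hf hg r).trans (mul_le_mul_left (le_max_right _ _) _)

lemma qsub {f g : α → ℝ} (hf : AEStronglyMeasurable f μ) (hg : AEStronglyMeasurable g μ)
    (r : ℝ≥0∞) :
    eLpNorm (fun x => f x - g x) r μ ≤ QC r * (eLpNorm f r μ + eLpNorm g r μ) :=
  (eLpNorm_sub_le' hf hg r).trans (mul_le_mul_left (le_max_right _ _) _)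

lemma qsum {ι : Type*} (s : Finset ι) (f : ι → α → ℝ)
    (hf : ∀ i ∈ s, AEStronglyMeasurable (f i) μ) (r : ℝ≥0∞) :
    eLpNorm (fun x => ∑ i ∈ s, f i x) r μ ≤ QC r ^ s.card * ∑ i ∈ s, eLpNorm (f i) r μ := by
  induction s using Finset.induction_on with
  | empty => simp
  | insert a s ha ih =>
    simp only [Finset.sum_insert ha, Finset.card_insert_of_notMem ha]
    have h1 : AEStronglyMeasurable (fun x => ∑ i ∈ s, f i x) μ := by
      apply Finset.aestronglyMeasurable_fun_sum
      intro i hi; exact hf i (Finset.mem_insert_of_mem hi)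
    refine (qadd (hf a (Finset.mem_insert_self _ _)) h1 r).trans ?_
    rw [pow_succ', mul_assoc]
    gcongr
    rw [mul_add]
    gcongr
    · exact le_mul_of_one_le_left zero_le (one_le_pow₀ (one_le_QC r))
    · exact ih fun i hi => hf i (Finset.mem_insert_of_mem hi)

lemma eLp_cover {ι : Type*} (s : Finset ι) (S : Set α) (A : ι → Set α)
    (hA : ∀ i ∈ s, MeasurableSet (A i)) (hS : ∀ᵐ x ∂(μ.restrict S), ∃ i ∈ s, x ∈ A i)
    {f : α → ℝ} (hf : AEStronglyMeasurable f μ) (r : ℝ≥0∞) :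
    eLpNorm f r (μ.restrict S) ≤ QC r ^ s.card * ∑ i ∈ s, eLpNorm f r (μ.restrict (A i)) := by
  calc eLpNorm f r (μ.restrict S)
      ≤ eLpNorm (fun x => ∑ i ∈ s, (A i).indicator (fun y => ‖f y‖) x) r (μ.restrict S) := by
        apply eLpNorm_mono_ae
        filter_upwards [hS] with x hx
        obtain ⟨i, hi, hxi⟩ := hx
        have h0 : ∀ j ∈ s, 0 ≤ (A j).indicator (fun y => ‖f y‖) x := fun j _ =>
          Set.indicator_nonneg (fun _ _ => norm_nonneg _) _
        have : ‖f x‖ = (A i).indicator (fun y => ‖f y‖) x := by simp [hxi]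
        rw [this]
        exact (Finset.single_le_sum h0 hi).trans (le_abs_self _)
    _ ≤ eLpNorm (fun x => ∑ i ∈ s, (A i).indicator (fun y => ‖f y‖) x) r μ :=
        eLpNorm_mono_measure _ Measure.restrict_le_self
    _ ≤ _ := by
        refine (qsum s _ (fun i hi => hf.norm.indicator (hA i hi)) r).trans ?_
        apply mul_le_mul_right
        apply Finset.sum_le_sum
        intro i hi
        rw [eLpNorm_indicator_eq_eLpNorm_restrict (hA i hi), eLpNorm_norm]

lemma eLp_mono_set {S S' : Set α} (h : S ⊆ S') (f : α → ℝ) (r : ℝ≥0∞) :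
    eLpNorm f r (μ.restrict S) ≤ eLpNorm f r (μ.restrict S') :=
  eLpNorm_mono_measure _ (Measure.restrict_mono h le_rfl)

/-- comparison through a measure preserving map -/
lemma eLp_comp {β : Type*} [MeasurableSpace β] {ν : Measure β} {Φ : α → β}
    (hΦ : MeasurePreserving Φ μ ν) {S : Set α} {S' : Set β}
    (hS : MeasurableSet S) (hS' : MeasurableSet S') (hSS : ∀ x ∈ S, Φ x ∈ S') {f : β → ℝ}
    (hf : AEStronglyMeasurable f ν) {g : α → ℝ} (hg : ∀ x ∈ S, ‖g x‖ ≤ ‖f (Φ x)‖) (r : ℝ≥0∞) :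
    eLpNorm g r (μ.restrict S) ≤ eLpNorm f r (ν.restrict S') := by
  have h1 := hΦ.restrict_preimage hS'
  rw [← eLpNorm_comp_measurePreserving hf.restrict h1]
  calc eLpNorm g r (μ.restrict S) ≤ eLpNorm (f ∘ Φ) r (μ.restrict S) := by
        apply eLpNorm_mono_ae
        filter_upwards [ae_restrict_mem hS] with x hx using hg x hx
    _ ≤ _ := eLp_mono_set hSS _ _

lemma eLp_snd {β : Type*} [MeasurableSpace β] {ν : Measure β} [SFinite μ] (hν : ν Set.univ ≠ 0)
    {f : α → ℝ} (hf : Measurable f) (r : ℝ≥0∞) :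
    eLpNorm (fun z : β × α => f z.2) r (ν.prod μ) = ν Set.univ ^ (1 / r).toReal * eLpNorm f r μ := by
  have := eLpNorm_map_measure (p := r) (μ := ν.prod μ) (f := Prod.snd) (g := f)
    hf.aestronglyMeasurable measurable_snd.aemeasurable
  rw [Measure.map_snd_prod, eLpNorm_smul_measure_of_ne_zero hν] at this
  simpa [Function.comp_def] using this.symm

lemma eLp_slice {β : Type*} [MeasurableSpace β] {ν : Measure β} [SFinite μ] [IsFiniteMeasure ν]
    (hν : ν ≠ 0) {G : β × α → ℝ} (hG : Measurable G) (hr : r ≠ 0) {N : Set β} (hN : ν N = 0) :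
    ∃ y ∉ N, ν Set.univ ^ (1 / r).toReal * eLpNorm (fun x => G (y, x)) r μ
      ≤ eLpNorm G r (ν.prod μ) := by
  by_cases hr' : r = ∞
  · subst hr'
    simp only [eLpNorm_exponent_top]
    have h1 : ∀ᵐ z ∂(ν.prod μ), ‖G z‖ₑ ≤ eLpNormEssSup G (ν.prod μ) := enorm_ae_le_eLpNormEssSup _ _
    have h2 := Measure.ae_ae_of_ae_prod h1
    have h3 : ∀ᵐ y ∂ν, y ∉ N := measure_eq_zero_iff_ae_notMem.mp hN
    haveI : (ae ν).NeBot := ae_neBot.mpr hν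
    obtain ⟨y, hy, hyN⟩ := (h2.and h3).exists
    refine ⟨y, hyN, ?_⟩
    simp
    exact eLpNormEssSup_le_of_ae_enorm_bound hy
  · have hG' : Measurable fun z => ‖G z‖ₑ ^ r.toReal := hG.enorm.pow_const _
    obtain ⟨y, hyN, hy⟩ := exists_notMem_null_le_laverage (μ := ν)
      (f := fun y => ∫⁻ x, ‖G (y, x)‖ₑ ^ r.toReal ∂μ) hν hG'.lintegral_prod_right'.aemeasurable hN
    refine ⟨y, hyN, ?_⟩
    have hrp : 0 < r.toReal := ENNReal.toReal_pos hr hr'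
    rw [eLpNorm_eq_lintegral_rpow_enorm_toReal hr hr', eLpNorm_eq_lintegral_rpow_enorm_toReal hr hr',
      lintegral_prod _ hG'.aemeasurable]
    simp only [one_div, ENNReal.toReal_inv]
    rw [← ENNReal.mul_rpow_of_nonneg _ _ (by positivity)]
    gcongr
    refine (mul_le_mul_right hy _).trans ?_
    rw [measure_mul_laverage]
end

/-! ### Cubes -/

/-- unit cube -/
def uQ (n : ℕ) : Set (Rn n) := {x | ∀ i, 0 < x i ∧ x i < 1}

lemma openCube_eq_pi {n : ℕ} (x : Rn n) (s : ℝ) :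
    openCube x s = Set.univ.pi fun i => Set.Ioo (x i - s) (x i + s) := by
  ext y; simp only [openCube, Set.mem_ofPred_eq, Set.mem_pi, Set.mem_univ, true_implies, Set.mem_Ioo, abs_lt]
  refine forall_congr' fun i => ⟨fun h => ⟨by linarith, by linarith⟩, fun h => ⟨by linarith, by linarith⟩⟩

lemma uQ_eq_pi (n : ℕ) : uQ n = Set.univ.pi fun _ => Set.Ioo 0 1 := by
  ext y; simp [uQ]

lemma dyadicCube_eq_pi (n k : ℕ) (m : Fin n → ℤ) : dyadicCube n k m =
    Set.univ.pi fun i => Set.Ioo ((m i : ℝ) / 2 ^ k) (((m i : ℝ) + 1) / 2 ^ k) := by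
  ext y; simp [dyadicCube]

lemma isOpen_openCube {n : ℕ} (x : Rn n) (s : ℝ) : IsOpen (openCube x s) := by
  rw [openCube_eq_pi]; exact isOpen_set_pi Set.finite_univ fun _ _ => isOpen_Ioo
lemma isOpen_uQ (n : ℕ) : IsOpen (uQ n) := by
  rw [uQ_eq_pi]; exact isOpen_set_pi Set.finite_univ fun _ _ => isOpen_Ioo
lemma isOpen_dyadicCube (n k : ℕ) (m : Fin n → ℤ) : IsOpen (dyadicCube n k m) := by
  rw [dyadicCube_eq_pi]; exact isOpen_set_pi Set.finite_univ fun _ _ => isOpen_Ioo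
lemma convex_openCube {n : ℕ} (x : Rn n) (s : ℝ) : Convex ℝ (openCube x s) := by
  rw [openCube_eq_pi]; exact convex_pi fun _ _ => convex_Ioo _ _
lemma convex_uQ (n : ℕ) : Convex ℝ (uQ n) := by
  rw [uQ_eq_pi]; exact convex_pi fun _ _ => convex_Ioo _ _
lemma meas_openCube {n : ℕ} (x : Rn n) (s : ℝ) : MeasurableSet (openCube x s) :=
  (isOpen_openCube x s).measurableSet
lemma meas_uQ (n : ℕ) : MeasurableSet (uQ n) := (isOpen_uQ n).measurableSet
lemma meas_dyadicCube (n k : ℕ) (m : Fin n → ℤ) : MeasurableSet (dyadicCube n k m) :=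
  (isOpen_dyadicCube n k m).measurableSet

lemma vol_openCube {n : ℕ} (x : Rn n) (s : ℝ) :
    volume (openCube x s) = ENNReal.ofReal (2 * s) ^ n := by
  rw [openCube_eq_pi, Real.volume_pi_Ioo]
  have : ∀ i, x i + s - (x i - s) = 2 * s := fun i => by ring
  simp [this]

lemma vol_uQ (n : ℕ) : volume (uQ n) = 1 := by
  rw [uQ_eq_pi, Real.volume_pi_Ioo]; simp

/-! ### Differences on convex sets -/

lemma difflOn_convex {n : ℕ} (l : ℕ) {Ω : Set (Rn n)} (hΩ : Convex ℝ Ω) (h : Rn n) (g : Rn n → ℝ)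
    (x : Rn n) : difflOn l Ω h g x = if x ∈ Ω ∧ x + (l : ℝ) • h ∈ Ω then diffl l h g x else 0 := by
  unfold difflOn
  congr 1
  apply propext
  constructor
  · intro H
    exact ⟨by simpa using H 0 (by simp), by simpa using H 1 (by simp)⟩
  · rintro ⟨h0, h1⟩ τ hτ
    have := hΩ h0 h1 (sub_nonneg.mpr hτ.2) hτ.1 (by ring)
    convert this using 1
    module

lemma measurable_diffl {n : ℕ} (l : ℕ) {g : Rn n → ℝ} (hg : Measurable g) :
    Measurable fun z : Rn n × Rn n => diffl l z.1 g z.2 := by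
  unfold diffl
  fun_prop

lemma measurable_difflOn {n : ℕ} (l : ℕ) {Ω : Set (Rn n)} (hΩ : Convex ℝ Ω) (hΩm : MeasurableSet Ω)
    {g : Rn n → ℝ} (hg : Measurable g) :
    Measurable fun z : Rn n × Rn n => difflOn l Ω z.1 g z.2 := by
  simp_rw [difflOn_convex l hΩ]
  apply Measurable.ite _ (measurable_diffl l hg) measurable_const
  apply MeasurableSet.inter
  · exact measurable_snd hΩm
  · have : Measurable fun z : Rn n × Rn n => z.2 + (l : ℝ) • z.1 := by fun_prop
    exact this hΩm

/-- unnormalised averaged difference on the unit cube -/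
def dlt (n l : ℕ) (r : ℝ≥0∞) (ε : ℝ) (φ : Rn n → ℝ) : ℝ≥0∞ :=
  eLpNorm (fun z : Rn n × Rn n => difflOn l (uQ n) z.1 φ z.2) r
    ((volume.restrict (openCube (0 : Rn n) ε)).prod (volume.restrict (uQ n)))

lemma lemM0 {n l : ℕ} {r : ℝ≥0∞} {ε τ : ℝ} (hl : 0 < l) (hτ : 0 < τ) (h1 : 12 * (l:ℝ)^2 * τ ≤ 1)
    (h2 : 3 * l * τ ≤ ε) : ∃ C : ℝ≥0∞, C ≠ ∞ ∧ ∀ φ : Rn n → ℝ, Measurable φ →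
      ∀ h : Fin l → Rn n, (∀ a i, |h a i| ≤ τ) → ∀ D : Set (Rn n), MeasurableSet D →
      (∀ x ∈ D, ∀ S : Finset (Fin l), x + ∑ a ∈ S, h a ∈ uQ n) →
      eLpNorm (fun x => EvS φ x (∏ a : Fin l, (Sh (h a) - 1))) r (volume.restrict D)
        ≤ C * dlt n l r ε φ := by
  have hl' : (1:ℝ) ≤ l := by exact_mod_cast hl
  have hlτ : 0 < l * τ := by positivity
  set v : ℝ≥0∞ := ENNReal.ofReal (l * τ) ^ n with hv
  have hv0 : v ≠ 0 := by rw [hv]; exact pow_ne_zero _ (ENNReal.ofReal_pos.mpr hlτ).ne'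
  have hvt : v ≠ ∞ := ENNReal.pow_ne_top ENNReal.ofReal_ne_top
  set w := v ^ (1 / r).toReal with hw
  have hw0 : w ≠ 0 := by simp [hw, ENNReal.rpow_eq_zero_iff, hv0, hvt]
  have hwt : w ≠ ∞ := ENNReal.rpow_ne_top_of_nonneg (by positivity) hvt
  set C1 : ℝ≥0∞ := w⁻¹ * (QC r ^ (Finset.univ : Finset (Finset (Fin l))).card *
    (Finset.univ : Finset (Finset (Fin l))).card) with hC1
  refine ⟨QC r ^ (Finset.univ : Finset (Fin n → Bool)).card *
    ((Finset.univ : Finset (Fin n → Bool)).card * C1), ?_, ?_⟩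
  · apply ENNReal.mul_ne_top (QC_pow_ne_top _ _)
    apply ENNReal.mul_ne_top (by simp)
    exact ENNReal.mul_ne_top (by simpa using hw0) (ENNReal.mul_ne_top (QC_pow_ne_top _ _) (by simp))
  intro φ hφ h hh D hD hDQ
  set F := fun x => EvS φ x (∏ a : Fin l, (Sh (h a) - 1)) with hF
  have hFm : Measurable F := EvS_measurable hφ _
  let A : (Fin n → Bool) → Set (Rn n) := fun σ => {x | x ∈ D ∧ ∀ j, if σ j then x j < 1/2 else 1/2 ≤ x j}
  have hA : ∀ σ, MeasurableSet (A σ) := by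
    intro σ
    have : A σ = D ∩ ⋂ j, {x : Rn n | if σ j then x j < 1/2 else 1/2 ≤ x j} := by
      ext x; simp [A]
    rw [this]
    apply hD.inter
    apply MeasurableSet.iInter
    intro j
    by_cases hσ : σ j
    · simp only [hσ, if_true]; exact measurableSet_lt (measurable_pi_apply j) measurable_const
    · simp only [hσ]; exact measurableSet_le measurable_const (measurable_pi_apply j)
  have hcov : ∀ᵐ x ∂(volume.restrict D), ∃ σ ∈ (Finset.univ : Finset (Fin n → Bool)), x ∈ A σ := by
    filter_upwards [ae_restrict_mem hD] with x hx
    refine ⟨fun j => decide (x j < 1/2), Finset.mem_univ _, hx, fun j => ?_⟩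
    by_cases hj : x j < 1/2
    · simp only [hj, decide_true, if_true]
    · simp only [hj, decide_false]; push Not at hj; simpa using hj
  refine (eLp_cover Finset.univ D A (fun σ _ => hA σ) hcov hFm.aestronglyMeasurable r).trans ?_
  rw [mul_assoc, mul_assoc]
  gcongr
  have key : ∀ σ, eLpNorm F r (volume.restrict (A σ)) ≤ C1 * dlt n l r ε φ := by
    intro σ
    let B : Set (Rn n) := Set.univ.pi fun j =>
      if σ j then Set.Ioo (l * τ) (2 * (l * τ)) else Set.Ioo (-(2 * (l * τ))) (-(l*τ))
    have hBm : MeasurableSet B := by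
      apply MeasurableSet.univ_pi; intro j; split_ifs <;> exact measurableSet_Ioo
    have hBv : volume B = v := by
      rw [volume_pi_pi]
      have : ∀ j, volume (if σ j then Set.Ioo (l * τ) (2 * (l * τ)) else Set.Ioo (-(2 * (l * τ))) (-(l*τ))) = ENNReal.ofReal (l * τ) := by
        intro j; split_ifs <;> rw [Real.volume_Ioo] <;> congr 1 <;> ring
      simp [this, hv]
    have hB' : (volume.restrict B) Set.univ = v := by rw [Measure.restrict_apply_univ, hBv]
    have e1 := eLp_snd (μ := volume.restrict (A σ)) (ν := volume.restrict B) (by rw [hB']; exact hv0) hFm r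
    rw [hB', ← hw] at e1
    have e2 : eLpNorm (fun z : Rn n × Rn n => F z.2) r ((volume.restrict B).prod (volume.restrict (A σ)))
        ≤ QC r ^ (Finset.univ : Finset (Finset (Fin l))).card *
    ((Finset.univ : Finset (Finset (Fin l))).card * dlt n l r ε φ) := by
      have : (fun z : Rn n × Rn n => F z.2) = fun z => ∑ S : Finset (Fin l), ((-1:ℝ)^S.card) *
          diffl l (z.1 - ∑ a ∈ S, (((a : ℕ) : ℝ) + 1)⁻¹ • h a) φ (z.2 + ∑ a ∈ S, h a) := by
        ext z
        rw [hF]; simp only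
        rw [mixed_identity l h z.1, map_sum]
        apply Finset.sum_congr rfl
        intro S _
        rw [map_smul, EvS_Sh_mul, EvS_diff, smul_eq_mul]
      rw [this]
      have hgm : ∀ S : Finset (Fin l), Measurable fun z : Rn n × Rn n => ((-1:ℝ)^S.card) *
          diffl l (z.1 - ∑ a ∈ S, (((a : ℕ) : ℝ) + 1)⁻¹ • h a) φ (z.2 + ∑ a ∈ S, h a) := by
        intro S
        apply Measurable.const_mul
        exact (measurable_diffl l hφ).comp (f := fun z : Rn n × Rn n => (z.1 - ∑ a ∈ S, (((a : ℕ) : ℝ) + 1)⁻¹ • h a, z.2 + ∑ a ∈ S, h a)) (by fun_prop)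
      refine (qsum _ _ (fun S _ => (hgm S).aestronglyMeasurable) r).trans ?_
      gcongr
      refine (Finset.sum_le_card_nsmul _ _ (dlt n l r ε φ) ?_).trans (by rw [nsmul_eq_mul])
      intro S _
      unfold dlt
      rw [Measure.prod_restrict, Measure.prod_restrict]
      set b := ∑ a ∈ S, (((a : ℕ) : ℝ) + 1)⁻¹ • h a with hb
      set H := ∑ a ∈ S, h a with hH
      have hcard : (S.card : ℝ) ≤ l := by
        have := S.card_le_univ; simp at this; exact_mod_cast this
      have hbj : ∀ j, |b j| ≤ l * τ := by
        intro j
        rw [hb, Finset.sum_apply]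
        refine (Finset.abs_sum_le_sum_abs _ _).trans ?_
        refine (Finset.sum_le_card_nsmul _ _ τ ?_).trans ?_
        · intro a _
          simp only [Pi.smul_apply, smul_eq_mul, abs_mul]
          have h3 : |(((a:ℕ):ℝ)+1)⁻¹| ≤ 1 := by
            rw [abs_inv, abs_of_pos (by positivity)]
            apply inv_le_one_of_one_le₀; linarith [Nat.cast_nonneg (α := ℝ) (a:ℕ)]
          calc _ ≤ 1 * τ := mul_le_mul h3 (hh a j) (abs_nonneg _) zero_le_one
            _ = τ := one_mul _
        · rw [nsmul_eq_mul]; gcongr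
      have hHj : ∀ j, |H j| ≤ l * τ := by
        intro j
        rw [hH, Finset.sum_apply]
        refine (Finset.abs_sum_le_sum_abs _ _).trans ?_
        refine (Finset.sum_le_card_nsmul _ _ τ (fun a _ => hh a j)).trans ?_
        rw [nsmul_eq_mul]; gcongr
      have hmp : MeasurePreserving (fun z : Rn n × Rn n => (z.1 - b, z.2 + H))
          (volume.prod volume) (volume.prod volume) :=
        (measurePreserving_sub_right volume b).prod (measurePreserving_add_right volume H)
      have hmem : ∀ z ∈ B ×ˢ A σ, z.1 - b ∈ openCube (0 : Rn n) ε ∧ z.2 + H ∈ uQ n ∧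
          z.2 + H + (l:ℝ) • (z.1 - b) ∈ uQ n := by
        rintro ⟨s, x⟩ ⟨hs, hx⟩
        have hxQ : x + H ∈ uQ n := hDQ x hx.1 S
        have hsj : ∀ j, if σ j then (l * τ < s j ∧ s j < 2 * (l * τ)) else (-(2*(l*τ)) < s j ∧ s j < -(l*τ)) := by
          intro j
          have := hs j (Set.mem_univ j)
          simp only at this
          split_ifs at this ⊢ <;> exact this
        have hl2 : (l:ℝ) * τ ≤ l^2 * τ := by nlinarith
        refine ⟨fun j => ?_, hxQ, fun j => ?_⟩
        · have h3 := hsj j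
          have h4 := abs_le.mp (hbj j)
          simp only [Pi.sub_apply, Pi.zero_apply, sub_zero]
          rw [abs_lt]
          split_ifs at h3 <;> constructor <;> linarith
        · have h3 := hsj j
          have h4 := abs_le.mp (hbj j)
          have h5 := abs_le.mp (hHj j)
          have h6 := hxQ j
          have h7 := hx.2 j
          simp only [Pi.sub_apply, Pi.add_apply, Pi.smul_apply, smul_eq_mul] at h6 ⊢
          have hlp : (0:ℝ) < l := by positivity
          split_ifs at h3 h7
          · have h8 : 0 < (l:ℝ) * (s j - b j) := mul_pos hlp (by linarith)
            have h9 : (l:ℝ) * (s j - b j) ≤ l * (3 * (l * τ)) := mul_le_mul_of_nonneg_left (by linarith) hlp.le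
            constructor
            · linarith
            · nlinarith
          · have h8 : (l:ℝ) * (s j - b j) < 0 := mul_neg_of_pos_of_neg hlp (by linarith)
            have h9 : -(l * (3 * (l * τ))) ≤ (l:ℝ) * (s j - b j) := by nlinarith
            constructor
            · nlinarith
            · linarith
      apply eLp_comp hmp (hBm.prod (hA σ)) ((meas_openCube 0 ε).prod (meas_uQ n))
      · intro z hz; exact ⟨(hmem z hz).1, (hmem z hz).2.1⟩
      · exact (measurable_difflOn l (convex_uQ n) (meas_uQ n) hφ).aestronglyMeasurable
      · intro z hz
        rw [difflOn_convex l (convex_uQ n), if_pos (hmem z hz).2, norm_mul]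
        simp
    rw [e1] at e2
    rw [hC1, mul_assoc, ← ENNReal.mul_le_iff_le_inv hw0 hwt]
    simpa [mul_assoc] using e2
  refine (Finset.sum_le_card_nsmul _ _ _ (fun σ _ => key σ)).trans ?_
  rw [nsmul_eq_mul]

lemma lemM {n l : ℕ} {r : ℝ≥0∞} {ε τ : ℝ} (hl : 0 < l) (hτ : 0 < τ) (h1 : 12 * (l:ℝ)^2 * τ ≤ 1)
    (h2 : 3 * l * τ ≤ ε) (K : ℕ) (hK : l ≤ K) : ∃ C : ℝ≥0∞, C ≠ ∞ ∧ ∀ φ : Rn n → ℝ, Measurable φ →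
      ∀ h : Fin K → Rn n, (∀ a i, |h a i| ≤ τ) → ∀ (z : Rn n) (D : Set (Rn n)), MeasurableSet D →
      (∀ x ∈ D, ∀ S : Finset (Fin K), x + z + ∑ a ∈ S, h a ∈ uQ n) →
      eLpNorm (fun x => EvS φ x (Sh z * ∏ a : Fin K, (Sh (h a) - 1))) r (volume.restrict D)
        ≤ C * dlt n l r ε φ := by
  induction K, hK using Nat.le_induction with
  | base =>
    obtain ⟨C, hC, H⟩ := lemM0 (n := n) (r := r) hl hτ h1 h2
    refine ⟨C, hC, fun φ hφ h hh z D hD hDQ => ?_⟩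
    set D' : Set (Rn n) := {y | y - z ∈ D} with hD'
    have hD'm : MeasurableSet D' := (measurable_id.sub_const z) hD
    refine le_trans ?_ (H φ hφ h hh D' hD'm ?_)
    · apply eLp_comp (measurePreserving_add_right volume z) hD hD'm
      · intro x hx; simpa [hD'] using hx
      · exact (EvS_measurable hφ _).aestronglyMeasurable
      · intro x _; rw [EvS_Sh_mul]
    · intro x hx S
      have := hDQ _ hx S
      simpa using this
  | succ K hK ih =>
    obtain ⟨C, hC, H⟩ := ih
    refine ⟨QC r * (C + C), ENNReal.mul_ne_top (QC_ne_top r) (by simp [hC]), fun φ hφ h hh z D hD hDQ => ?_⟩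
    have e : ∀ x, EvS φ x (Sh z * ∏ a : Fin (K+1), (Sh (h a) - 1)) =
        EvS φ x (Sh (z + h 0) * ∏ a : Fin K, (Sh (h a.succ) - 1)) -
        EvS φ x (Sh z * ∏ a : Fin K, (Sh (h a.succ) - 1)) := by
      intro x
      rw [Fin.prod_univ_succ, ← map_sub, ← Sh_add]
      congr 1; ring
    simp_rw [e]
    refine (qsub (EvS_measurable hφ _).aestronglyMeasurable (EvS_measurable hφ _).aestronglyMeasurable r).trans ?_
    rw [mul_assoc, add_mul]
    gcongr
    · apply H φ hφ _ (fun a i => hh _ i) _ D hD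
      intro x hx S
      have := hDQ x hx (insert 0 (S.map (Fin.succEmb K)))
      rw [Finset.sum_insert (by simp [Fin.succ_ne_zero]), Finset.sum_map] at this
      convert this using 1
      simp [add_assoc]
    · apply H φ hφ _ (fun a i => hh _ i) _ D hD
      intro x hx S
      have := hDQ x hx (S.map (Fin.succEmb K))
      rw [Finset.sum_map] at this
      exact this

/-! ### A Marchaud type identity -/
open Polynomial in
lemma alg2_aux (l m : ℕ) : ∃ q : ℝ[X], q.natDegree ≤ m ∧
    (X : ℝ[X]) ^ m = ∑ i ∈ Finset.range l, C ((m.choose i : ℕ) : ℝ) * (X - 1) ^ i + q * (X - 1) ^ l := by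
  have e : (X : ℝ[X]) ^ m = ∑ i ∈ Finset.range (m + 1), C ((m.choose i : ℕ) : ℝ) * (X - 1) ^ i := by
    conv_lhs => rw [show (X : ℝ[X]) = (X - 1) + 1 by ring, add_pow]
    apply Finset.sum_congr rfl; intro i _
    simp [mul_comm]
  have hX1 : (X - 1 : ℝ[X]).natDegree = 1 := by
    rw [← C_1, natDegree_X_sub_C]
  refine ⟨∑ i ∈ Finset.range (m + 1), if l ≤ i then C ((m.choose i : ℕ) : ℝ) * (X - 1) ^ (i - l) else 0, ?_, ?_⟩
  · apply natDegree_sum_le_of_forall_le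
    intro i hi
    split_ifs
    · refine (natDegree_C_mul_le _ _).trans ?_
      refine (natDegree_pow_le).trans ?_
      rw [hX1]; have := Finset.mem_range.mp hi; omega
    · simp
  · have e2 : (X : ℝ[X]) ^ m = ∑ i ∈ Finset.range (l + (m + 1)), C ((m.choose i : ℕ) : ℝ) * (X - 1) ^ i := by
      rw [e]
      apply Finset.sum_subset
      · intro i hi; simp at hi ⊢; omega
      · intro i _ hi
        have : m.choose i = 0 := Nat.choose_eq_zero_of_lt (by simpa using hi)
        simp [this]
    have e3 : (X : ℝ[X]) ^ m = ∑ i ∈ Finset.range (m + 1), (if i < l then C ((m.choose i : ℕ) : ℝ) * (X - 1) ^ i else 0) + (∑ i ∈ Finset.range (m + 1), if l ≤ i then C ((m.choose i : ℕ) : ℝ) * (X - 1) ^ (i - l) else 0) * (X - 1) ^ l := by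
      rw [e, Finset.sum_mul, ← Finset.sum_add_distrib]
      apply Finset.sum_congr rfl
      intro i _
      by_cases h : l ≤ i
      · rw [if_pos h, if_neg (by omega), zero_add, mul_assoc, ← pow_add]; congr 2; omega
      · rw [if_neg h, if_pos (by omega)]; simp
    rw [e3]
    congr 1
    rw [← Finset.sum_filter]
    apply Finset.sum_subset
    · intro i hi; simp at hi ⊢; omega
    · intro i hi hi'
      have : m.choose i = 0 := Nat.choose_eq_zero_of_lt (by simp at hi hi'; omega)
      simp [this]

open Polynomial in
/-- `t ↦ C(tN,i)` as a polynomial -/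
lemma binom_poly (N : ℝ) (i : ℕ) : ∃ b : ℝ[X], b.natDegree ≤ i ∧
    ∀ (t : ℝ) (m : ℕ), t * N = m → b.eval t = (m.choose i : ℝ) := by
  refine ⟨C ((i.factorial : ℝ)⁻¹) * (descPochhammer ℝ i).comp (C N * X), ?_, ?_⟩
  · refine (natDegree_C_mul_le _ _).trans ?_
    refine natDegree_comp_le.trans ?_
    rw [descPochhammer_natDegree]
    calc _ ≤ i * 1 := Nat.mul_le_mul le_rfl ((natDegree_C_mul_le _ _).trans natDegree_X_le)
      _ = i := mul_one _
  · intro t m h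
    simp only [eval_mul, eval_C, eval_comp, eval_X]
    rw [mul_comm N, h, descPochhammer_eval_eq_descFactorial, Nat.descFactorial_eq_factorial_mul_choose]
    push_cast
    field_simp

open Polynomial in
lemma alg2 (l : ℕ) : ∃ A : ℝ, 0 ≤ A ∧ ∀ N : ℕ, 0 < N → ∃ (a : ℕ → ℝ) (q : ℝ[X]),
    (∀ j ∈ Finset.range l, |a j| ≤ A / N) ∧ q.natDegree ≤ l * N + 1 ∧
    (X - 1 : ℝ[X]) = ∑ j ∈ Finset.range l, C (a j) * X ^ (j * N) + q * (X - 1) ^ l := by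
  let Lb : ℕ → ℝ[X] := fun j => Lagrange.basis (Finset.range l) (fun j : ℕ => (j : ℝ)) j
  have hinj : Set.InjOn (fun j : ℕ => (j : ℝ)) (Finset.range l : Finset ℕ) := fun a _ b _ h => Nat.cast_injective h
  have hb : ∀ j : ℕ, ∃ A : ℝ, 0 ≤ A ∧ ∀ t ∈ Set.Icc (0:ℝ) 1, |(Lb j).divX.eval t| ≤ A := by
    intro j
    obtain ⟨A, hA⟩ := (isCompact_Icc (a := (0:ℝ)) (b := 1)).exists_bound_of_continuousOn
      (f := fun t => (Lb j).divX.eval t) (Polynomial.continuous _).continuousOn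
    exact ⟨max A 0, le_max_right _ _, fun t ht => (hA t ht).trans (le_max_left _ _)⟩
  choose A hA0 hA using hb
  refine ⟨∑ j ∈ Finset.range l, A j, Finset.sum_nonneg fun j _ => hA0 j, ?_⟩
  intro N hN
  have hN' : (0:ℝ) < N := by exact_mod_cast hN
  let a : ℕ → ℝ := fun j => (Lb j).eval (1/(N:ℝ)) - (Lb j).eval 0
  choose Q hQd hQ using fun m => alg2_aux l m
  refine ⟨a, Q 1 - Q 0 - ∑ j ∈ Finset.range l, C (a j) * Q (j * N), ?_, ?_, ?_⟩
  · intro j hj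
    have e : a j = (1/(N:ℝ)) * (Lb j).divX.eval (1/(N:ℝ)) := by
      have h := divX_mul_X_add (Lb j)
      have h1 := congrArg (fun p => p.eval (1/(N:ℝ))) h
      have h2 := congrArg (fun p => p.eval 0) h
      simp only [eval_add, eval_mul, eval_X, eval_C] at h1 h2
      show (Lb j).eval (1/(N:ℝ)) - (Lb j).eval 0 = _
      rw [← h1, ← h2]; ring
    rw [e, abs_mul, abs_of_pos (by positivity : 0 < 1/(N:ℝ)), show (∑ j ∈ Finset.range l, A j) / (N:ℝ) = 1/(N:ℝ) * ∑ j ∈ Finset.range l, A j by ring]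
    apply mul_le_mul_of_nonneg_left _ (by positivity)
    refine (hA j _ ⟨by positivity, ?_⟩).trans (Finset.single_le_sum (f := A) (fun j _ => hA0 j) hj)
    rw [div_le_one hN']; exact_mod_cast hN
  · refine (natDegree_sub_le _ _).trans (max_le ((natDegree_sub_le _ _).trans (max_le ?_ ?_)) ?_)
    · exact (hQd 1).trans (by omega)
    · exact (hQd 0).trans (by omega)
    · apply natDegree_sum_le_of_forall_le
      intro j hj
      refine (natDegree_C_mul_le _ _).trans ((hQd _).trans ?_)
      have : j ≤ l := (Finset.mem_range.mp hj).le
      nlinarith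
  · have hval : ∀ i ∈ Finset.range l, ((Nat.choose 1 i : ℕ) : ℝ) - ((Nat.choose 0 i : ℕ) : ℝ) =
        ∑ j ∈ Finset.range l, a j * (((j * N).choose i : ℕ) : ℝ) := by
      intro i hi
      obtain ⟨b, hbd, hbe⟩ := binom_poly N i
      have hdeg : b.degree < (Finset.range l).card := by
        rw [Finset.card_range]
        refine lt_of_le_of_lt degree_le_natDegree ?_
        exact_mod_cast lt_of_le_of_lt hbd (Finset.mem_range.mp hi)
      have hint := Lagrange.eq_interpolate hinj hdeg
      have hint' : ∀ t, b.eval t = ∑ j ∈ Finset.range l, b.eval (j:ℝ) * (Lb j).eval t := by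
        intro t
        conv_lhs => rw [hint, Lagrange.interpolate_apply, eval_finsetSum]
        simp [Lb]
      rw [← hbe (1/N) 1 (by field_simp; simp), ← hbe 0 0 (by simp), hint' (1/N), hint' 0, ← Finset.sum_sub_distrib]
      apply Finset.sum_congr rfl
      intro j _
      rw [hbe (j:ℝ) (j * N) (by push_cast; ring)]
      simp only [a]; ring
    have e : (X - 1 : ℝ[X]) = X ^ 1 - X ^ 0 := by simp
    have hs : ∑ j ∈ Finset.range l, C (a j) * (X:ℝ[X]) ^ (j * N) =
        ∑ i ∈ Finset.range l, C (∑ j ∈ Finset.range l, a j * (((j * N).choose i : ℕ) : ℝ)) * (X - 1) ^ i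
        + (∑ j ∈ Finset.range l, C (a j) * Q (j * N)) * (X - 1) ^ l := by
      have : ∀ j ∈ Finset.range l, C (a j) * (X:ℝ[X]) ^ (j * N) =
        (∑ i ∈ Finset.range l, C (a j * (((j * N).choose i : ℕ) : ℝ)) * (X - 1) ^ i) + C (a j) * Q (j*N) * (X-1)^l := by
        intro j _
        conv_lhs => rw [hQ (j * N), mul_add, Finset.mul_sum]
        rw [mul_assoc]; congr 1
        apply Finset.sum_congr rfl; intro i _
        rw [C_mul]; ring
      rw [Finset.sum_congr rfl this, Finset.sum_add_distrib, Finset.sum_comm, Finset.sum_mul]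
      congr 1
      apply Finset.sum_congr rfl; intro i _
      rw [map_sum, Finset.sum_mul]
    rw [hs]
    have : ∑ i ∈ Finset.range l, C (∑ j ∈ Finset.range l, a j * (((j * N).choose i : ℕ) : ℝ)) * (X - 1 : ℝ[X]) ^ i =
      ∑ i ∈ Finset.range l, C ((Nat.choose 1 i : ℕ) : ℝ) * (X - 1 : ℝ[X]) ^ i - ∑ i ∈ Finset.range l, C ((Nat.choose 0 i : ℕ) : ℝ) * (X - 1 : ℝ[X]) ^ i := by
      rw [← Finset.sum_sub_distrib]
      apply Finset.sum_congr rfl; intro i hi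
      rw [← hval i hi, C_sub, sub_mul]
    rw [this]
    have h1 := hQ 1
    have h0 := hQ 0
    linear_combination h1 - h0

open Polynomial in
lemma alg2_shift {n : ℕ} (l N : ℕ) (a : ℕ → ℝ) (q : ℝ[X]) (hq : q.natDegree ≤ l * N + 1)
    (e : (X - 1 : ℝ[X]) = ∑ j ∈ Finset.range l, C (a j) * X ^ (j * N) + q * (X - 1) ^ l)
    (φ : Rn n → ℝ) (x v : Rn n) :
    φ (x + v) - φ x = ∑ j ∈ Finset.range l, a j * φ (x + ((j * N : ℕ) : ℝ) • v) +
      ∑ i ∈ Finset.range (l * N + 2), q.coeff i * EvS φ x (Sh ((i:ℝ) • v) * ∏ _a : Fin l, (Sh v - 1)) := by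
  have h1 := congrArg (fun p => EvS φ x (aeval (Sh v) p)) e
  simp only [map_add, map_sub, map_sum, map_mul, map_pow, aeval_X, aeval_C, map_one, Sh_pow, EvS_Sh, EvS_one, ← Algebra.smul_def, map_smul] at h1
  rw [h1]
  simp only [smul_eq_mul]
  congr 1
  rw [aeval_eq_sum_range' (lt_of_le_of_lt hq (Nat.lt_succ_self _)), Finset.sum_mul, map_sum]
  apply Finset.sum_congr rfl
  intro i _
  rw [smul_mul_assoc, map_smul, Sh_pow]
  simp

lemma enorm_mul_eLp {α : Type*} [MeasurableSpace α] {μ : Measure α} (c : ℝ) (f : α → ℝ) (r : ℝ≥0∞) :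
    eLpNorm (fun x => c * f x) r μ = ‖c‖ₑ * eLpNorm f r μ :=
  eLpNorm_const_smul c f r μ

lemma osc1 {n l : ℕ} {r : ℝ≥0∞} {ε : ℝ} (hl : 0 < l) : ∃ A : ℝ≥0∞, A ≠ ∞ ∧ ∀ N : ℕ, 0 < N →
    ∀ τ : ℝ, 0 < τ → 12 * (l:ℝ)^2 * τ ≤ 1 → 3 * l * τ ≤ ε → ∃ C : ℝ≥0∞, C ≠ ∞ ∧
    ∀ φ : Rn n → ℝ, Measurable φ → ∀ v : Rn n, (∀ i, |v i| ≤ τ) → ∀ D : Set (Rn n), MeasurableSet D →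
    (∀ x ∈ D, ∀ i : ℕ, i ≤ l * N + 1 + l → x + (i:ℝ) • v ∈ uQ n) →
    eLpNorm (fun x => φ (x + v) - φ x) r (volume.restrict D) ≤
      A * ENNReal.ofReal (1 / N) * eLpNorm φ r (volume.restrict (uQ n)) + C * dlt n l r ε φ := by
  obtain ⟨A, hA, HA⟩ := alg2 l
  refine ⟨QC r * (QC r ^ l * (l * ENNReal.ofReal A)), ?_, ?_⟩
  · exact ENNReal.mul_ne_top (QC_ne_top r) (ENNReal.mul_ne_top (QC_pow_ne_top _ _) (ENNReal.mul_ne_top (by simp) (by simp)))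
  intro N hN τ hτ h1 h2
  obtain ⟨a, q, ha, hq, e⟩ := HA N hN
  obtain ⟨C0, hC0, H0⟩ := lemM (n := n) (r := r) hl hτ h1 h2 l le_rfl
  refine ⟨QC r * (QC r ^ (l * N + 2) * ∑ i ∈ Finset.range (l * N + 2), ‖q.coeff i‖ₑ * C0), ?_, ?_⟩
  · refine ENNReal.mul_ne_top (QC_ne_top r) (ENNReal.mul_ne_top (QC_pow_ne_top _ _) ?_)
    exact ENNReal.sum_ne_top.mpr fun i _ => ENNReal.mul_ne_top (by simp) hC0
  intro φ hφ v hv D hD hDQ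
  simp_rw [alg2_shift l N a q hq e φ]
  have m1 : ∀ j : ℕ, Measurable fun x => a j * φ (x + ((j * N : ℕ) : ℝ) • v) := fun j => by fun_prop
  have m2 : ∀ i : ℕ, Measurable fun x => q.coeff i * EvS φ x (Sh ((i:ℝ) • v) * ∏ _a : Fin l, (Sh v - 1)) :=
    fun i => (EvS_measurable hφ _).const_mul _
  refine (qadd (Finset.measurable_sum _ fun j _ => m1 j).aestronglyMeasurable
    (Finset.measurable_sum _ fun i _ => m2 i).aestronglyMeasurable r).trans ?_
  rw [mul_add]
  apply add_le_add
  · rw [mul_assoc, mul_assoc]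
    gcongr
    refine (qsum _ _ (fun j _ => (m1 j).aestronglyMeasurable) r).trans ?_
    rw [Finset.card_range, mul_assoc]
    gcongr
    refine (Finset.sum_le_card_nsmul _ _ (ENNReal.ofReal A * (ENNReal.ofReal (1/N) * eLpNorm φ r (volume.restrict (uQ n)))) ?_).trans ?_
    · intro j hj
      rw [enorm_mul_eLp, ← mul_assoc, ← ENNReal.ofReal_mul hA]
      apply mul_le_mul'
      · rw [Real.enorm_eq_ofReal_abs]
        apply ENNReal.ofReal_le_ofReal
        rw [mul_one_div]; exact ha j hj
      · apply eLp_comp (measurePreserving_add_right volume (((j * N : ℕ) : ℝ) • v)) hD (meas_uQ n)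
        · intro x hx
          apply hDQ x hx
          have : j ≤ l := (Finset.mem_range.mp hj).le
          nlinarith
        · exact hφ.aestronglyMeasurable
        · intro x _; exact le_rfl
    · rw [nsmul_eq_mul, Finset.card_range]; simp only [mul_assoc]; rfl
  · rw [mul_assoc, mul_assoc]
    gcongr
    refine (qsum _ _ (fun j _ => (m2 j).aestronglyMeasurable) r).trans ?_
    rw [Finset.card_range, Finset.sum_mul]
    gcongr with i hi
    rw [enorm_mul_eLp, mul_assoc]
    gcongr
    apply H0 φ hφ _ (fun _ => hv) _ D hD
    intro x hx S
    rw [Finset.sum_const]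
    have := hDQ x hx (i + S.card) (by
      have h3 := S.card_le_univ
      have h4 := Finset.mem_range.mp hi
      simp at h3; omega)
    convert this using 1
    rw [add_assoc]; congr 1
    rw [← Nat.cast_smul_eq_nsmul ℝ]; push_cast; module

lemma osc2 {n l : ℕ} {r : ℝ≥0∞} {ε : ℝ} (hl : 0 < l) : ∃ A : ℝ≥0∞, A ≠ ∞ ∧ ∀ N : ℕ, 0 < N →
    ∀ τ : ℝ, 0 < τ → 12 * (l:ℝ)^2 * τ ≤ 1 → 3 * l * τ ≤ ε → 4 * ((l * N + 1 + l + 1 : ℕ) : ℝ) * τ ≤ 1 →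
    ∃ C : ℝ≥0∞, C ≠ ∞ ∧
    ∀ φ : Rn n → ℝ, Measurable φ → ∀ h : Rn n, (∀ i, |h i| < τ / 2) → ∀ D : Set (Rn n), MeasurableSet D →
    (∀ x ∈ D, x ∈ uQ n ∧ x + h ∈ uQ n) →
    eLpNorm (fun x => φ (x + h) - φ x) r (volume.restrict D) ≤
      A * ENNReal.ofReal (1 / N) * eLpNorm φ r (volume.restrict (uQ n)) + C * dlt n l r ε φ := by
  obtain ⟨A, hA, HA⟩ := osc1 (n := n) (r := r) (ε := ε) hl
  set B : ℝ≥0∞ := QC r ^ (Finset.univ : Finset (Fin n → Bool)).card *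
    ((Finset.univ : Finset (Fin n → Bool)).card * (QC r * 2)) with hB
  have hBt : B ≠ ∞ := ENNReal.mul_ne_top (QC_pow_ne_top _ _) (ENNReal.mul_ne_top (by simp) (ENNReal.mul_ne_top (QC_ne_top r) (by simp)))
  refine ⟨B * A, ENNReal.mul_ne_top hBt hA, ?_⟩
  intro N hN τ hτ h1 h2 h3
  obtain ⟨C, hC, HC⟩ := HA N hN τ hτ h1 h2
  refine ⟨B * C, ENNReal.mul_ne_top hBt hC, ?_⟩
  intro φ hφ h hh D hD hDQ
  set R := A * ENNReal.ofReal (1 / N) * eLpNorm φ r (volume.restrict (uQ n)) + C * dlt n l r ε φ with hR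
  have goalR : B * A * ENNReal.ofReal (1 / N) * eLpNorm φ r (volume.restrict (uQ n)) + B * C * dlt n l r ε φ = B * R := by
    rw [hR]; ring
  rw [goalR]
  let E : (Fin n → Bool) → Set (Rn n) := fun σ => {x | x ∈ D ∧ ∀ j, if σ j then x j < 1/2 else 1/2 ≤ x j}
  have hE : ∀ σ, MeasurableSet (E σ) := by
    intro σ
    have : E σ = D ∩ ⋂ j, {x : Rn n | if σ j then x j < 1/2 else 1/2 ≤ x j} := by
      ext x; simp [E]
    rw [this]
    apply hD.inter
    apply MeasurableSet.iInter
    intro j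
    by_cases hσ : σ j
    · simp only [hσ, if_true]; exact measurableSet_lt (measurable_pi_apply j) measurable_const
    · simp only [hσ]; exact measurableSet_le measurable_const (measurable_pi_apply j)
  have hcov : ∀ᵐ x ∂(volume.restrict D), ∃ σ ∈ (Finset.univ : Finset (Fin n → Bool)), x ∈ E σ := by
    filter_upwards [ae_restrict_mem hD] with x hx
    refine ⟨fun j => decide (x j < 1/2), Finset.mem_univ _, hx, fun j => ?_⟩
    by_cases hj : x j < 1/2
    · simp only [hj, decide_true, if_true]
    · simp only [hj, decide_false]; push Not at hj; simpa using hj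
  have hm : Measurable (fun x => φ (x + h) - φ x) := by fun_prop
  refine (eLp_cover Finset.univ D E (fun σ _ => hE σ) hcov hm.aestronglyMeasurable r).trans ?_
  rw [hB, mul_assoc, mul_assoc]
  gcongr
  refine (Finset.sum_le_card_nsmul _ _ (QC r * 2 * R) ?_).trans (by rw [nsmul_eq_mul])
  intro σ _
  let w : Rn n := fun j => if σ j then τ/2 else -(τ/2)
  have hw : ∀ j, if σ j then w j = τ/2 else w j = -(τ/2) := by
    intro j; simp only [w]; split_ifs <;> rfl
  have hsplit : ∀ x, φ (x + h) - φ x = (φ (x + (h + w)) - φ x) - (φ (x + h + w) - φ (x + h)) := by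
    intro x; rw [add_assoc]; ring
  simp_rw [hsplit]
  refine (qsub (Measurable.aestronglyMeasurable (by fun_prop)) (Measurable.aestronglyMeasurable (by fun_prop)) r).trans ?_
  rw [mul_assoc, two_mul]
  have hi : ∀ i : ℕ, i ≤ l * N + 1 + l → ((i:ℝ) + 1) * τ ≤ 1/4 := by
    intro i hi
    have : ((i:ℝ) + 1) ≤ ((l * N + 1 + l + 1 : ℕ) : ℝ) := by exact_mod_cast Nat.succ_le_succ hi
    nlinarith
  gcongr
  · apply HC φ hφ (h + w) _ (E σ) (hE σ)
    · intro x hx i hil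
      have hxQ := (hDQ x hx.1).1
      intro j
      have b1 := abs_lt.mp (hh j)
      have b2 := hw j
      have b3 := hx.2 j
      have b4 := hxQ j
      have b5 := hi i hil
      have b6 : (0:ℝ) ≤ i := Nat.cast_nonneg i
      simp only [Pi.add_apply, Pi.smul_apply, smul_eq_mul]
      split_ifs at b2 b3
      · have b7 : 0 ≤ (i:ℝ) * (h j + w j) := mul_nonneg b6 (by linarith)
        have b8 : (i:ℝ) * (h j + w j) ≤ i * τ := mul_le_mul_of_nonneg_left (by linarith) b6
        constructor <;> nlinarith
      · have b7 : (i:ℝ) * (h j + w j) ≤ 0 := mul_nonpos_of_nonneg_of_nonpos b6 (by linarith)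
        have b8 : (i:ℝ) * (-τ) ≤ (i:ℝ) * (h j + w j) := mul_le_mul_of_nonneg_left (by linarith) b6
        constructor <;> nlinarith
    · intro j
      have b1 := abs_lt.mp (hh j)
      have b2 := hw j
      rw [Pi.add_apply, abs_le]
      split_ifs at b2 <;> constructor <;> linarith
  · set D' : Set (Rn n) := {y | y - h ∈ E σ} with hD'
    have hD'm : MeasurableSet D' := (measurable_id.sub_const h) (hE σ)
    refine le_trans ?_ (HC φ hφ w ?_ D' hD'm ?_)
    · apply eLp_comp (measurePreserving_add_right volume h) (hE σ) hD'm
      · intro x hx; simpa [hD'] using hx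
      · exact Measurable.aestronglyMeasurable (by fun_prop)
      · intro x _; exact le_rfl
    · intro j
      have b2 := hw j
      rw [abs_le]
      split_ifs at b2 <;> constructor <;> linarith
    · intro y hy i hil
      have hyQ := (hDQ _ hy.1).2
      rw [sub_add_cancel] at hyQ
      intro j
      have b1 := abs_lt.mp (hh j)
      have b2 := hw j
      have b3 := hy.2 j
      have b4 := hyQ j
      have b5 := hi i hil
      have b6 : (0:ℝ) ≤ i := Nat.cast_nonneg i
      simp only [Pi.add_apply, Pi.smul_apply, smul_eq_mul, Pi.sub_apply] at b3 ⊢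
      split_ifs at b2 b3
      · rw [b2]; constructor <;> nlinarith
      · rw [b2]; constructor <;> nlinarith

lemma eLp_prod_le {α β : Type*} [MeasurableSpace α] [MeasurableSpace β] {μ : Measure α} {ν : Measure β}
    [SFinite μ] [SFinite ν] {r : ℝ≥0∞} {G : β × α → ℝ} (hG : Measurable G) (hr : r ≠ 0) {R : ℝ≥0∞}
    (h : ∀ᵐ y ∂ν, eLpNorm (fun x => G (y, x)) r μ ≤ R) :
    eLpNorm G r (ν.prod μ) ≤ ν Set.univ ^ (1 / r).toReal * R := by
  by_cases hr' : r = ∞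
  · subst hr'
    simp only [eLpNorm_exponent_top] at h ⊢
    simp only [ENNReal.div_top, ENNReal.toReal_zero, ENNReal.rpow_zero, one_mul]
    apply eLpNormEssSup_le_of_ae_enorm_bound
    have hm : MeasurableSet {z : β × α | ‖G z‖ₑ ≤ R} := measurableSet_le hG.enorm measurable_const
    rw [Measure.ae_prod_iff_ae_ae hm]
    filter_upwards [h] with y hy
    filter_upwards [enorm_ae_le_eLpNormEssSup (fun x => G (y, x)) μ] with x hx
    exact hx.trans hy
  · have hrp : 0 < r.toReal := ENNReal.toReal_pos hr hr'
    have hG' : Measurable fun z => ‖G z‖ₑ ^ r.toReal := hG.enorm.pow_const _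
    rw [eLpNorm_eq_lintegral_rpow_enorm_toReal hr hr', lintegral_prod _ hG'.aemeasurable]
    have h2 : ∫⁻ y, ∫⁻ x, ‖G (y, x)‖ₑ ^ r.toReal ∂μ ∂ν ≤ ∫⁻ _y, R ^ r.toReal ∂ν := by
      apply lintegral_mono_ae
      filter_upwards [h] with y hy
      rw [eLpNorm_eq_lintegral_rpow_enorm_toReal hr hr', one_div] at hy
      exact (ENNReal.rpow_inv_le_iff hrp).mp hy
    refine (ENNReal.rpow_le_rpow h2 (by positivity)).trans ?_
    rw [lintegral_const, ENNReal.mul_rpow_of_nonneg _ _ (by positivity), mul_comm]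
    simp only [one_div, ENNReal.toReal_inv]
    rw [ENNReal.rpow_rpow_inv hrp.ne']

/-- small cell -/
def cell (n M : ℕ) : Set (Rn n) := {y | ∀ i, 0 < y i ∧ y i < 1 / (M:ℝ)}

/-- lattice rounding -/
def cflo {n : ℕ} (M : ℕ) (x : Rn n) : Rn n := fun i => (⌊(M:ℝ) * x i⌋ : ℝ) / M

lemma cell_eq_pi (n M : ℕ) : cell n M = Set.univ.pi fun _ => Set.Ioo 0 (1/(M:ℝ)) := by
  ext y; simp [cell]

lemma meas_cell (n M : ℕ) : MeasurableSet (cell n M) := by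
  rw [cell_eq_pi]; exact MeasurableSet.univ_pi fun _ => measurableSet_Ioo

lemma vol_cell (n M : ℕ) : volume (cell n M) = ENNReal.ofReal (1/(M:ℝ)) ^ n := by
  rw [cell_eq_pi, Real.volume_pi_Ioo]; simp

lemma measurable_cflo {n : ℕ} (M : ℕ) : Measurable (cflo M : Rn n → Rn n) := by
  unfold cflo
  rw [measurable_pi_iff]
  intro i
  apply Measurable.div_const
  have : Measurable fun x : Rn n => ⌊(M:ℝ) * x i⌋ := by fun_prop
  exact (measurable_from_top (f := fun z : ℤ => (z:ℝ))).comp this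

lemma cflo_le {n : ℕ} {M : ℕ} (hM : 0 < M) (x : Rn n) (i : Fin n) :
    cflo M x i ≤ x i ∧ x i < cflo M x i + 1 / M := by
  have hM' : (0:ℝ) < M := by exact_mod_cast hM
  unfold cflo
  constructor
  · rw [div_le_iff₀ hM', mul_comm]; exact Int.floor_le _
  · rw [← add_div, lt_div_iff₀ hM', mul_comm]; exact Int.lt_floor_add_one _

lemma cflo_lattice {n : ℕ} {M : ℕ} (hM : 0 < M) {x : Rn n} (hx : x ∈ uQ n) :
    ∃ i : Fin n → Fin M, cflo M x = fun j => ((i j : ℕ) : ℝ) / M := by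
  have hM' : (0:ℝ) < M := by exact_mod_cast hM
  have h0 : ∀ j, 0 ≤ ⌊(M:ℝ) * x j⌋ := fun j => Int.floor_nonneg.mpr (by have := (hx j).1; positivity)
  have h1 : ∀ j, ⌊(M:ℝ) * x j⌋ < M := by
    intro j; rw [Int.floor_lt]; push_cast; have := (hx j).2; nlinarith
  refine ⟨fun j => ⟨⌊(M:ℝ) * x j⌋.toNat, by have := h0 j; have := h1 j; omega⟩, ?_⟩
  ext j
  simp only [cflo]
  congr 1
  have : ((⌊(M:ℝ) * x j⌋.toNat : ℕ) : ℤ) = ⌊(M:ℝ) * x j⌋ := Int.toNat_of_nonneg (h0 j)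
  exact_mod_cast this.symm

lemma lattice_cell_mem {n M : ℕ} (hM : 0 < M) (i : Fin n → ℕ) (hi : ∀ j, i j + 1 ≤ M) {y : Rn n} (hy : y ∈ cell n M) :
    y + (fun j => (i j : ℝ) / M) ∈ uQ n := by
  have hM' : (0:ℝ) < M := by exact_mod_cast hM
  intro j
  have h1 := hy j
  have h2 : ((i j : ℝ) + 1) / M ≤ 1 := by
    rw [div_le_one hM']; exact_mod_cast hi j
  have h3 : (0:ℝ) ≤ (i j : ℝ) / M := by positivity
  rw [add_div] at h2
  simp only [Pi.add_apply]
  constructor <;> linarith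

lemma mp_shear {n : ℕ} {c : Rn n → Rn n} (hc : Measurable c) :
    MeasurePreserving (fun z : Rn n × Rn n => (c z.2 + z.1, z.2))
      (volume.prod volume) (volume.prod volume) := by
  have e1 : MeasurePreserving (fun z : Rn n × Rn n => (id z.1, (fun x y => c x + y) z.1 z.2))
      (volume.prod volume) (volume.prod volume) := by
    refine MeasurePreserving.skew_product (μc := (volume : Measure (Rn n))) (μd := (volume : Measure (Rn n)))
      (g := fun x y => c x + y) (MeasurePreserving.id (volume : Measure (Rn n))) ?_ ?_
    · simp only [Function.uncurry_def]
      fun_prop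
    · filter_upwards with x
      exact (measurePreserving_add_left volume _).map_eq
  have e2 : MeasurePreserving (Prod.swap : Rn n × Rn n → Rn n × Rn n)
      (volume.prod volume) (volume.prod volume) := Measure.measurePreserving_swap
  exact (e2.comp e1).comp e2

lemma osc3 {n l : ℕ} {r : ℝ≥0∞} {ε : ℝ} (hl : 0 < l) (hr : r ≠ 0) : ∃ A : ℝ≥0∞, A ≠ ∞ ∧ ∀ N : ℕ, 0 < N →
    ∀ τ : ℝ, 0 < τ → 12 * (l:ℝ)^2 * τ ≤ 1 → 3 * l * τ ≤ ε → 4 * ((l * N + 1 + l + 1 : ℕ) : ℝ) * τ ≤ 1 →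
    ∃ C : ℝ≥0∞, C ≠ ∞ ∧ ∀ M : ℕ, 0 < M → 1 / (M:ℝ) ≤ τ / 2 →
    ∀ φ : Rn n → ℝ, Measurable φ →
    eLpNorm (fun z : Rn n × Rn n => φ z.2 - φ (cflo M z.2 + z.1)) r
      ((volume.restrict (cell n M)).prod (volume.restrict (uQ n))) ≤
      volume (cell n M) ^ (1 / r).toReal *
      (A * ENNReal.ofReal (1 / N) * eLpNorm φ r (volume.restrict (uQ n)) + C * dlt n l r ε φ) := by
  obtain ⟨A, hA, HA⟩ := osc2 (n := n) (r := r) (ε := ε) hl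
  set B : ℝ≥0∞ := (2 ^ n) ^ (1 / r).toReal with hB
  have hBt : B ≠ ∞ := ENNReal.rpow_ne_top_of_nonneg (by positivity) (by simp)
  refine ⟨B * A, ENNReal.mul_ne_top hBt hA, ?_⟩
  intro N hN τ hτ h1 h2 h3
  obtain ⟨C, hC, HC⟩ := HA N hN τ hτ h1 h2 h3
  refine ⟨B * C, ENNReal.mul_ne_top hBt hC, ?_⟩
  intro M hM hMτ φ hφ
  have hM' : (0:ℝ) < 1/(M:ℝ) := by positivity
  set R := A * ENNReal.ofReal (1 / N) * eLpNorm φ r (volume.restrict (uQ n)) + C * dlt n l r ε φ with hR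
  have goalR : B * A * ENNReal.ofReal (1 / N) * eLpNorm φ r (volume.restrict (uQ n)) + B * C * dlt n l r ε φ = B * R := by
    rw [hR]; ring
  rw [goalR]
  let T : Set (Rn n × Rn n) := {z | z.1 ∈ openCube (0:Rn n) (1/(M:ℝ)) ∧ (z.2 ∈ uQ n ∧ z.2 + z.1 ∈ uQ n)}
  let T' : Set (Rn n × Rn n) := {z | z.2 ∈ uQ n ∧ z.2 + z.1 ∈ uQ n}
  have hT' : MeasurableSet T' := by
    apply MeasurableSet.inter
    · exact measurable_snd (meas_uQ n)
    · have : Measurable fun z : Rn n × Rn n => z.2 + z.1 := by fun_prop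
      exact this (meas_uQ n)
  have hT : MeasurableSet T := (measurable_fst (meas_openCube 0 _)).inter hT'
  have hmp : MeasurePreserving (fun z : Rn n × Rn n => (cflo M z.2 - z.2 + z.1, z.2))
      (volume.prod volume) (volume.prod volume) :=
    mp_shear (c := fun x => cflo M x - x) ((measurable_cflo M).sub measurable_id)
  let f : Rn n × Rn n → ℝ := T'.indicator fun z => φ (z.2 + z.1) - φ z.2
  have hf : Measurable f := Measurable.indicator (by fun_prop) hT'
  have step1 : eLpNorm (fun z : Rn n × Rn n => φ z.2 - φ (cflo M z.2 + z.1)) r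
      ((volume.restrict (cell n M)).prod (volume.restrict (uQ n))) ≤
      eLpNorm f r ((volume.prod volume).restrict (openCube (0:Rn n) (1/(M:ℝ)) ×ˢ (Set.univ : Set (Rn n)))) := by
    rw [Measure.prod_restrict]
    have hin : ∀ z ∈ cell n M ×ˢ uQ n, (cflo M z.2 - z.2 + z.1 ∈ openCube (0:Rn n) (1/(M:ℝ))) ∧
       cflo M z.2 + z.1 ∈ uQ n := by
      rintro ⟨y, x⟩ ⟨hy, hx⟩
      constructor
      · intro i
        have b1 := hy i
        have b2 := cflo_le hM x i
        simp only [Pi.add_apply, Pi.sub_apply, Pi.zero_apply, sub_zero] at b1 ⊢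
        rw [abs_lt]; constructor <;> linarith
      · obtain ⟨i, hi⟩ := cflo_lattice hM hx
        simp only
        rw [hi, add_comm]
        exact lattice_cell_mem hM (fun j => (i j : ℕ)) (fun j => (i j).2) hy
    apply eLp_comp hmp ((meas_cell n M).prod (meas_uQ n)) ((meas_openCube 0 _).prod MeasurableSet.univ)
    · intro z hz; exact ⟨(hin z hz).1, Set.mem_univ _⟩
    · exact hf.aestronglyMeasurable
    · intro z hz
      have e : z.2 + (cflo M z.2 - z.2 + z.1) = cflo M z.2 + z.1 := by abel
      have : ((cflo M z.2 - z.2 + z.1, z.2) : Rn n × Rn n) ∈ T' := by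
        refine ⟨hz.2, ?_⟩
        simp only
        rw [e]; exact (hin z hz).2
      simp only [f]
      rw [Set.indicator_of_mem this]
      simp only
      rw [e, norm_sub_rev]
  refine step1.trans ?_
  rw [← Measure.prod_restrict, Measure.restrict_univ]
  refine (eLp_prod_le (R := R) hf hr ?_).trans ?_
  · filter_upwards [ae_restrict_mem (meas_openCube (0:Rn n) (1/(M:ℝ)))] with h hh
    have hm1 : MeasurableSet {x : Rn n | x ∈ uQ n ∧ x + h ∈ uQ n} :=
      (meas_uQ n).inter ((measurable_id.add_const h) (meas_uQ n))
    have e : (fun x => f (h, x)) = Set.indicator {x : Rn n | x ∈ uQ n ∧ x + h ∈ uQ n} fun x => φ (x + h) - φ x := by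
      ext x
      simp only [f, T', Set.indicator, Set.mem_ofPred_eq]
    rw [e, eLpNorm_indicator_eq_eLpNorm_restrict hm1]
    apply HC φ hφ h _ _ hm1 (fun x hx => hx)
    intro i
    have := hh i
    simp only [Pi.zero_apply, sub_zero] at this
    linarith
  · rw [Measure.restrict_apply_univ, vol_openCube, vol_cell, ← mul_assoc]
    gcongr
    rw [hB, ← ENNReal.mul_rpow_of_nonneg _ _ (by positivity), mul_comm, ← mul_pow, ENNReal.ofReal_mul (by norm_num)]
    simp

/-! ### Polynomials of bounded degree -/

/-- polynomial function with coefficient vector `a` -/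
def pol {n l : ℕ} (a : (Fin n → Fin l) → ℝ) (x : Rn n) : ℝ :=
  ∑ β, a β * ∏ j, x j ^ (β j : ℕ)

/-- exponent embedding -/
def expEmb (n l : ℕ) : (Fin n → Fin l) ↪ (Fin n →₀ ℕ) :=
  ⟨fun β => Finsupp.equivFunOnFinite.symm fun j => (β j : ℕ), fun β γ h => by
    have := Finsupp.equivFunOnFinite.symm.injective h
    ext j; exact congrFun this j⟩

lemma expEmb_apply {n l : ℕ} (β : Fin n → Fin l) (j : Fin n) : expEmb n l β j = (β j : ℕ) := rfl

lemma poly_repr {n l : ℕ} (P : MvPolynomial (Fin n) ℝ) (hP : P.totalDegree < l) :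
    ∃ a : (Fin n → Fin l) → ℝ, ∀ x, MvPolynomial.eval x P = pol a x := by
  refine ⟨fun β => P.coeff (expEmb n l β), fun x => ?_⟩
  rw [MvPolynomial.eval_eq', pol]
  have : ∑ β, P.coeff (expEmb n l β) * ∏ j, x j ^ (β j : ℕ) =
      ∑ d ∈ (Finset.univ : Finset (Fin n → Fin l)).map (expEmb n l), P.coeff d * ∏ j, x j ^ d j := by
    rw [Finset.sum_map]; rfl
  rw [this]
  apply Finset.sum_subset
  · intro d hd
    rw [Finset.mem_map]
    have h1 : ∀ j, d j < l := by
      intro j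
      refine lt_of_le_of_lt ?_ hP
      refine le_trans ?_ (MvPolynomial.le_totalDegree hd)
      by_cases hj : j ∈ d.support
      · exact Finset.single_le_sum (f := fun j => d j) (fun _ _ => Nat.zero_le _) hj
      · simp [Finsupp.notMem_support_iff.mp hj]
    refine ⟨fun j => ⟨d j, h1 j⟩, Finset.mem_univ _, ?_⟩
    ext j; rfl
  · intro d _ hd
    rw [MvPolynomial.notMem_support_iff.mp hd, zero_mul]

lemma pol_smul {n l : ℕ} (c : ℝ) (a : (Fin n → Fin l) → ℝ) (x : Rn n) : pol (c • a) x = c * pol a x := by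
  simp [pol, Finset.mul_sum, mul_assoc]

lemma continuous_pol {n l : ℕ} : Continuous fun z : ((Fin n → Fin l) → ℝ) × Rn n => pol z.1 z.2 := by
  unfold pol; fun_prop

lemma pol_eq_zero {n l : ℕ} {U : Set (Rn n)} (hU : IsOpen U) (hne : U.Nonempty) {a : (Fin n → Fin l) → ℝ}
    (h : ∀ x ∈ U, pol a x = 0) : a = 0 := by
  obtain ⟨x0, hx0⟩ := hne
  obtain ⟨s, hs, hsU⟩ := Metric.isOpen_iff.mp hU x0 hx0
  let P : MvPolynomial (Fin n) ℝ := ∑ β, MvPolynomial.monomial (expEmb n l β) (a β)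
  have hev : ∀ x, MvPolynomial.eval x P = pol a x := by
    intro x
    simp only [P, map_sum, MvPolynomial.eval_monomial, pol]
    apply Finset.sum_congr rfl; intro β _
    congr 1
    rw [Finsupp.prod_fintype _ _ (by simp)]; rfl
  have hP : P = 0 := by
    apply MvPolynomial.funext_set (fun i => Set.Ioo (x0 i - s) (x0 i + s))
    · intro i; exact Set.Ioo_infinite (by linarith)
    · intro x hx
      rw [hev, map_zero]
      apply h; apply hsU
      rw [Metric.mem_ball, dist_pi_lt_iff hs]
      intro i
      have := hx i (Set.mem_univ i)
      rw [Real.dist_eq, abs_lt]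
      exact ⟨by linarith [this.1], by linarith [this.2]⟩
  ext β
  have : P.coeff (expEmb n l β) = a β := by
    simp only [P, MvPolynomial.coeff_sum, MvPolynomial.coeff_monomial]
    rw [Finset.sum_eq_single β]
    · simp
    · intro γ _ hγ; rw [if_neg]; intro h; exact hγ ((expEmb n l).injective h)
    · simp
  rw [← this, hP]; simp

lemma pol_lower {n l : ℕ} {r : ℝ≥0∞} (hr : r ≠ 0) {U : Set (Rn n)} (hU : IsOpen U) (hne : U.Nonempty) :
    ∃ κ : ℝ≥0∞, κ ≠ ∞ ∧ ∀ a : (Fin n → Fin l) → ℝ, ‖a‖ₑ ≤ κ * eLpNorm (pol a) r (volume.restrict U) := by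
  have main : ∃ κ : ℝ≥0∞, κ ≠ 0 ∧ ∀ a ∈ Metric.sphere (0 : (Fin n → Fin l) → ℝ) 1,
      κ ≤ eLpNorm (pol a) r (volume.restrict U) := by
    apply (isCompact_sphere (0 : (Fin n → Fin l) → ℝ) 1).induction_on
      (p := fun s => ∃ κ : ℝ≥0∞, κ ≠ 0 ∧ ∀ a ∈ s, κ ≤ eLpNorm (pol a) r (volume.restrict U))
    · exact ⟨1, one_ne_zero, by simp⟩
    · rintro s t hst ⟨κ, h0, h⟩; exact ⟨κ, h0, fun a ha => h a (hst ha)⟩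
    · rintro s t ⟨κ, h0, h⟩ ⟨κ', h0', h'⟩
      refine ⟨min κ κ', (lt_min (pos_iff_ne_zero.mpr h0) (pos_iff_ne_zero.mpr h0')).ne', ?_⟩
      rintro a (ha | ha)
      · exact (min_le_left _ _).trans (h a ha)
      · exact (min_le_right _ _).trans (h' a ha)
    · intro a ha
      have ha0 : a ≠ 0 := by
        rintro rfl; simp at ha
      obtain ⟨x, hxU, hx⟩ : ∃ x ∈ U, pol a x ≠ 0 := by
        by_contra! hcon
        exact ha0 (pol_eq_zero hU hne hcon)
      set c := |pol a x| / 2 with hc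
      have hcpos : 0 < c := by have := abs_pos.mpr hx; positivity
      have hev : ∀ᶠ z in nhds (a, x), c < |pol z.1 z.2| := by
        apply (continuous_pol.abs.continuousAt (x := (a, x))).eventually_const_lt
        simp only [hc]; linarith [abs_pos.mpr hx]
      rw [nhds_prod_eq] at hev
      obtain ⟨A, hA, B, hB, hAB⟩ := Filter.eventually_prod_iff.mp hev
      obtain ⟨B', hB'sub, hB'o, hxB'⟩ := mem_nhds_iff.mp (Filter.inter_mem hB (hU.mem_nhds hxU))
      have hvol : volume B' ≠ 0 := (hB'o.measure_pos volume ⟨x, hxB'⟩).ne'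
      refine ⟨{a' | A a'}, mem_nhdsWithin_of_mem_nhds hA, eLpNorm (fun _ : Rn n => c) r (volume.restrict B'), ?_, ?_⟩
      · rw [eLpNorm_const c hr (by simpa using hvol)]
        apply mul_ne_zero
        · simpa using hcpos.ne'
        · rw [Measure.restrict_apply_univ]
          intro h0
          rw [ENNReal.rpow_eq_zero_iff] at h0
          rcases h0 with h0 | h0
          · exact hvol h0.1
          · have : (0:ℝ) ≤ 1 / r.toReal := by positivity
            linarith [h0.2]
      · intro a' ha'
        refine le_trans ?_ (eLp_mono_set (fun y hy => (hB'sub hy).2) _ r)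
        apply eLpNorm_mono_ae
        filter_upwards [ae_restrict_mem hB'o.measurableSet] with y hy
        rw [Real.norm_of_nonneg hcpos.le, Real.norm_eq_abs]
        exact (hAB ha' (hB'sub hy).1).le
  obtain ⟨κ0, hκ0, H0⟩ := main
  obtain ⟨κ, hκ, hκt, H⟩ : ∃ κ : ℝ≥0∞, κ ≠ 0 ∧ κ ≠ ∞ ∧ ∀ a ∈ Metric.sphere (0 : (Fin n → Fin l) → ℝ) 1,
      κ ≤ eLpNorm (pol a) r (volume.restrict U) :=
    ⟨min κ0 1, (lt_min (pos_iff_ne_zero.mpr hκ0) one_pos).ne',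
      ne_top_of_le_ne_top one_ne_top (min_le_right _ _), fun a ha => (min_le_left _ _).trans (H0 a ha)⟩
  refine ⟨κ⁻¹, by simpa using hκ, fun a => ?_⟩
  by_cases ha : a = 0
  · simp [ha]
  have hna : 0 < ‖a‖ := norm_pos_iff.mpr ha
  have h1 := H (‖a‖⁻¹ • a) (by simp [norm_smul, hna.ne'])
  have h2 : eLpNorm (pol (‖a‖⁻¹ • a)) r (volume.restrict U) = ‖‖a‖⁻¹‖ₑ * eLpNorm (pol a) r (volume.restrict U) := by
    rw [← enorm_mul_eLp]; congr 1; ext x; exact pol_smul _ _ _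
  rw [h2] at h1
  have hne0 : ‖a‖ₑ ≠ 0 := by simpa using ha
  have hnt : ‖a‖ₑ ≠ ∞ := by simp
  have h3 : ‖‖a‖⁻¹‖ₑ = ‖a‖ₑ⁻¹ := by
    rw [enorm_inv hna.ne', enorm_norm]
  rw [h3] at h1
  rw [mul_comm, ← div_eq_mul_inv, ENNReal.le_div_iff_mul_le (Or.inl hκ) (Or.inl hκt)]
  calc ‖a‖ₑ * κ ≤ ‖a‖ₑ * (‖a‖ₑ⁻¹ * eLpNorm (pol a) r (volume.restrict U)) := by gcongr
    _ = _ := by rw [← mul_assoc, ENNReal.mul_inv_cancel hne0 hnt, one_mul]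

lemma pol_upper {n l : ℕ} (ρ : ℝ) : ∃ C : ℝ, 0 ≤ C ∧ ∀ (a : (Fin n → Fin l) → ℝ) (x : Rn n),
    (∀ i, |x i| ≤ ρ) → |pol a x| ≤ C * ‖a‖ := by
  refine ⟨∑ β : Fin n → Fin l, ∏ j, (|ρ|) ^ (β j : ℕ), by positivity, fun a x hx => ?_⟩
  rw [pol, Finset.sum_mul]
  refine (Finset.abs_sum_le_sum_abs _ _).trans (Finset.sum_le_sum fun β _ => ?_)
  rw [abs_mul, mul_comm, Finset.abs_prod]
  gcongr with j
  · rw [abs_pow]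
    have := (hx j).trans (le_abs_self ρ)
    gcongr
  · exact norm_le_pi_norm a β

lemma pol_unif {n l : ℕ} (ρ η : ℝ) (hη : 0 < η) : ∃ δ > 0, ∀ (a : (Fin n → Fin l) → ℝ) (x y : Rn n),
    (∀ i, |x i| ≤ ρ) → (∀ i, |y i| ≤ ρ) → (∀ i, |x i - y i| < δ) → |pol a x - pol a y| ≤ η * ‖a‖ := by
  let F : Rn n → (Fin n → Fin l) → ℝ := fun x β => ∏ j, x j ^ (β j : ℕ)
  have hF : Continuous F := by fun_prop
  have hK : IsCompact (Set.pi Set.univ fun _ : Fin n => Set.Icc (-ρ) ρ) := isCompact_univ_pi fun _ => isCompact_Icc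
  have hu := hK.uniformContinuousOn_of_continuous hF.continuousOn
  rw [Metric.uniformContinuousOn_iff] at hu
  set c : ℝ := (Fintype.card (Fin n → Fin l) : ℝ) + 1 with hc
  have hcp : 0 < c := by positivity
  obtain ⟨δ, hδ, H⟩ := hu (η / c) (by positivity)
  refine ⟨δ, hδ, fun a x y hx hy hxy => ?_⟩
  have h1 := H x (fun i _ => abs_le.mp (hx i)) y (fun i _ => abs_le.mp (hy i))
    (by rw [dist_pi_lt_iff hδ]; intro i; rw [Real.dist_eq]; exact hxy i)
  have h2 : pol a x - pol a y = ∑ β, a β * (F x β - F y β) := by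
    simp only [pol, F, mul_sub, Finset.sum_sub_distrib]
  rw [h2]
  calc |∑ β, a β * (F x β - F y β)| ≤ ∑ β, |a β * (F x β - F y β)| := Finset.abs_sum_le_sum_abs _ _
    _ ≤ ∑ β : Fin n → Fin l, ‖a‖ * (η / c) := by
        gcongr with β
        rw [abs_mul]
        gcongr
        · exact norm_le_pi_norm a β
        · have := dist_le_pi_dist (F x) (F y) β
          rw [Real.dist_eq] at this
          exact this.trans h1.le
    _ = (Fintype.card (Fin n → Fin l) : ℝ) * (‖a‖ * (η / c)) := by simp
    _ ≤ c * (‖a‖ * (η / c)) := by gcongr; simp [hc]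
    _ = η * ‖a‖ := by field_simp

lemma totalDegree_aeval_le {n : ℕ} (b : Polynomial ℝ) (q : MvPolynomial (Fin n) ℝ) (hq : q.totalDegree ≤ 1) :
    (Polynomial.aeval q b).totalDegree ≤ b.natDegree := by
  rw [Polynomial.aeval_eq_sum_range]
  apply MvPolynomial.totalDegree_finsetSum_le
  intro i hi
  refine (MvPolynomial.totalDegree_smul_le _ _).trans ((MvPolynomial.totalDegree_pow _ _).trans ?_)
  have := Finset.mem_range.mp hi
  nlinarith

lemma binom_mv {n : ℕ} (M : ℝ) (y : Rn n) (β : Fin n → ℕ) : ∃ P : MvPolynomial (Fin n) ℝ,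
    P.totalDegree ≤ ∑ j, β j ∧ ∀ (x : Rn n) (i : Fin n → ℕ), (∀ j, (x j - y j) * M = i j) →
      MvPolynomial.eval x P = ∏ j, ((i j).choose (β j) : ℝ) := by
  choose b hb hb2 using fun j => binom_poly M (β j)
  refine ⟨∏ j, Polynomial.aeval (MvPolynomial.X j - MvPolynomial.C (y j)) (b j), ?_, ?_⟩
  · refine (MvPolynomial.totalDegree_finsetProd _ _).trans (Finset.sum_le_sum fun j _ => ?_)
    refine (totalDegree_aeval_le _ _ ?_).trans (hb j)
    refine (MvPolynomial.totalDegree_sub_C_le _ _).trans ?_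
    simp
  · intro x i hxi
    rw [map_prod]
    refine Finset.prod_congr rfl fun j _ => ?_
    rw [← hb2 j (x j - y j) (i j) (hxi j)]
    have : MvPolynomial.eval x (Polynomial.aeval (MvPolynomial.X j - MvPolynomial.C (y j)) (b j))
      = MvPolynomial.aeval x (Polynomial.aeval (MvPolynomial.X j - MvPolynomial.C (y j)) (b j)) := by
      simp
    rw [this, ← Polynomial.aeval_algHom_apply]
    simp

/-- coordinate step -/
def uvec {n : ℕ} (M : ℕ) (j : Fin n) : Rn n := Pi.single j (1 / (M:ℝ))

lemma newton {n : ℕ} {M : ℕ} (φ : Rn n → ℝ) (y : Rn n) (i : Fin n → Fin M) :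
    φ (y + fun j => ((i j : ℕ) : ℝ) / M) = ∑ β : Fin n → Fin M,
      (∏ j, ((i j : ℕ).choose (β j : ℕ) : ℝ)) * EvS φ y (∏ j, (Sh (uvec M j) - 1) ^ (β j : ℕ)) := by
  have h1 : (fun j => ((i j : ℕ) : ℝ) / M) = ∑ j, ((i j : ℕ) : ℝ) • uvec (n := n) M j := by
    ext k
    rw [Finset.sum_apply, Finset.sum_eq_single k]
    · simp [uvec, div_eq_mul_inv]
    · intro b _ hb; simp [uvec, hb.symm]
    · simp
  rw [← EvS_Sh φ y, h1, ← Sh_sum]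
  have h2 : ∀ j, Sh (((i j : ℕ) : ℝ) • uvec (n := n) M j) =
      ∑ b : Fin M, (((i j : ℕ).choose (b : ℕ) : ℝ)) • (Sh (uvec (n := n) M j) - 1) ^ (b : ℕ) := by
    intro j
    rw [← Sh_pow]
    have : Sh (uvec (n := n) M j) = (Sh (uvec M j) - 1) + 1 := by ring
    conv_lhs => rw [this, add_pow]
    rw [Finset.sum_fin_eq_sum_range]
    apply Finset.sum_subset_zero_on_sdiff
    · intro b hb; have := (i j).2; simp at hb ⊢; omega
    · intro b hb
      simp only [Finset.mem_sdiff, Finset.mem_range] at hb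
      rw [dif_pos hb.1]; simp only
      rw [Nat.choose_eq_zero_of_lt (by omega)]; simp
    · intro b hb
      have hb' := Finset.mem_range.mp hb
      rw [dif_pos (by have := (i j).2; omega), one_pow, mul_one, Algebra.smul_def, mul_comm]
      simp
  rw [Finset.prod_congr rfl (fun j _ => h2 j), Finset.prod_univ_sum, Fintype.piFinset_univ, map_sum]
  apply Finset.sum_congr rfl
  intro β _
  have : ∏ j, (((i j : ℕ).choose (β j : ℕ) : ℝ)) • (Sh (uvec (n := n) M j) - 1) ^ (β j : ℕ) =
     (∏ j, ((i j : ℕ).choose (β j : ℕ) : ℝ)) • ∏ j, (Sh (uvec (n := n) M j) - 1) ^ (β j : ℕ) := by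
    rw [Finset.prod_smul]
  rw [this, map_smul, smul_eq_mul]

lemma diffl_poly {n l : ℕ} (h : Rn n) (P : MvPolynomial (Fin n) ℝ) (hP : P.totalDegree < l) (x : Rn n) :
    diffl l h (fun y => MvPolynomial.eval y P) x = 0 := by
  let R : Polynomial ℝ := MvPolynomial.aeval (fun i => Polynomial.C (x i) + Polynomial.X * Polynomial.C (h i)) P
  have hR : R.natDegree < l := by
    refine lt_of_le_of_lt (MvPolynomial.aeval_natDegree_le (m := P.totalDegree) (n := 1) P le_rfl _ ?_) (by omega)
    intro i
    refine (Polynomial.natDegree_add_le _ _).trans (max_le (by simp) ?_)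
    exact (Polynomial.natDegree_mul_C_le _ _).trans Polynomial.natDegree_X_le
  have h0 := congrFun (Polynomial.fwdDiff_iter_eq_zero_of_degree_lt hR) 0
  rw [fwdDiff_iter_eq_sum_shift] at h0
  rw [diffl, ← h0.trans (Pi.zero_apply _)]
  apply Finset.sum_congr rfl
  intro j hj
  have hj' : j ≤ l := Nat.lt_succ_iff.mp (Finset.mem_range.mp hj)
  have e1 : R.eval (0 + j • (1:ℝ)) = MvPolynomial.eval (x + (j:ℝ) • h) P := by
    have : R.eval (0 + j • (1:ℝ)) = Polynomial.aeval (0 + j • (1:ℝ)) R := by simp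
    rw [this, ← AlgHom.comp_apply, MvPolynomial.comp_aeval]
    simp only [MvPolynomial.aeval_def]
    rw [← MvPolynomial.eval₂_id]
    congr 1
    ext i
    simp; ring
  rw [e1]
  have : (-1 : ℝ) ^ (l + j) = (-1) ^ (l - j) := by
    have : l + j = (l - j) + 2 * j := by omega
    rw [this, pow_add, pow_mul]; simp
  rw [this, zsmul_eq_mul]; push_cast; ring

/-! ### Whitney inequality on the unit cube -/

lemma newton_est {n l : ℕ} {r : ℝ≥0∞} {ε τ : ℝ} (hl : 0 < l) (hτ : 0 < τ) (h1 : 12 * (l:ℝ)^2 * τ ≤ 1)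
    (h2 : 3 * l * τ ≤ ε) {M : ℕ} (hM : 0 < M) (hMτ : 1 / (M:ℝ) ≤ τ) (β : Fin n → Fin M)
    (hβ : l ≤ ∑ j, (β j : ℕ)) : ∃ C : ℝ≥0∞, C ≠ ∞ ∧ ∀ φ : Rn n → ℝ, Measurable φ →
      eLpNorm (fun y => EvS φ y (∏ j, (Sh (uvec M j) - 1) ^ (β j : ℕ))) r (volume.restrict (cell n M))
        ≤ C * dlt n l r ε φ := by
  have hM' : (0:ℝ) < M := by exact_mod_cast hM
  obtain ⟨C, hC, H⟩ := lemM (n := n) (r := r) hl hτ h1 h2 _ hβ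
  refine ⟨C, hC, fun φ hφ => ?_⟩
  let g : Fin (∑ j, (β j : ℕ)) → Fin n := fun a => (finSigmaFinEquiv.symm a).1
  have hprod : ∏ j, (Sh (uvec (n := n) M j) - 1) ^ (β j : ℕ) = ∏ a, (Sh (uvec (n := n) M (g a)) - 1) := by
    rw [← Equiv.prod_comp finSigmaFinEquiv, Fintype.prod_sigma]
    apply Finset.prod_congr rfl
    intro j _
    simp only [g, Equiv.symm_apply_apply]
    rw [Finset.prod_const, Finset.card_univ, Fintype.card_fin]
  have hcard : ∀ j, (Finset.univ.filter fun a => g a = j).card = (β j : ℕ) := by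
    intro j
    have : ∑ a, (if g a = j then 1 else 0) = (β j : ℕ) := by
      rw [← Equiv.sum_comp finSigmaFinEquiv, Fintype.sum_sigma]
      simp only [g, Equiv.symm_apply_apply]
      rw [Finset.sum_eq_single j] <;> simp
      intro b hb hb'; exact absurd hb' hb
    rw [← this, Finset.card_filter]
  have key := H φ hφ (fun a => uvec M (g a)) ?_ 0 (cell n M) (meas_cell n M) ?_
  · simpa only [Sh_zero, one_mul, ← hprod] using key
  · intro a i
    have h0 : 0 ≤ 1 / (M:ℝ) := by positivity
    simp only [uvec, Pi.single_apply]
    split_ifs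
    · rw [abs_of_nonneg h0]; exact hMτ
    · simpa using hτ.le
  · intro x hx S
    have e : ∑ a ∈ S, uvec M (g a) = fun j => (((S.filter fun a => g a = j).card : ℕ) : ℝ) / M := by
      ext j
      simp only [Finset.sum_apply, uvec, Pi.single_apply]
      rw [Finset.card_filter, Nat.cast_sum, Finset.sum_div]
      apply Finset.sum_congr rfl
      intro a _
      by_cases h : g a = j
      · simp [h]
      · simp [h, Ne.symm h]
    rw [e, add_zero]
    apply lattice_cell_mem hM _ _ hx
    intro j
    have : (S.filter fun a => g a = j).card ≤ (β j : ℕ) := by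
      rw [← hcard j]
      exact Finset.card_le_card (Finset.filter_subset_filter _ (Finset.subset_univ S))
    have := (β j).2
    omega

lemma newton_poly {n l : ℕ} {r : ℝ≥0∞} {ε τ : ℝ} (hl : 0 < l) (hτ : 0 < τ) (h1 : 12 * (l:ℝ)^2 * τ ≤ 1)
    (h2 : 3 * l * τ ≤ ε) {M : ℕ} (hM : 0 < M) (hMτ : 1 / (M:ℝ) ≤ τ) :
    ∃ C : ℝ≥0∞, C ≠ ∞ ∧ ∀ φ : Rn n → ℝ, Measurable φ → ∃ h : Rn n → ℝ, Measurable h ∧ (∀ y, 0 ≤ h y) ∧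
      eLpNorm h r (volume.restrict (cell n M)) ≤ C * dlt n l r ε φ ∧
      ∀ y, ∃ P : MvPolynomial (Fin n) ℝ, P.totalDegree < l ∧
        ∀ x ∈ uQ n, |φ (cflo M x + y) - MvPolynomial.eval (cflo M x + y) P| ≤ h y := by
  have hM' : (0:ℝ) < M := by exact_mod_cast hM
  set S : Finset (Fin n → Fin M) := Finset.univ.filter fun β => l ≤ ∑ j, (β j : ℕ) with hS
  have hex : ∀ β : Fin n → Fin M, ∃ C : ℝ≥0∞, C ≠ ∞ ∧ (β ∈ S → ∀ φ : Rn n → ℝ, Measurable φ →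
      eLpNorm (fun y => EvS φ y (∏ j, (Sh (uvec M j) - 1) ^ (β j : ℕ))) r (volume.restrict (cell n M))
        ≤ C * dlt n l r ε φ) := by
    intro β
    by_cases hβ : β ∈ S
    · obtain ⟨C, hC, H⟩ := newton_est (n := n) (r := r) hl hτ h1 h2 hM hMτ β (by simpa [hS] using hβ)
      exact ⟨C, hC, fun _ => H⟩
    · exact ⟨0, by simp, fun h => absurd h hβ⟩
  choose Cβ hCβ HCβ using hex
  refine ⟨QC r ^ S.card * ∑ β ∈ S, ‖((2:ℝ) ^ M) ^ n‖ₑ * Cβ β, ?_, fun φ hφ => ?_⟩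
  · apply ENNReal.mul_ne_top (QC_pow_ne_top r _)
    rw [ENNReal.sum_ne_top]
    intro β _
    exact ENNReal.mul_ne_top (by simp) (hCβ β)
  have hmeas : ∀ β : Fin n → Fin M, Measurable fun y => ((2:ℝ) ^ M) ^ n * |EvS φ y (∏ j, (Sh (uvec M j) - 1) ^ (β j : ℕ))| :=
    fun β => ((measurable_norm.comp (EvS_measurable hφ _))).const_mul _
  refine ⟨fun y => ∑ β ∈ S, ((2:ℝ) ^ M) ^ n * |EvS φ y (∏ j, (Sh (uvec M j) - 1) ^ (β j : ℕ))|,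
    Finset.measurable_sum _ fun β _ => hmeas β, fun y => by positivity, ?_, ?_⟩
  · refine (qsum S _ (fun β _ => (hmeas β).aestronglyMeasurable) r).trans ?_
    rw [mul_assoc, Finset.sum_mul]
    gcongr with β hβ
    rw [enorm_mul_eLp, mul_assoc]
    gcongr
    refine le_trans (le_of_eq ?_) (HCβ β hβ φ hφ)
    exact eLpNorm_norm (fun y => EvS φ y (∏ j, (Sh (uvec M j) - 1) ^ (β j : ℕ)))
  · intro y
    choose B hB1 hB2 using fun β : Fin n → Fin M => binom_mv (M:ℝ) y (fun j => (β j : ℕ))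
    refine ⟨∑ β ∈ Finset.univ.filter (fun β : Fin n → Fin M => ¬ l ≤ ∑ j, (β j : ℕ)),
      (EvS φ y (∏ j, (Sh (uvec M j) - 1) ^ (β j : ℕ))) • B β, ?_, ?_⟩
    · refine lt_of_le_of_lt (MvPolynomial.totalDegree_finsetSum_le (d := l - 1) ?_) (by omega)
      intro β hβ
      simp only [Finset.mem_filter, Finset.mem_univ, true_and, not_le] at hβ
      refine (MvPolynomial.totalDegree_smul_le _ _).trans ((hB1 β).trans (by omega))
    · intro x hx
      obtain ⟨i, hi⟩ := cflo_lattice hM hx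
      have hB3 : ∀ β, MvPolynomial.eval (cflo M x + y) (B β) = ∏ j, ((i j : ℕ).choose (β j : ℕ) : ℝ) := by
        intro β
        apply hB2
        intro j
        simp only [hi, Pi.add_apply]
        field_simp; ring
      have hn := newton φ y i
      rw [← hi, add_comm y] at hn
      rw [hn, map_sum, ← Finset.sum_filter_add_sum_filter_not Finset.univ (fun β : Fin n → Fin M => l ≤ ∑ j, (β j : ℕ))]
      simp only [MvPolynomial.smul_eval, hB3]
      have : ∀ a b c : ℝ, b = c → |a + b - c| = |a| := by intro a b c h; rw [h]; congr 1; ring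
      rw [this]
      · refine (Finset.abs_sum_le_sum_abs _ _).trans (Finset.sum_le_sum fun β _ => ?_)
        rw [abs_mul]
        gcongr
        rw [abs_of_nonneg (by positivity)]
        calc ∏ j, ((i j : ℕ).choose (β j : ℕ) : ℝ) ≤ ∏ j : Fin n, (2:ℝ) ^ M := by
              apply Finset.prod_le_prod (fun _ _ => by positivity)
              intro j _
              have h3 := Nat.choose_le_two_pow (i j : ℕ) (β j : ℕ)
              calc ((i j : ℕ).choose (β j : ℕ) : ℝ) ≤ (2:ℝ) ^ (i j : ℕ) := by exact_mod_cast h3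
                _ ≤ 2 ^ M := pow_le_pow_right₀ (by norm_num) (i j).2.le
          _ = _ := by simp
      · apply Finset.sum_congr rfl; intro β _; ring

lemma exists_small {K : ℝ≥0∞} (hK : K ≠ ∞) : ∃ η : ℝ, 0 < η ∧ K * ENNReal.ofReal η ≤ 1 / 8 := by
  refine ⟨1 / (8 * (K.toReal + 1)), by positivity, ?_⟩
  have hk : 0 ≤ K.toReal := ENNReal.toReal_nonneg
  rw [← ENNReal.ofReal_toReal hK, ← ENNReal.ofReal_mul hk]
  have : (1 / 8 : ℝ≥0∞) = ENNReal.ofReal (1 / 8) := by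
    rw [ENNReal.ofReal_div_of_pos (by norm_num)]; simp
  rw [this]
  apply ENNReal.ofReal_le_ofReal
  rw [ENNReal.toReal_ofReal hk, mul_one_div, div_le_div_iff₀ (by positivity) (by norm_num)]
  linarith

lemma absorb {D X : ℝ≥0∞} (hD : D ≠ ∞) (h : D ≤ X + 1 / 2 * D) : D ≤ 2 * X := by
  by_cases hX : X = ∞
  · simp [hX]
  lift D to NNReal using hD
  lift X to NNReal using hX
  have e : (1 / 2 : ℝ≥0∞) = ((1 / 2 : NNReal) : ℝ≥0∞) := by norm_num
  rw [e] at h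
  have h' : D ≤ X + 1 / 2 * D := by exact_mod_cast h
  have : D ≤ 2 * X := by
    have h2 : (D:ℝ) ≤ X + 1 / 2 * D := by exact_mod_cast h'
    have : (D:ℝ) ≤ 2 * X := by linarith
    exact_mod_cast this
  exact_mod_cast this

lemma eLp_fst {α β : Type*} [MeasurableSpace α] [MeasurableSpace β] {μ : Measure α} {ν : Measure β} [SFinite μ] [SFinite ν]
    (hμ : μ Set.univ ≠ 0) {f : β → ℝ} (hf : Measurable f) (r : ℝ≥0∞) :
    eLpNorm (fun z : β × α => f z.1) r (ν.prod μ) = μ Set.univ ^ (1 / r).toReal * eLpNorm f r ν := by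
  have := eLpNorm_map_measure (p := r) (μ := ν.prod μ) (f := Prod.fst) (g := f)
    hf.aestronglyMeasurable measurable_fst.aemeasurable
  rw [Measure.map_fst_prod, eLpNorm_smul_measure_of_ne_zero hμ] at this
  simpa [Function.comp_def] using this.symm

lemma eLp_le_bound {α : Type*} [MeasurableSpace α] {μ : Measure α} {S : Set α} (hS : MeasurableSet S) {f : α → ℝ}
    {K : ℝ} (h : ∀ x ∈ S, |f x| ≤ K) (r : ℝ≥0∞) :
    eLpNorm f r (μ.restrict S) ≤ μ S ^ r.toReal⁻¹ * ENNReal.ofReal K := by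
  have := eLpNorm_le_of_ae_bound (p := r) (f := f) (μ := μ.restrict S) (C := K)
    (by filter_upwards [ae_restrict_mem hS] with x hx; exact h x hx)
  simpa using this

lemma pol_eLp_ne_top {n l : ℕ} (r : ℝ≥0∞) (a : (Fin n → Fin l) → ℝ) : eLpNorm (pol a) r (volume.restrict (uQ n)) ≠ ∞ := by
  obtain ⟨C, hC, H⟩ := pol_upper (n := n) (l := l) 1
  refine ne_top_of_le_ne_top ?_ (eLp_le_bound (meas_uQ n) (K := C * ‖a‖) ?_ r)
  · rw [vol_uQ]; simp
  · intro x hx; apply H; intro i; have := hx i; rw [abs_of_pos this.1]; exact this.2.le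

lemma measurable_pol {n l : ℕ} (a : (Fin n → Fin l) → ℝ) : Measurable (pol a : Rn n → ℝ) :=
  (continuous_pol.comp (Continuous.prodMk_right a)).measurable

lemma measurable_eval {n : ℕ} (P : MvPolynomial (Fin n) ℝ) : Measurable (fun x : Rn n => MvPolynomial.eval x P) := by
  obtain ⟨a, ha⟩ := poly_repr P (Nat.lt_succ_self _)
  simp only [ha]; exact measurable_pol a

lemma whit1 {n l : ℕ} {r : ℝ≥0∞} {ε : ℝ} (hl : 0 < l) (hr : r ≠ 0) (hε : 0 < ε) : ∃ C : ℝ≥0∞, C ≠ ∞ ∧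
    ∀ φ : Rn n → ℝ, Measurable φ → eLpNorm φ r (volume.restrict (uQ n)) ≠ ∞ →
      bestApproxE n l r φ (uQ n) ≤ 1 / 2 * eLpNorm φ r (volume.restrict (uQ n)) + C * dlt n l r ε φ := by
  obtain ⟨A, hA, HA⟩ := osc3 (n := n) (r := r) (ε := ε) hl hr
  have hune : (uQ n).Nonempty := ⟨fun _ => 1/2, fun i => by norm_num⟩
  obtain ⟨κ, hκ, Hκ⟩ := pol_lower (n := n) (l := l) hr (isOpen_uQ n) hune
  set Q := QC r with hQ
  have hQt : Q ≠ ∞ := QC_ne_top r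
  have hQ2 : Q * Q ≠ ∞ := ENNReal.mul_ne_top hQt hQt
  obtain ⟨η, hη, hηle⟩ := exists_small (ENNReal.mul_ne_top hQ2 hκ)
  obtain ⟨η2, hη2, hη2le⟩ := exists_small (ENNReal.mul_ne_top hQ2 hA)
  obtain ⟨N, hN⟩ := exists_nat_gt (1 / η2)
  have hNpos : (0:ℝ) < N := lt_trans (by positivity) hN
  have hN0 : 0 < N := by exact_mod_cast hNpos
  have hNη : 1 / (N:ℝ) ≤ η2 := by
    rw [div_le_iff₀ hNpos]; rw [div_lt_iff₀ hη2] at hN; linarith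
  have hlp : (0:ℝ) < l := by exact_mod_cast hl
  obtain ⟨τ, hτ, h1, h2, h3⟩ : ∃ τ : ℝ, 0 < τ ∧ 12 * (l:ℝ)^2 * τ ≤ 1 ∧ 3 * l * τ ≤ ε ∧
      4 * ((l * N + 1 + l + 1 : ℕ) : ℝ) * τ ≤ 1 := by
    refine ⟨min (1 / (12 * (l:ℝ)^2)) (min (ε / (3 * l)) (1 / (4 * ((l * N + 1 + l + 1 : ℕ) : ℝ)))), ?_, ?_, ?_, ?_⟩
    · positivity
    · rw [mul_comm, ← le_div_iff₀ (by positivity)]; exact min_le_left _ _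
    · rw [mul_comm, ← le_div_iff₀ (by positivity)]; exact (min_le_right _ _).trans (min_le_left _ _)
    · rw [mul_comm, ← le_div_iff₀ (by positivity)]; exact (min_le_right _ _).trans (min_le_right _ _)
  obtain ⟨C1, hC1, H1⟩ := HA N hN0 τ hτ h1 h2 h3
  obtain ⟨δ, hδ, Hδ⟩ := pol_unif (n := n) (l := l) 2 η hη
  obtain ⟨M, hM⟩ := exists_nat_gt (1 / min 1 (min (τ / 2) δ))
  have hmin : 0 < min 1 (min (τ / 2) δ) := by positivity
  have hMpos : (0:ℝ) < M := lt_trans (by positivity) hM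
  have hM0 : 0 < M := by exact_mod_cast hMpos
  have hMle : 1 / (M:ℝ) < min 1 (min (τ / 2) δ) := by
    rw [div_lt_iff₀ hMpos]; rw [div_lt_iff₀ hmin] at hM; linarith
  have hM1 : 1 / (M:ℝ) < 1 := hMle.trans_le (min_le_left _ _)
  have hM2 : 1 / (M:ℝ) ≤ τ / 2 := hMle.le.trans ((min_le_right _ _).trans (min_le_left _ _))
  have hM3 : 1 / (M:ℝ) < δ := hMle.trans_le ((min_le_right _ _).trans (min_le_right _ _))
  obtain ⟨C2, hC2, H2⟩ := newton_poly (n := n) (r := r) hl hτ h1 h2 hM0 (by linarith : 1 / (M:ℝ) ≤ τ)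
  set v : ℝ≥0∞ := volume (cell n M) ^ (1 / r).toReal with hv
  have hvol0 : volume (cell n M) ≠ 0 := by rw [vol_cell]; apply pow_ne_zero; simpa using hM0.ne'
  have hvolt : volume (cell n M) ≠ ∞ := by rw [vol_cell]; exact ENNReal.pow_ne_top (by simp)
  have hv0 : v ≠ 0 := by
    rw [hv]; intro h; rcases ENNReal.rpow_eq_zero_iff.mp h with h | h
    · exact hvol0 h.1
    · exact hvolt h.1
  have hvt : v ≠ ∞ := ENNReal.rpow_ne_top_of_nonneg ENNReal.toReal_nonneg hvolt
  refine ⟨2 * (Q * Q * (C1 + v⁻¹ * C2)), ?_, fun φ hφ hfin => ?_⟩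
  · exact ENNReal.mul_ne_top (by simp) (ENNReal.mul_ne_top hQ2 (ENNReal.add_ne_top.mpr ⟨hC1, ENNReal.mul_ne_top (by simpa using hv0) hC2⟩))
  obtain ⟨h, hhm, hh0, hhle, Hh⟩ := H2 φ hφ
  set d := dlt n l r ε φ with hd
  set nφ := eLpNorm φ r (volume.restrict (uQ n)) with hnφ
  have hg1 : Measurable fun z : Rn n × Rn n => φ z.2 - φ (cflo M z.2 + z.1) :=
    (hφ.comp measurable_snd).sub (hφ.comp (((measurable_cflo M).comp measurable_snd).add measurable_fst))
  have hG : Measurable fun z : Rn n × Rn n => |φ z.2 - φ (cflo M z.2 + z.1)| + h z.1 :=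
    (measurable_norm.comp hg1).add (hhm.comp measurable_fst)
  have : IsFiniteMeasure (volume.restrict (cell n M)) := ⟨by simpa using hvolt.lt_top⟩
  obtain ⟨y, hyN, hy⟩ := eLp_slice (ν := volume.restrict (cell n M)) (μ := volume.restrict (uQ n)) (r := r)
    (by simpa using hvol0) hG hr (N := (cell n M)ᶜ) (by rw [Measure.restrict_apply (meas_cell n M).compl]; simp)
  have hyc : y ∈ cell n M := by simpa using hyN
  rw [Measure.restrict_apply_univ, ← hv] at hy
  have hG2 := qadd (μ := (volume.restrict (cell n M)).prod (volume.restrict (uQ n)))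
    (measurable_norm.comp hg1).aestronglyMeasurable (hhm.comp measurable_fst).aestronglyMeasurable r
  have e1 := eLp_fst (μ := volume.restrict (uQ n)) (ν := volume.restrict (cell n M)) (by simp [vol_uQ]) hhm r
  rw [Measure.restrict_apply_univ, vol_uQ, ENNReal.one_rpow, one_mul] at e1
  have e2 := eLpNorm_norm (p := r) (μ := (volume.restrict (cell n M)).prod (volume.restrict (uQ n))) (fun z : Rn n × Rn n => φ z.2 - φ (cflo M z.2 + z.1))
  set S := eLpNorm (fun x => |φ x - φ (cflo M x + y)| + h y) r (volume.restrict (uQ n)) with hSdef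
  have hS : S ≤ Q * (A * ENNReal.ofReal (1 / N) * nφ + C1 * d + v⁻¹ * C2 * d) := by
    apply (ENNReal.mul_le_mul_iff_right hv0 hvt).mp
    refine (hy.trans hG2).trans ?_
    calc Q * (eLpNorm (fun z : Rn n × Rn n => ‖φ z.2 - φ (cflo M z.2 + z.1)‖) r _ + eLpNorm (fun z : Rn n × Rn n => h z.1) r _)
        ≤ Q * (v * (A * ENNReal.ofReal (1 / N) * nφ + C1 * d) + C2 * d) := by
          rw [e1, e2]
          gcongr
          exact H1 M hM0 hM2 φ hφ
      _ = v * (Q * (A * ENNReal.ofReal (1 / N) * nφ + C1 * d)) + Q * ((v * v⁻¹) * C2 * d) := by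
          rw [ENNReal.mul_inv_cancel hv0 hvt]; ring
      _ = _ := by ring
  obtain ⟨P, hP, HP⟩ := Hh y
  obtain ⟨a, ha⟩ := poly_repr P hP
  set D := eLpNorm (fun x => φ x - pol a x) r (volume.restrict (uQ n)) with hD
  have hmp := measurable_pol (n := n) (l := l) a
  have hDt : D ≠ ∞ := by
    refine ne_top_of_le_ne_top ?_ (qsub hφ.aestronglyMeasurable hmp.aestronglyMeasurable r)
    exact ENNReal.mul_ne_top hQt (ENNReal.add_ne_top.mpr ⟨hfin, pol_eLp_ne_top r a⟩)
  have hpa : eLpNorm (pol a) r (volume.restrict (uQ n)) ≤ Q * (nφ + D) := by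
    have := qsub (μ := volume.restrict (uQ n)) hφ.aestronglyMeasurable (hφ.sub hmp).aestronglyMeasurable r
    refine le_trans (le_of_eq ?_) this
    congr 1; ext x; simp
  have hosc : eLpNorm (fun x => pol a (cflo M x + y) - pol a x) r (volume.restrict (uQ n)) ≤
      ENNReal.ofReal η * (κ * (Q * (nφ + D))) := by
    refine (eLp_le_bound (meas_uQ n) (K := η * ‖a‖) ?_ r).trans ?_
    · intro x hx
      have hc := cflo_le hM0 x
      apply Hδ
      · intro i; have := hx i; have h4 := hc i; have h5 := hyc i
        simp only [Pi.add_apply]; rw [abs_le]; constructor <;> linarith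
      · intro i; have := hx i; rw [abs_le]; constructor <;> linarith
      · intro i; have h4 := hc i; have h5 := hyc i
        simp only [Pi.add_apply]; rw [abs_lt]; constructor <;> linarith
    · rw [vol_uQ, ENNReal.one_rpow, one_mul, ENNReal.ofReal_mul hη.le, ofReal_norm]
      gcongr
      exact (Hκ a).trans (by gcongr)
  have hD1 : D ≤ Q * (S + ENNReal.ofReal η * (κ * (Q * (nφ + D)))) := by
    have hm2 : Measurable fun x : Rn n => pol a (cflo M x + y) := hmp.comp ((measurable_cflo M).add_const y)
    have hm3 : Measurable fun x : Rn n => φ x - pol a (cflo M x + y) := hφ.sub hm2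
    have := qadd (μ := volume.restrict (uQ n)) hm3.aestronglyMeasurable (hm2.sub hmp).aestronglyMeasurable r
    refine le_trans (le_of_eq ?_) (this.trans ?_)
    · rw [hD]; congr 1; ext x; simp
    · gcongr
      · apply eLpNorm_mono_ae
        filter_upwards [ae_restrict_mem (meas_uQ n)] with x hx
        have h6 := HP x hx
        rw [ha] at h6
        rw [Real.norm_eq_abs, Real.norm_eq_abs, abs_of_nonneg (add_nonneg (abs_nonneg _) (hh0 y))]
        calc |φ x - pol a (cflo M x + y)| ≤ |φ x - φ (cflo M x + y)| + |φ (cflo M x + y) - pol a (cflo M x + y)| := abs_sub_le _ _ _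
          _ ≤ _ := by gcongr
      · exact hosc
  have hD2 : D ≤ 2 * (1 / 4 * nφ + Q * Q * (C1 + v⁻¹ * C2) * d) := by
    apply absorb hDt
    calc D ≤ Q * (Q * (A * ENNReal.ofReal (1 / N) * nφ + C1 * d + v⁻¹ * C2 * d) + ENNReal.ofReal η * (κ * (Q * (nφ + D)))) :=
          hD1.trans (by gcongr)
      _ = (Q * Q * A * ENNReal.ofReal (1 / N)) * nφ + Q * Q * (C1 + v⁻¹ * C2) * d + (Q * Q * κ * ENNReal.ofReal η) * (nφ + D) := by ring
      _ ≤ 1 / 8 * nφ + Q * Q * (C1 + v⁻¹ * C2) * d + 1 / 8 * (nφ + D) := by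
          gcongr
          exact le_trans (by gcongr) hη2le
      _ = (1 / 8 + 1 / 8) * nφ + Q * Q * (C1 + v⁻¹ * C2) * d + 1 / 8 * D := by ring
      _ ≤ _ := by
          gcongr
          · have : (1 / 8 + 1 / 8 : ℝ≥0∞) = 1 / 4 := by
              rw [← ENNReal.toReal_eq_toReal_iff' (by simp) (by simp), ENNReal.toReal_add (by simp) (by simp)]; norm_num
            exact this.le
          · norm_num
  have hE : bestApproxE n l r φ (uQ n) ≤ D := by
    refine (iInf_le _ ⟨P, hP⟩).trans (le_of_eq ?_)
    simp only [ha]; rfl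
  refine hE.trans (hD2.trans (le_of_eq ?_))
  rw [mul_add, ← mul_assoc, ← mul_assoc]
  congr 2
  rw [← ENNReal.toReal_eq_toReal_iff' (by simp [ENNReal.mul_eq_top]) (by simp)]; norm_num

lemma diffl_sub_poly {n l : ℕ} (h : Rn n) (φ : Rn n → ℝ) (P : MvPolynomial (Fin n) ℝ) (hP : P.totalDegree < l) (x : Rn n) :
    diffl l h (fun y => φ y - MvPolynomial.eval y P) x = diffl l h φ x := by
  have h0 := diffl_poly h P hP x
  unfold diffl at *
  simp only [mul_sub, Finset.sum_sub_distrib]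
  rw [h0, sub_zero]

lemma difflOn_sub_poly {n l : ℕ} (Ω : Set (Rn n)) (h : Rn n) (φ : Rn n → ℝ) (P : MvPolynomial (Fin n) ℝ) (hP : P.totalDegree < l) (x : Rn n) :
    difflOn l Ω h (fun y => φ y - MvPolynomial.eval y P) x = difflOn l Ω h φ x := by
  unfold difflOn
  rw [diffl_sub_poly h φ P hP]

lemma dlt_sub_poly {n l : ℕ} (r : ℝ≥0∞) (ε : ℝ) (φ : Rn n → ℝ) (P : MvPolynomial (Fin n) ℝ) (hP : P.totalDegree < l) :
    dlt n l r ε (fun y => φ y - MvPolynomial.eval y P) = dlt n l r ε φ := by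
  unfold dlt
  simp only [difflOn_sub_poly _ _ φ P hP]

lemma bestApprox_sub_poly {n l : ℕ} (r : ℝ≥0∞) (φ : Rn n → ℝ) (S : Set (Rn n)) (P : MvPolynomial (Fin n) ℝ) (hP : P.totalDegree < l) :
    bestApproxE n l r φ S ≤ bestApproxE n l r (fun y => φ y - MvPolynomial.eval y P) S := by
  refine le_iInf fun P' => ?_
  refine (iInf_le _ ⟨P + P'.1, lt_of_le_of_lt (MvPolynomial.totalDegree_add _ _) (max_lt hP P'.2)⟩).trans (le_of_eq ?_)
  congr 1; ext x; simp only [map_add]; ring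

lemma eval_eLp_ne_top {n : ℕ} (r : ℝ≥0∞) (P : MvPolynomial (Fin n) ℝ) :
    eLpNorm (fun x => MvPolynomial.eval x P) r (volume.restrict (uQ n)) ≠ ∞ := by
  obtain ⟨a, ha⟩ := poly_repr P (Nat.lt_succ_self _)
  simp only [ha]; exact pol_eLp_ne_top r a

lemma bestApprox_le {n l : ℕ} (hl : 0 < l) (r : ℝ≥0∞) (φ : Rn n → ℝ) (S : Set (Rn n)) :
    bestApproxE n l r φ S ≤ eLpNorm φ r (volume.restrict S) := by
  refine (iInf_le _ ⟨0, by simpa using hl⟩).trans (le_of_eq ?_)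
  simp

lemma whit2 {n l : ℕ} {r : ℝ≥0∞} {ε : ℝ} (hl : 0 < l) (hr : r ≠ 0) (hε : 0 < ε) : ∃ C : ℝ≥0∞, C ≠ ∞ ∧
    ∀ φ : Rn n → ℝ, Measurable φ → eLpNorm φ r (volume.restrict (uQ n)) ≠ ∞ →
      bestApproxE n l r φ (uQ n) ≤ C * dlt n l r ε φ := by
  obtain ⟨C, hC, H⟩ := whit1 (n := n) hl hr hε
  refine ⟨2 * C, ENNReal.mul_ne_top (by simp) hC, fun φ hφ hfin => ?_⟩
  rw [mul_assoc]
  apply absorb (ne_top_of_le_ne_top hfin (bestApprox_le hl r φ _))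
  have : 1 / 2 * bestApproxE n l r φ (uQ n) = ⨅ P : {P : MvPolynomial (Fin n) ℝ // P.totalDegree < l},
      1 / 2 * eLpNorm (fun x => φ x - MvPolynomial.eval x P.1) r (volume.restrict (uQ n)) := by
    rw [bestApproxE, ENNReal.mul_iInf_of_ne (by simp) (by simp)]
  rw [this, ENNReal.add_iInf]
  refine le_iInf fun P => ?_
  refine (bestApprox_sub_poly r φ _ P.1 P.2).trans ?_
  have := H (fun y => φ y - MvPolynomial.eval y P.1) (hφ.sub (measurable_eval _))
    (ne_top_of_le_ne_top (ENNReal.mul_ne_top (QC_ne_top r) (ENNReal.add_ne_top.mpr ⟨hfin, eval_eLp_ne_top r P.1⟩))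
      (qsub hφ.aestronglyMeasurable (measurable_eval _).aestronglyMeasurable r))
  rw [dlt_sub_poly _ _ _ _ P.2, add_comm] at this
  exact this

/-! ### Scaling -/

/-- affine dilation -/
def aff {n : ℕ} (w : Rn n) (s : ℝ) (x : Rn n) : Rn n := w + s • x

lemma measurable_aff {n : ℕ} (w : Rn n) (s : ℝ) : Measurable (aff w s) := by
  unfold aff; fun_prop

lemma map_aff {n : ℕ} (w : Rn n) {s : ℝ} (hs : 0 < s) :
    Measure.map (aff w s) (volume : Measure (Rn n)) = ENNReal.ofReal (s ^ n)⁻¹ • volume := by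
  have e : aff w s = (fun x => w + x) ∘ (fun x => s • x) := rfl
  rw [e, ← Measure.map_map (by fun_prop) (by fun_prop), Measure.map_addHaar_smul _ hs.ne', Measure.map_smul,
    (measurePreserving_add_left volume w).map_eq]
  simp [abs_of_pos hs]

lemma map_aff_restrict {n : ℕ} (w : Rn n) {s : ℝ} (hs : 0 < s) {S : Set (Rn n)} (hS : MeasurableSet S) :
    Measure.map (aff w s) (volume.restrict (aff w s ⁻¹' S)) = ENNReal.ofReal (s ^ n)⁻¹ • volume.restrict S := by
  rw [← Measure.restrict_map (measurable_aff w s) hS, map_aff w hs, Measure.restrict_smul]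

/-- scaling factor `s^{-n/r}` -/
def sf (n : ℕ) (r : ℝ≥0∞) (s : ℝ) : ℝ≥0∞ := ENNReal.ofReal s ^ (-(n:ℝ) / r.toReal)

lemma sf_ne_zero (n : ℕ) (r : ℝ≥0∞) {s : ℝ} (hs : 0 < s) : sf n r s ≠ 0 := by
  unfold sf; intro h
  rcases ENNReal.rpow_eq_zero_iff.mp h with h | h
  · simp at h; linarith [h.1]
  · simp at h

lemma sf_ne_top (n : ℕ) (r : ℝ≥0∞) {s : ℝ} (hs : 0 < s) : sf n r s ≠ ∞ := by
  unfold sf; intro h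
  rcases ENNReal.rpow_eq_top_iff.mp h with h | h
  · simp at h; linarith [h.1]
  · simp at h

lemma sf_eq (n : ℕ) (r : ℝ≥0∞) {s : ℝ} (hs : 0 < s) : ENNReal.ofReal (s ^ n)⁻¹ ^ (1 / r).toReal = sf n r s := by
  unfold sf
  rw [ENNReal.ofReal_inv_of_pos (by positivity), ENNReal.ofReal_pow hs.le, ← ENNReal.rpow_natCast, ← ENNReal.rpow_neg,
    ← ENNReal.rpow_mul]
  congr 1
  simp [div_eq_mul_inv]

lemma eLp_aff {n : ℕ} (w : Rn n) {s : ℝ} (hs : 0 < s) {S : Set (Rn n)} (hS : MeasurableSet S) {f : Rn n → ℝ}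
    (hf : Measurable f) (r : ℝ≥0∞) : eLpNorm (fun x => f (aff w s x)) r (volume.restrict (aff w s ⁻¹' S)) =
      sf n r s * eLpNorm f r (volume.restrict S) := by
  have := eLpNorm_map_measure (p := r) (μ := volume.restrict (aff w s ⁻¹' S)) (f := aff w s) (g := f)
    hf.aestronglyMeasurable (measurable_aff w s).aemeasurable
  rw [map_aff_restrict w hs hS, eLpNorm_smul_measure_of_ne_zero (by simp; positivity), sf_eq n r hs] at this
  exact this.symm

lemma eLp_aff2 {n : ℕ} (w : Rn n) {s : ℝ} (hs : 0 < s) {S S' : Set (Rn n)} (hS : MeasurableSet S) (hS' : MeasurableSet S')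
    {f : Rn n × Rn n → ℝ} (hf : Measurable f) (r : ℝ≥0∞) :
    eLpNorm (fun z : Rn n × Rn n => f (aff 0 s z.1, aff w s z.2)) r
      ((volume.restrict (aff 0 s ⁻¹' S')).prod (volume.restrict (aff w s ⁻¹' S))) =
      sf n r s * sf n r s * eLpNorm f r ((volume.restrict S').prod (volume.restrict S)) := by
  have := eLpNorm_map_measure (p := r) (μ := (volume.restrict (aff 0 s ⁻¹' S')).prod (volume.restrict (aff w s ⁻¹' S)))
    (f := Prod.map (aff 0 s) (aff w s)) (g := f)
    hf.aestronglyMeasurable ((measurable_aff 0 s).prodMap (measurable_aff w s)).aemeasurable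
  rw [← Measure.map_prod_map _ _ (measurable_aff 0 s) (measurable_aff w s), map_aff_restrict w hs hS,
    map_aff_restrict 0 hs hS', Measure.prod_smul_left, Measure.prod_smul_right,
    eLpNorm_smul_measure_of_ne_zero (by simp; positivity), eLpNorm_smul_measure_of_ne_zero (by simp; positivity),
    sf_eq n r hs, smul_eq_mul, smul_eq_mul, ← mul_assoc] at this
  exact this.symm

lemma totalDegree_aeval_le' {n : ℕ} (f : Fin n → MvPolynomial (Fin n) ℝ) (hf : ∀ i, (f i).totalDegree ≤ 1)
    (P : MvPolynomial (Fin n) ℝ) : (MvPolynomial.aeval f P).totalDegree ≤ P.totalDegree := by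
  rw [MvPolynomial.aeval_def, MvPolynomial.eval₂_eq']
  apply MvPolynomial.totalDegree_finsetSum_le
  intro d hd
  have h1 : (algebraMap ℝ (MvPolynomial (Fin n) ℝ) (P.coeff d)).totalDegree = 0 := by
    rw [MvPolynomial.algebraMap_eq]; simp
  refine (MvPolynomial.totalDegree_mul _ _).trans ?_
  rw [h1, zero_add]
  refine (MvPolynomial.totalDegree_finsetProd _ _).trans ?_
  refine le_trans ?_ (MvPolynomial.le_totalDegree hd)
  rw [Finsupp.sum_fintype _ _ (by simp)]
  refine Finset.sum_le_sum fun i _ => ?_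
  refine (MvPolynomial.totalDegree_pow _ _).trans ?_
  have := hf i
  nlinarith

lemma poly_aff {n : ℕ} (w : Rn n) (s : ℝ) (P : MvPolynomial (Fin n) ℝ) : ∃ P' : MvPolynomial (Fin n) ℝ,
    P'.totalDegree ≤ P.totalDegree ∧ ∀ x, MvPolynomial.eval x P' = MvPolynomial.eval (aff w s x) P := by
  refine ⟨MvPolynomial.aeval (fun i => MvPolynomial.C (w i) + MvPolynomial.C s * MvPolynomial.X i) P,
    totalDegree_aeval_le' _ ?_ P, ?_⟩
  · intro i
    refine (MvPolynomial.totalDegree_add _ _).trans (max_le (by simp) ?_)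
    refine (MvPolynomial.totalDegree_mul _ _).trans (by simp)
  · intro x
    have : ∀ Q : MvPolynomial (Fin n) ℝ, MvPolynomial.eval x Q = MvPolynomial.aeval x Q := fun Q => by simp
    rw [this, ← AlgHom.comp_apply, MvPolynomial.comp_aeval]
    have h2 : ∀ y, MvPolynomial.eval y P = MvPolynomial.aeval y P := fun Q => by simp
    rw [h2]
    congr 2
    ext i; simp [aff]

lemma aff_inv {n : ℕ} (w : Rn n) {s : ℝ} (hs : 0 < s) (x : Rn n) : aff (-(s⁻¹ • w)) s⁻¹ (aff w s x) = x := by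
  simp [aff, smul_add, smul_smul, hs.ne']

lemma bestApprox_aff {n l : ℕ} (w : Rn n) {s : ℝ} (hs : 0 < s) {S : Set (Rn n)} (hS : MeasurableSet S) {φ : Rn n → ℝ}
    (hφ : Measurable φ) (r : ℝ≥0∞) :
    bestApproxE n l r (fun x => φ (aff w s x)) (aff w s ⁻¹' S) = sf n r s * bestApproxE n l r φ S := by
  have key : ∀ P : MvPolynomial (Fin n) ℝ, eLpNorm (fun x => φ (aff w s x) - MvPolynomial.eval (aff w s x) P) r
      (volume.restrict (aff w s ⁻¹' S)) = sf n r s * eLpNorm (fun x => φ x - MvPolynomial.eval x P) r (volume.restrict S) :=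
    fun P => eLp_aff w hs hS (hφ.sub (measurable_eval P)) r
  unfold bestApproxE
  rw [ENNReal.mul_iInf_of_ne (sf_ne_zero n r hs) (sf_ne_top n r hs)]
  apply le_antisymm
  · refine le_iInf fun P => ?_
    obtain ⟨P', h1, h2⟩ := poly_aff w s P.1
    refine (iInf_le _ ⟨P', h1.trans_lt P.2⟩).trans ?_
    simp only [h2]
    exact (key P.1).le
  · refine le_iInf fun P => ?_
    obtain ⟨P', h1, h2⟩ := poly_aff (-(s⁻¹ • w)) s⁻¹ P.1
    refine (iInf_le _ ⟨P', h1.trans_lt P.2⟩).trans ?_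
    simp only
    rw [← key]
    simp only [h2, aff_inv w hs]
    exact le_rfl

lemma diffl_aff {n l : ℕ} (w : Rn n) (s : ℝ) (h : Rn n) (φ : Rn n → ℝ) (x : Rn n) :
    diffl l h (fun y => φ (aff w s y)) x = diffl l (aff 0 s h) φ (aff w s x) := by
  unfold diffl
  apply Finset.sum_congr rfl
  intro j _
  have : aff w s (x + (j:ℝ) • h) = aff w s x + (j:ℝ) • aff 0 s h := by
    simp only [aff]; module
  simp only [this]

lemma difflOn_aff {n l : ℕ} (w : Rn n) (s : ℝ) (h : Rn n) (φ : Rn n → ℝ) (x : Rn n) (Ω : Set (Rn n)) :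
    difflOn l (aff w s ⁻¹' Ω) h (fun y => φ (aff w s y)) x = difflOn l Ω (aff 0 s h) φ (aff w s x) := by
  unfold difflOn
  rw [diffl_aff]
  congr 1
  apply propext
  apply forall₂_congr
  intro τ _
  rw [Set.mem_preimage]
  have : aff w s (x + (τ * l) • h) = aff w s x + (τ * l) • aff 0 s h := by
    simp only [aff]; module
  rw [this]

/-! ### Local estimates -/

lemma preim_uQ {n : ℕ} (z : Rn n) {s : ℝ} (hs : 0 < s) :
    aff (fun i => z i - s / 2) s ⁻¹' openCube z (s / 2) = uQ n := by
  ext x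
  simp only [Set.mem_preimage, openCube, uQ, Set.mem_ofPred_eq, aff, Pi.add_apply, Pi.smul_apply, smul_eq_mul, abs_lt]
  refine forall_congr' fun i => ?_
  constructor
  · rintro ⟨h1, h2⟩
    constructor
    · by_contra h; push Not at h; nlinarith
    · by_contra h; push Not at h; nlinarith
  · rintro ⟨h1, h2⟩
    constructor <;> nlinarith

lemma preim_cube0 {n : ℕ} {s : ℝ} (hs : 0 < s) (ε : ℝ) :
    aff 0 s ⁻¹' openCube (0 : Rn n) (s * ε) = openCube 0 ε := by
  ext x
  simp only [Set.mem_preimage, openCube, Set.mem_ofPred_eq, aff, Pi.add_apply, Pi.smul_apply, smul_eq_mul, Pi.zero_apply,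
    zero_add, sub_zero, abs_mul, abs_of_pos hs]
  exact forall_congr' fun i => mul_lt_mul_iff_right₀ hs

lemma whit3 {n l : ℕ} {r : ℝ≥0∞} {ε : ℝ} (hl : 0 < l) (hr : r ≠ 0) (hε : 0 < ε) : ∃ C : ℝ≥0∞, C ≠ ∞ ∧
    ∀ (z : Rn n) (s : ℝ), 0 < s → ∀ φ : Rn n → ℝ, Measurable φ → eLpNorm φ r (volume.restrict (openCube z (s / 2))) ≠ ∞ →
      bestApproxE n l r φ (openCube z (s / 2)) ≤ C * (sf n r s *
        eLpNorm (fun hx : Rn n × Rn n => difflOn l (openCube z (s / 2)) hx.1 φ hx.2) r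
      ((volume.restrict (openCube (0 : Rn n) (s * ε))).prod (volume.restrict (openCube z (s / 2))))) := by
  obtain ⟨C, hC, H⟩ := whit2 (n := n) hl hr hε
  refine ⟨C, hC, fun z s hs φ hφ hfin => ?_⟩
  set w : Rn n := fun i => z i - s / 2 with hw
  have hm := meas_openCube z (s / 2)
  have e1 := eLp_aff w hs hm hφ r
  have e2 := bestApprox_aff (l := l) w hs hm hφ r
  have e3 := eLp_aff2 w hs hm (meas_openCube (0 : Rn n) (s * ε))
    (measurable_difflOn l (convex_openCube z (s / 2)) hm hφ) r
  simp only [← difflOn_aff w s _ φ] at e3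
  rw [hw, preim_uQ z hs, ← hw] at e1 e2 e3
  rw [preim_cube0 hs] at e3
  have h1 := H (fun x => φ (aff w s x)) (hφ.comp (measurable_aff w s))
    (by rw [e1]; exact ENNReal.mul_ne_top (sf_ne_top n r hs) hfin)
  rw [dlt, e2, e3] at h1
  apply (ENNReal.mul_le_mul_iff_right (sf_ne_zero n r hs) (sf_ne_top n r hs)).mp
  refine h1.trans (le_of_eq (by ring))

lemma sf_mul (n : ℕ) (r : ℝ≥0∞) {a b : ℝ} (ha : 0 < a) (hb : 0 < b) : sf n r (a * b) = sf n r a * sf n r b := by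
  unfold sf
  rw [ENNReal.ofReal_mul ha.le, ENNReal.mul_rpow_of_ne_top (by simp) (by simp)]

lemma sf_two (n : ℕ) (r : ℝ≥0∞) {s : ℝ} (hs : 0 < s) :
    ENNReal.ofReal s ^ (-(2 * (n : ℝ)) / r.toReal) = sf n r s * sf n r s := by
  unfold sf
  rw [← ENNReal.rpow_add _ _ (by simpa using hs) (by simp)]
  congr 1; ring

lemma sf_inv (n : ℕ) (r : ℝ≥0∞) {s : ℝ} (hs : 0 < s) : (ENNReal.ofReal s ^ n) ^ (1 / r).toReal * sf n r s = 1 := by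
  unfold sf
  rw [← ENNReal.rpow_natCast, ← ENNReal.rpow_mul, ← ENNReal.rpow_add _ _ (by simpa using hs) (by simp)]
  have : (n:ℝ) * (1 / r).toReal + -(n:ℝ) / r.toReal = 0 := by simp [div_eq_mul_inv]
  rw [this, ENNReal.rpow_zero]

lemma sf_dyadic (n k : ℕ) (r : ℝ≥0∞) : (2 : ℝ≥0∞) ^ (((k * n : ℕ) : ℝ) / r.toReal) = sf n r ((2:ℝ) ^ (-(k:ℤ))) := by
  unfold sf
  have : ENNReal.ofReal ((2:ℝ) ^ (-(k:ℤ))) = (2:ℝ≥0∞) ^ (-(k:ℝ)) := by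
    rw [zpow_neg, zpow_natCast, ENNReal.ofReal_inv_of_pos (by positivity), ENNReal.ofReal_pow (by norm_num), ENNReal.rpow_neg,
      ENNReal.rpow_natCast]
    simp
  rw [this, ← ENNReal.rpow_mul]
  congr 1; push_cast; ring

lemma dilated_eq (n k : ℕ) (m : Fin n → ℤ) (c : ℝ) :
    dilatedCube n k m c = openCube (dyadicCenter n k m) (c * (2:ℝ) ^ (-(k:ℤ)) / 2) := by
  unfold dilatedCube
  congr 1
  rw [zpow_neg, zpow_natCast, pow_succ]
  field_simp

lemma fin_cube {n : ℕ} {r : ℝ≥0∞} {φ : Rn n → ℝ} (hφ : MemLrLoc n r φ) (z : Rn n) (s : ℝ) :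
    eLpNorm φ r (volume.restrict (openCube z s)) ≠ ∞ := by
  have hK : IsCompact (Set.univ.pi fun i => Set.Icc (z i - s) (z i + s)) := isCompact_univ_pi fun _ => isCompact_Icc
  refine ne_top_of_le_ne_top (hφ.2 _ hK).ne (eLp_mono_set ?_ φ r)
  rw [openCube_eq_pi]
  exact Set.pi_mono fun i _ => Set.Ioo_subset_Icc_self

lemma loc3 {n l : ℕ} {r : ℝ≥0∞} {c : ℝ} (hl : 0 < l) (hr : r ≠ 0) (hc : 0 < c) : ∃ C : ℝ≥0∞, C ≠ ∞ ∧
    ∀ φ, MemLrLoc n r φ → ∀ (k : ℕ) (m : Fin n → ℤ),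
      (2 : ℝ≥0∞) ^ (((k * n : ℕ) : ℝ) / r.toReal) * bestApproxE n l r φ (dilatedCube n k m c) ≤
        C * deltaEOn n l r (c * (2 : ℝ) ^ (-(k : ℤ))) (dilatedCube n k m c) (dilatedCube n k m c) φ := by
  obtain ⟨C, hC, H⟩ := whit3 (n := n) hl hr one_pos
  refine ⟨sf n r c⁻¹ * C, ENNReal.mul_ne_top (sf_ne_top n r (by positivity)) hC, fun φ hφ k m => ?_⟩
  have hs : 0 < c * (2:ℝ) ^ (-(k:ℤ)) := by positivity
  have h1 := H (dyadicCenter n k m) _ hs φ hφ.1 (fin_cube hφ _ _)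
  rw [mul_one, ← dilated_eq] at h1
  have e1 : sf n r ((2:ℝ) ^ (-(k:ℤ))) = sf n r c⁻¹ * sf n r (c * (2:ℝ) ^ (-(k:ℤ))) := by
    rw [← sf_mul n r (by positivity) hs]; congr 1; field_simp
  rw [sf_dyadic, e1, deltaEOn, sf_two n r hs]
  refine (mul_le_mul_right h1 _).trans (le_of_eq (by ring))

lemma loc4 {n l : ℕ} {r : ℝ≥0∞} {c : ℝ} (hr : r ≠ 0) (hc : 0 < c) : ∃ C : ℝ≥0∞, C ≠ ∞ ∧
    ∀ φ : Rn n → ℝ, Measurable φ → ∀ (k : ℕ) (m : Fin n → ℤ),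
      deltaEOn n l r (c * (2 : ℝ) ^ (-(k : ℤ))) (dilatedCube n k m c) (dilatedCube n k m c) φ ≤
      C * ((2 : ℝ≥0∞) ^ (((k * n : ℕ) : ℝ) / r.toReal) * modulusE n l r φ (dilatedCube n k m c)) := by
  refine ⟨sf n r (1/2) * sf n r c, ENNReal.mul_ne_top (sf_ne_top n r (by positivity)) (sf_ne_top n r (by positivity)), fun φ hφ k m => ?_⟩
  set s := c * (2:ℝ) ^ (-(k:ℤ)) with hsdef
  have hs : 0 < s := by positivity
  set Q := dilatedCube n k m c with hQ
  have hQm : MeasurableSet Q := meas_openCube _ _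
  have hQc : Convex ℝ Q := convex_openCube _ _
  have h1 : eLpNorm (fun hx : Rn n × Rn n => difflOn l Q hx.1 φ hx.2) r
      ((volume.restrict (openCube (0 : Rn n) s)).prod (volume.restrict Q)) ≤
      volume (openCube (0 : Rn n) s) ^ (1 / r).toReal * modulusE n l r φ Q := by
    have := eLp_prod_le (ν := volume.restrict (openCube (0 : Rn n) s)) (μ := volume.restrict Q) (r := r)
      (measurable_difflOn l hQc hQm hφ) hr (R := modulusE n l r φ Q)
      (Filter.Eventually.of_forall fun h => ?_)
    · rw [Measure.restrict_apply_univ] at this; exact this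
    · exact (eLpNorm_mono_measure _ Measure.restrict_le_self).trans (le_iSup (fun h => eLpNorm (difflOn l Q h φ) r volume) h)
  rw [deltaEOn, sf_two n r hs, sf_dyadic]
  have e1 : sf n r s = sf n r (1/2) * sf n r (2 * s) := by
    rw [← sf_mul n r (by positivity) (by positivity)]; congr 1; ring
  have e2 : sf n r s = sf n r c * sf n r ((2:ℝ) ^ (-(k:ℤ))) := sf_mul n r hc (by positivity)
  rw [vol_openCube] at h1
  calc sf n r s * sf n r s * _ ≤ sf n r s * sf n r s * _ := mul_le_mul_right h1 _
    _ = sf n r s * sf n r (1/2) * ((ENNReal.ofReal (2 * s) ^ n) ^ (1 / r).toReal * sf n r (2 * s)) * modulusE n l r φ Q := by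
        nth_rewrite 2 [e1]; ring
    _ = _ := by rw [sf_inv n r (by positivity), e2]; ring

lemma diffl_bound {n : ℕ} (l : ℕ) (r : ℝ≥0∞) : ∃ C : ℝ≥0∞, C ≠ ∞ ∧ ∀ (g : Rn n → ℝ), Measurable g → ∀ (h : Rn n) (D Q : Set (Rn n)),
    MeasurableSet D → MeasurableSet Q → (∀ x ∈ D, ∀ j ≤ l, x + (j:ℝ) • h ∈ Q) →
    eLpNorm (diffl l h g) r (volume.restrict D) ≤ C * eLpNorm g r (volume.restrict Q) := by
  refine ⟨QC r ^ (Finset.range (l+1)).card * ∑ j ∈ Finset.range (l+1), ‖(l.choose j : ℝ) * (-1 : ℝ) ^ (l + j)‖ₑ, ?_, ?_⟩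
  · exact ENNReal.mul_ne_top (QC_pow_ne_top r _) (ENNReal.sum_ne_top.mpr fun _ _ => by simp)
  intro g hg h D Q hD hQ hDQ
  have hm : ∀ j : ℕ, Measurable fun x : Rn n => g (x + (j:ℝ) • h) := fun j => hg.comp (measurable_id.add_const _)
  refine (qsum (Finset.range (l+1)) (fun j x => ((l.choose j : ℝ) * (-1 : ℝ) ^ (l + j)) * g (x + (j : ℝ) • h))
    (fun j _ => ((hm j).const_mul _).aestronglyMeasurable) r).trans ?_
  rw [mul_assoc, Finset.sum_mul]
  gcongr with j hj
  rw [enorm_mul_eLp]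
  gcongr
  exact eLp_comp (measurePreserving_add_right volume ((j:ℝ) • h)) hD hQ
    (fun x hx => hDQ x hx j (Nat.lt_succ_iff.mp (Finset.mem_range.mp hj))) hg.aestronglyMeasurable (fun x _ => le_rfl) r

lemma loc5 {n l : ℕ} {r : ℝ≥0∞} (hl : 0 < l) : ∃ C : ℝ≥0∞, C ≠ ∞ ∧
    ∀ φ : Rn n → ℝ, Measurable φ → ∀ (z : Rn n) (s : ℝ),
      modulusE n l r φ (openCube z s) ≤ C * bestApproxE n l r φ (openCube z s) := by
  obtain ⟨C, hC, H⟩ := diffl_bound (n := n) l r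
  refine ⟨C, hC, fun φ hφ z s => ?_⟩
  refine iSup_le fun h => ?_
  have hQm := meas_openCube z s
  haveI : Nonempty {P : MvPolynomial (Fin n) ℝ // P.totalDegree < l} := ⟨⟨0, by simpa using hl⟩⟩
  rw [bestApproxE, ENNReal.mul_iInf (by simp [hC])]
  refine le_iInf fun P => ?_
  set Q := openCube z s with hQ
  set D : Set (Rn n) := {x | ∀ τ ∈ Set.Icc (0 : ℝ) 1, x + (τ * l) • h ∈ Q} with hD
  have hDc : D = {x | x ∈ Q ∧ x + (l:ℝ) • h ∈ Q} := by
    ext x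
    simp only [hD, Set.mem_ofPred_eq]
    constructor
    · intro hx; exact ⟨by simpa using hx 0 (by simp), by simpa using hx 1 (by simp)⟩
    · rintro ⟨h1, h2⟩ τ hτ
      have := (convex_openCube z s) h1 h2 (sub_nonneg.mpr hτ.2) hτ.1 (by ring)
      convert this using 1
      module
  have hDm : MeasurableSet D := by
    rw [hDc]; exact hQm.inter ((measurable_id.add_const ((l:ℝ) • h)) hQm)
  have h1 := H (fun x => φ x - MvPolynomial.eval x P.1) (hφ.sub (measurable_eval _)) h D Q hDm hQm ?_
  · refine le_trans (le_of_eq ?_) h1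
    rw [← eLpNorm_indicator_eq_eLpNorm_restrict hDm]
    congr 1
    ext x
    rw [← difflOn_sub_poly Q h φ P.1 P.2 x]
    unfold difflOn
    by_cases hx : x ∈ D
    · rw [Set.indicator_of_mem hx, if_pos (show ∀ τ ∈ Set.Icc (0 : ℝ) 1, x + (τ * l) • h ∈ Q from hx)]
    · rw [Set.indicator_of_notMem hx, if_neg (show ¬ ∀ τ ∈ Set.Icc (0 : ℝ) 1, x + (τ * l) • h ∈ Q from hx)]
  · intro x hx j hj
    by_cases hl0 : l = 0
    · have : j = 0 := by omega
      subst this; rw [hDc] at hx; simpa using hx.1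
    have hlp : (0:ℝ) < l := by exact_mod_cast Nat.pos_of_ne_zero hl0
    have h3 := hx ((j:ℝ) / l) ⟨by positivity, by rw [div_le_one hlp]; exact_mod_cast hj⟩
    rwa [div_mul_cancel₀ _ hlp.ne'] at h3

/-- Integer box `[-R,R]^n`. -/
def FR (n R : ℕ) : Finset (Fin n → ℤ) := Fintype.piFinset fun _ => Finset.Icc (-(R:ℤ)) R

lemma mem_FR {n R : ℕ} {j : Fin n → ℤ} : j ∈ FR n R ↔ ∀ i, |j i| ≤ R := by
  simp [FR, abs_le]

lemma ae_dyadic (n k : ℕ) : ∀ᵐ x : Rn n, x ∈ dyadicCube n k (fun i => ⌊x i * 2 ^ k⌋) := by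
  have h : ∀ᵐ x : Rn n, ∀ i, ∀ z : ℤ, x i ≠ (z:ℝ) / 2 ^ k := by
    rw [ae_all_iff]; intro i
    rw [ae_all_iff]; intro z
    have := Measure.pi_hyperplane (fun _ : Fin n => (volume : Measure ℝ)) i ((z:ℝ) / 2 ^ k)
    rw [← volume_pi] at this
    rw [ae_iff]; simpa using this
  filter_upwards [h] with x hx i
  have h2 : (0:ℝ) < 2 ^ k := by positivity
  have h3 := Int.floor_le (x i * 2 ^ k)
  have h4 := Int.lt_floor_add_one (x i * 2 ^ k)
  refine ⟨lt_of_le_of_ne ?_ (hx i _).symm, ?_⟩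
  · rwa [div_le_iff₀ h2]
  · rwa [lt_div_iff₀ h2]

lemma dil_floor {n k : ℕ} {m : Fin n → ℤ} {c : ℝ} {x : Rn n} (hx : x ∈ dilatedCube n k m c) (i : Fin n) :
    |⌊x i * 2 ^ k⌋ - m i| ≤ ((⌈c⌉₊ + 2 : ℕ) : ℤ) := by
  have h2 : (0:ℝ) < 2 ^ k := by positivity
  have h1 : |x i - ((m i : ℝ) + 1 / 2) / 2 ^ k| < c / 2 ^ (k + 1) := hx i
  have h1' : |x i * 2 ^ k - ((m i : ℝ) + 1 / 2)| < c / 2 := by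
    have : x i * 2 ^ k - ((m i : ℝ) + 1 / 2) = (x i - ((m i : ℝ) + 1 / 2) / 2 ^ k) * 2 ^ k := by field_simp
    rw [this, abs_mul, abs_of_pos h2]
    calc _ < c / 2 ^ (k + 1) * 2 ^ k := by gcongr
      _ = c / 2 := by rw [pow_succ]; field_simp
  have h3 := Int.floor_le (x i * 2 ^ k)
  have h4 := Int.lt_floor_add_one (x i * 2 ^ k)
  have h5 := Nat.le_ceil c
  have h6 := abs_lt.mp h1'
  have h7 : 0 < c := by linarith
  have h8 : |((⌊x i * 2 ^ k⌋ - m i : ℤ):ℝ)| ≤ ((⌈c⌉₊ + 2 : ℕ) : ℝ) := by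
    push_cast
    rw [abs_le]; constructor <;> linarith
  exact_mod_cast h8

lemma dil_cover (n k : ℕ) (m : Fin n → ℤ) (c : ℝ) : ∀ᵐ x ∂(volume : Measure (Rn n)), x ∈ dilatedCube n k m c →
    ∃ j ∈ FR n (⌈c⌉₊ + 2), x ∈ dyadicCube n k (m + j) := by
  filter_upwards [ae_dyadic n k] with x hx hxd
  refine ⟨fun i => ⌊x i * 2 ^ k⌋ - m i, mem_FR.mpr fun i => dil_floor hxd i, ?_⟩
  convert hx using 1
  congr 1; ext i; simp

lemma dyadic_sub_dil (n k : ℕ) (m : Fin n → ℤ) {c : ℝ} (hc : 1 ≤ c) : dyadicCube n k m ⊆ dilatedCube n k m c := by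
  intro x hx i
  have h2 : (0:ℝ) < 2 ^ k := by positivity
  obtain ⟨h3, h4⟩ := hx i
  rw [div_lt_iff₀ h2] at h3
  rw [lt_div_iff₀ h2] at h4
  have : x i - dyadicCenter n k m i = (x i * 2 ^ k - ((m i : ℝ) + 1 / 2)) / 2 ^ k := by
    unfold dyadicCenter; field_simp
  rw [this, abs_div, abs_of_pos h2, pow_succ, div_lt_div_iff₀ h2 (by positivity)]
  have h5 : |x i * 2 ^ k - ((m i : ℝ) + 1 / 2)| < 1 / 2 := by rw [abs_lt]; constructor <;> linarith
  nlinarith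

lemma dyadic_sub_cube {n k : ℕ} {m : Fin n → ℤ} {x : Rn n} (hx : x ∈ dyadicCube n k m) :
    dyadicCube n k m ⊆ openCube x ((2:ℝ) ^ (-(k:ℤ))) := by
  intro y hy i
  obtain ⟨h3, h4⟩ := hx i
  obtain ⟨h5, h6⟩ := hy i
  have : ((m i : ℝ) + 1) / 2 ^ k = (m i : ℝ) / 2 ^ k + (2:ℝ) ^ (-(k:ℤ)) := by
    rw [zpow_neg, zpow_natCast, add_div, one_div]
  rw [abs_lt]; constructor <;> linarith

lemma cube_sub_dil {n k : ℕ} {m : Fin n → ℤ} {x : Rn n} (hx : x ∈ dyadicCube n k m) {lam : ℝ} :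
    openCube x (lam * (2:ℝ) ^ (-(k:ℤ))) ⊆ dilatedCube n k m (1 + 2 * lam) := by
  intro y hy
  rw [dilated_eq]
  intro i
  have h1 := dyadic_sub_dil n k m le_rfl hx
  rw [dilated_eq] at h1
  have h2 := h1 i
  have h3 := hy i
  have := abs_sub_le (y i) (x i) (dyadicCenter n k m i)
  linarith

lemma L1loc {n l : ℕ} {r : ℝ≥0∞} {φ : Rn n → ℝ} {s : ℝ} (hs : 0 < s) {Q Q' : Set (Rn n)} (h : Q ⊆ Q') :
    deltaE n l r s Q φ ≤ (sf n r (1/2) * sf n r (1/2)) * deltaE n l r (2 * s) Q' φ := by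
  unfold deltaE
  rw [sf_two n r hs, sf_two n r (by positivity : 0 < 2 * s)]
  have e1 : sf n r s = sf n r (1/2) * sf n r (2 * s) := by
    rw [← sf_mul n r (by positivity) (by positivity)]; congr 1; ring
  rw [e1]
  have : eLpNorm (fun hx : Rn n × Rn n => diffl l hx.1 φ hx.2) r
      ((volume.restrict (openCube (0 : Rn n) s)).prod (volume.restrict Q)) ≤ eLpNorm (fun hx : Rn n × Rn n => diffl l hx.1 φ hx.2) r
      ((volume.restrict (openCube (0 : Rn n) (2*s))).prod (volume.restrict Q')) := by
    refine eLpNorm_mono_measure _ (Measure.prod_mono (Measure.restrict_mono ?_ le_rfl) (Measure.restrict_mono h le_rfl))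
    intro x hx i
    have := hx i
    linarith
  refine (mul_le_mul_right this _).trans (le_of_eq (by ring))

lemma L2loc {n l : ℕ} {r : ℝ≥0∞} {c : ℝ} (hl : 0 < l) (hr : r ≠ 0) (hc : 0 < c) : ∃ C : ℝ≥0∞, C ≠ ∞ ∧
    ∀ φ, MemLrLoc n r φ → ∀ (k : ℕ) (m : Fin n → ℤ),
      (2 : ℝ≥0∞) ^ (((k * n : ℕ) : ℝ) / r.toReal) * bestApproxE n l r φ (dilatedCube n k m c) ≤
        C * ∑ j ∈ FR n (⌈c⌉₊ + 2), deltaE n l r ((2 : ℝ) ^ (-(k : ℤ))) (dyadicCube n k (m + j)) φ := by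
  obtain ⟨C, hC, H⟩ := whit3 (n := n) (ε := c⁻¹) hl hr (by positivity)
  refine ⟨C * sf n r c * QC r ^ (FR n (⌈c⌉₊ + 2)).card, ENNReal.mul_ne_top (ENNReal.mul_ne_top hC (sf_ne_top n r hc)) (QC_pow_ne_top r _), fun φ hφ k m => ?_⟩
  set s := (2:ℝ) ^ (-(k:ℤ)) with hsd
  have hs : 0 < s := by positivity
  have h1 := H (dyadicCenter n k m) (c * s) (by positivity) φ hφ.1 (fin_cube hφ _ _)
  rw [← dilated_eq] at h1
  have e0 : c * s * c⁻¹ = s := by field_simp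
  rw [e0, sf_mul n r hc hs] at h1
  set Q := dilatedCube n k m c with hQ
  have hQm : MeasurableSet Q := meas_openCube _ _
  have h2 : eLpNorm (fun hx : Rn n × Rn n => difflOn l Q hx.1 φ hx.2) r ((volume.restrict (openCube 0 s)).prod (volume.restrict Q)) ≤
      QC r ^ (FR n (⌈c⌉₊ + 2)).card * ∑ j ∈ FR n (⌈c⌉₊ + 2), eLpNorm (fun hx : Rn n × Rn n => diffl l hx.1 φ hx.2) r
      ((volume.restrict (openCube (0 : Rn n) s)).prod (volume.restrict (dyadicCube n k (m + j)))) := by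
    refine (eLpNorm_mono (g := fun hx : Rn n × Rn n => diffl l hx.1 φ hx.2) ?_).trans ?_
    · intro z
      unfold difflOn
      split_ifs
      · exact le_rfl
      · simp
    · have h3 := eLp_cover (μ := (volume.restrict (openCube (0 : Rn n) s)).prod volume) (FR n (⌈c⌉₊ + 2)) (Set.univ ×ˢ Q)
        (fun j => Set.univ ×ˢ dyadicCube n k (m + j)) (fun j _ => MeasurableSet.univ.prod (meas_dyadicCube n k _)) ?_
        (measurable_diffl l hφ.1).aestronglyMeasurable r
      · simpa only [← Measure.prod_restrict, Measure.restrict_univ] using h3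
      · rw [ae_restrict_iff' (MeasurableSet.univ.prod hQm)]
        have := (Measure.quasiMeasurePreserving_snd (μ := volume.restrict (openCube (0 : Rn n) s)) (ν := (volume : Measure (Rn n)))).ae (dil_cover n k m c)
        filter_upwards [this] with z hz hzQ
        obtain ⟨j, hj, hj'⟩ := hz hzQ.2
        exact ⟨j, hj, ⟨trivial, hj'⟩⟩
  rw [sf_dyadic]
  unfold deltaE
  rw [sf_two n r hs, ← Finset.mul_sum]
  calc _ ≤ _ := mul_le_mul_right (h1.trans (mul_le_mul_right (mul_le_mul_right h2 _) _)) _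
    _ = _ := by ring

lemma L6loc {n l : ℕ} {r : ℝ≥0∞} (hl : 0 < l) (hr : r ≠ 0) : ∃ C : ℝ≥0∞, C ≠ ∞ ∧
    ∀ φ : Rn n → ℝ, Measurable φ → ∀ (k : ℕ) (m : Fin n → ℤ), ∀ x ∈ dyadicCube n k m,
      deltaE n l r (2 * (2 : ℝ) ^ (-(k : ℤ))) (openCube x ((2 : ℝ) ^ (-(k : ℤ)))) φ ≤
      C * ((2 : ℝ≥0∞) ^ (((k * n : ℕ) : ℝ) / r.toReal) * bestApproxE n l r φ (dilatedCube n k m (3 + 4 * l))) := by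
  obtain ⟨C, hC, H⟩ := diffl_bound (n := n) l r
  have hC' : sf n r (1/2) * sf n r 2 * C ≠ ∞ := ENNReal.mul_ne_top (ENNReal.mul_ne_top (sf_ne_top n r (by positivity)) (sf_ne_top n r (by positivity))) hC
  refine ⟨_, hC', fun φ hφ k m x hx => ?_⟩
  set s := (2:ℝ) ^ (-(k:ℤ)) with hsd
  have hs : 0 < s := by positivity
  rw [sf_dyadic, ← mul_assoc]
  haveI : Nonempty {P : MvPolynomial (Fin n) ℝ // P.totalDegree < l} := ⟨⟨0, by simpa using hl⟩⟩
  rw [bestApproxE, ENNReal.mul_iInf (fun h => absurd h (ENNReal.mul_ne_top hC' (sf_ne_top n r hs)))]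
  refine le_iInf fun P => ?_
  set Q := dilatedCube n k m (3 + 4 * l) with hQ
  have hQm : MeasurableSet Q := meas_openCube _ _
  have hg : Measurable fun x => φ x - MvPolynomial.eval x P.1 := hφ.sub (measurable_eval _)
  have h1 : eLpNorm (fun hx : Rn n × Rn n => diffl l hx.1 φ hx.2) r
      ((volume.restrict (openCube (0 : Rn n) (2*s))).prod (volume.restrict (openCube x s))) ≤
      volume (openCube (0 : Rn n) (2*s)) ^ (1 / r).toReal * (C * eLpNorm (fun x => φ x - MvPolynomial.eval x P.1) r (volume.restrict Q)) := by
    have := eLp_prod_le (ν := volume.restrict (openCube (0 : Rn n) (2*s))) (μ := volume.restrict (openCube x s)) (r := r)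
      (measurable_diffl l hφ) hr (R := C * eLpNorm (fun x => φ x - MvPolynomial.eval x P.1) r (volume.restrict Q)) ?_
    · rw [Measure.restrict_apply_univ] at this; exact this
    · rw [ae_restrict_iff' (meas_openCube _ _)]
      refine Filter.Eventually.of_forall fun h hh => ?_
      have e : (fun y => diffl l h φ y) = diffl l h (fun x => φ x - MvPolynomial.eval x P.1) := by
        ext y; exact (diffl_sub_poly h φ P.1 P.2 y).symm
      show eLpNorm (fun y => diffl l h φ y) r _ ≤ _
      rw [e]
      refine H _ hg h _ Q (meas_openCube _ _) hQm fun y hy j hj => ?_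
      have h5 : y + (j:ℝ) • h ∈ openCube x ((1 + 2 * l) * s) := by
        intro i
        have h6 := hy i
        have h7 := hh i
        simp only [Pi.zero_apply, sub_zero] at h7
        have h8 : |(j:ℝ) * h i| ≤ l * (2 * s) := by
          rw [abs_mul, Nat.abs_cast]
          have : (j:ℝ) ≤ l := by exact_mod_cast hj
          gcongr
        have h9 := abs_add_le (y i - x i) (j * h i)
        have e3 : (y + (j:ℝ) • h) i - x i = (y i - x i) + j * h i := by simp; ring
        rw [e3]; linarith
      have := cube_sub_dil hx h5
      convert this using 2
      ring
  unfold deltaE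
  rw [sf_two n r (by positivity : 0 < 2 * s)]
  rw [vol_openCube] at h1
  have e1 : sf n r (2 * s) = sf n r (1/2) * sf n r (2 * (2 * s)) := by
    rw [← sf_mul n r (by positivity) (by positivity)]; congr 1; ring
  have e2 : sf n r (2 * s) = sf n r 2 * sf n r s := sf_mul n r (by positivity) (by positivity)
  calc sf n r (2*s) * sf n r (2*s) * _ ≤ sf n r (2*s) * sf n r (2*s) * _ := mul_le_mul_right h1 _
    _ = sf n r (2*s) * sf n r (1/2) * ((ENNReal.ofReal (2 * (2*s)) ^ n) ^ (1 / r).toReal * sf n r (2 * (2*s))) * C * eLpNorm (fun x => φ x - MvPolynomial.eval x P.1) r (volume.restrict Q) := by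
        nth_rewrite 2 [e1]; ring
    _ = _ := by rw [sf_inv n r (by positivity), e2]; ring

lemma pol_sub {n l : ℕ} (a b : (Fin n → Fin l) → ℝ) (x : Rn n) : pol (a - b) x = pol a x - pol b x := by
  simp [pol, sub_mul, Finset.sum_sub_distrib]

lemma chain_step {n l : ℕ} {r : ℝ≥0∞} {c : ℝ} (hr : r ≠ 0) (hc : 1 < c) (i j : Fin n → ℤ) (hij : ∀ t, |i t - j t| ≤ 1) :
    ∃ C : ℝ≥0∞, C ≠ ∞ ∧ ∀ φ : Rn n → ℝ, Measurable φ → ∀ a b : (Fin n → Fin l) → ℝ,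
      ‖a - b‖ₑ ≤ C * (eLpNorm (fun x => φ x - pol a x) r (volume.restrict (dilatedCube n 0 i c)) +
        eLpNorm (fun x => φ x - pol b x) r (volume.restrict (dilatedCube n 0 j c))) := by
  set z : Rn n := fun t => (dyadicCenter n 0 i t + dyadicCenter n 0 j t) / 2 with hz
  have hd : ∀ t, |dyadicCenter n 0 i t - dyadicCenter n 0 j t| ≤ 1 := by
    intro t
    have : |((i t - j t : ℤ) : ℝ)| ≤ 1 := by exact_mod_cast hij t
    push_cast at this
    simpa [dyadicCenter] using this
  have hsub1 : openCube z ((c - 1) / 2) ⊆ dilatedCube n 0 i c := by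
    intro y hy t
    have h1 := hy t
    have h2 := hd t
    simp only [hz] at h1
    rw [abs_lt] at h1 ⊢
    rw [abs_le] at h2
    constructor <;> · norm_num; linarith
  have hsub2 : openCube z ((c - 1) / 2) ⊆ dilatedCube n 0 j c := by
    intro y hy t
    have h1 := hy t
    have h2 := hd t
    simp only [hz] at h1
    rw [abs_lt] at h1 ⊢
    rw [abs_le] at h2
    constructor <;> · norm_num; linarith
  obtain ⟨κ, hκ, H⟩ := pol_lower (n := n) (l := l) hr (isOpen_openCube z ((c - 1) / 2))
    ⟨z, fun t => by simp; linarith⟩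
  refine ⟨κ * QC r, ENNReal.mul_ne_top hκ (QC_ne_top r), fun φ hφ a b => ?_⟩
  refine (H (a - b)).trans ?_
  rw [mul_assoc]
  gcongr
  have e : pol (a - b) = fun x => (φ x - pol b x) - (φ x - pol a x) := by
    ext x; rw [pol_sub]; ring
  rw [e]
  refine (qsub (hφ.sub (measurable_pol b)).aestronglyMeasurable (hφ.sub (measurable_pol a)).aestronglyMeasurable r).trans ?_
  rw [add_comm]
  gcongr
  · exact eLp_mono_set hsub1 _ r
  · exact eLp_mono_set hsub2 _ r

lemma FR_mono {n N M : ℕ} (h : N ≤ M) : FR n N ⊆ FR n M := fun j hj =>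
  mem_FR.mpr fun i => (mem_FR.mp hj i).trans (by exact_mod_cast h)

lemma chain_ind {n l : ℕ} {r : ℝ≥0∞} {c : ℝ} (hr : r ≠ 0) (hc : 1 < c) (N : ℕ) : ∀ j ∈ FR n N,
    ∃ C : ℝ≥0∞, C ≠ ∞ ∧ ∀ φ : Rn n → ℝ, Measurable φ → ∀ a : (Fin n → ℤ) → (Fin n → Fin l) → ℝ,
      ‖a j - a 0‖ₑ ≤ C * ∑ i ∈ FR n N, eLpNorm (fun x => φ x - pol (a i) x) r (volume.restrict (dilatedCube n 0 i c)) := by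
  induction N with
  | zero =>
    intro j hj
    have : j = 0 := by
      ext i
      simpa using mem_FR.mp hj i
    exact ⟨0, by simp, fun φ _ a => by simp [this]⟩
  | succ N ih =>
    intro j hj
    set j' : Fin n → ℤ := fun i => j i - (j i).sign with hj'
    have hjj : ∀ t, |j t - j' t| ≤ 1 := by
      intro t
      simp only [hj', sub_sub_cancel]
      rcases lt_trichotomy (j t) 0 with h | h | h
      · rw [Int.sign_eq_neg_one_of_neg h]; simp
      · rw [h]; simp
      · rw [Int.sign_eq_one_of_pos h]; simp
    have hj'F : j' ∈ FR n N := by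
      rw [mem_FR]
      intro t
      have h1 := mem_FR.mp hj t
      push_cast at h1
      simp only [hj']
      rcases lt_trichotomy (j t) 0 with h | h | h
      · rw [Int.sign_eq_neg_one_of_neg h]; rw [abs_le] at h1 ⊢; constructor <;> omega
      · rw [h]; simp
      · rw [Int.sign_eq_one_of_pos h]; rw [abs_le] at h1 ⊢; constructor <;> omega
    obtain ⟨C, hC, H⟩ := ih j' hj'F
    obtain ⟨C', hC', H'⟩ := chain_step (l := l) hr hc j j' hjj
    refine ⟨C' * 2 + C, ENNReal.add_ne_top.mpr ⟨ENNReal.mul_ne_top hC' (by simp), hC⟩, fun φ hφ a => ?_⟩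
    set e : (Fin n → ℤ) → ℝ≥0∞ := fun i => eLpNorm (fun x => φ x - pol (a i) x) r (volume.restrict (dilatedCube n 0 i c)) with he
    have h1 : ‖a j - a j'‖ₑ ≤ C' * (e j + e j') := H' φ hφ (a j) (a j')
    have h2 : ‖a j' - a 0‖ₑ ≤ C * ∑ i ∈ FR n N, e i := H φ hφ a
    have h3 : e j ≤ ∑ i ∈ FR n (N+1), e i := Finset.single_le_sum (f := e) (fun _ _ => zero_le) hj
    have h4 : e j' ≤ ∑ i ∈ FR n (N+1), e i := Finset.single_le_sum (f := e) (fun _ _ => zero_le) (FR_mono (Nat.le_succ N) hj'F)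
    have h5 : ∑ i ∈ FR n N, e i ≤ ∑ i ∈ FR n (N+1), e i := Finset.sum_le_sum_of_subset (FR_mono (Nat.le_succ N))
    calc ‖a j - a 0‖ₑ = ‖(a j - a j') + (a j' - a 0)‖ₑ := by congr 1; abel
      _ ≤ ‖a j - a j'‖ₑ + ‖a j' - a 0‖ₑ := enorm_add_le _ _
      _ ≤ C' * (∑ i ∈ FR n (N+1), e i + ∑ i ∈ FR n (N+1), e i) + C * ∑ i ∈ FR n (N+1), e i := by
        refine add_le_add (h1.trans ?_) (h2.trans ?_) <;> gcongr
      _ = _ := by ring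

lemma chain_unit {n l : ℕ} {r : ℝ≥0∞} {c : ℝ} (hl : 0 < l) (hr : r ≠ 0) (hc : 1 < c) (L : ℝ) :
    ∃ C : ℝ≥0∞, C ≠ ∞ ∧ ∀ φ : Rn n → ℝ, Measurable φ →
      bestApproxE n l r φ (dilatedCube n 0 0 L) ≤ C * ∑ j ∈ FR n (⌈L⌉₊ + 2), bestApproxE n l r φ (dilatedCube n 0 j c) := by
  set F := FR n (⌈L⌉₊ + 2) with hF
  have key : ∃ C : ℝ≥0∞, C ≠ ∞ ∧ ∀ φ : Rn n → ℝ, Measurable φ → ∀ P : (Fin n → ℤ) → {P : MvPolynomial (Fin n) ℝ // P.totalDegree < l},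
      bestApproxE n l r φ (dilatedCube n 0 0 L) ≤ C * ∑ j ∈ F,
        eLpNorm (fun x => φ x - MvPolynomial.eval x (P j).1) r (volume.restrict (dilatedCube n 0 j c)) := by
    have h1 : ∀ j ∈ F, ∃ C : ℝ≥0∞, C ≠ ∞ ∧ ∀ φ : Rn n → ℝ, Measurable φ → ∀ a : (Fin n → ℤ) → (Fin n → Fin l) → ℝ,
        eLpNorm (fun x => φ x - pol (a 0) x) r (volume.restrict (dilatedCube n 0 j c)) ≤ 
        C * ∑ i ∈ F, eLpNorm (fun x => φ x - pol (a i) x) r (volume.restrict (dilatedCube n 0 i c)) := by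
      intro j hj
      obtain ⟨C, hC, H⟩ := chain_ind (l := l) hr hc _ j hj
      set ρ : ℝ := ∑ i, |dyadicCenter n 0 j i| + c with hρ
      obtain ⟨K, hK, HK⟩ := pol_upper (n := n) (l := l) ρ
      refine ⟨QC r * (1 + volume (dilatedCube n 0 j c) ^ r.toReal⁻¹ * (ENNReal.ofReal K * C)), ?_, fun φ hφ a => ?_⟩
      · refine ENNReal.mul_ne_top (QC_ne_top r) (ENNReal.add_ne_top.mpr ⟨by simp, ENNReal.mul_ne_top ?_ (ENNReal.mul_ne_top (by simp) hC)⟩)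
        refine ENNReal.rpow_ne_top_of_nonneg (by simp) ?_
        rw [dilatedCube, vol_openCube]
        exact ENNReal.pow_ne_top ENNReal.ofReal_ne_top
      · set e : (Fin n → ℤ) → ℝ≥0∞ := fun i => eLpNorm (fun x => φ x - pol (a i) x) r (volume.restrict (dilatedCube n 0 i c)) with he
        have h2 : ‖a j - a 0‖ₑ ≤ C * ∑ i ∈ F, e i := H φ hφ a
        have h3 : e j ≤ ∑ i ∈ F, e i := Finset.single_le_sum (f := e) (fun _ _ => zero_le) hj
        have h4 : eLpNorm (pol (a j - a 0)) r (volume.restrict (dilatedCube n 0 j c)) ≤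
            volume (dilatedCube n 0 j c) ^ r.toReal⁻¹ * ENNReal.ofReal (K * ‖a j - a 0‖) := by
          refine eLp_le_bound (meas_openCube _ _) (fun x hx => HK _ x fun i => ?_) r
          have h5 := hx i
          have h6 : |dyadicCenter n 0 j i| ≤ ∑ i, |dyadicCenter n 0 j i| :=
            Finset.single_le_sum (f := fun i => |dyadicCenter n 0 j i|) (fun _ _ => abs_nonneg _) (Finset.mem_univ i)
          have h7 := abs_sub_abs_le_abs_sub (x i) (dyadicCenter n 0 j i)
          norm_num at h5
          linarith
        rw [ENNReal.ofReal_mul hK, ofReal_norm] at h4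
        have e1 : (fun x => φ x - pol (a 0) x) = fun x => (φ x - pol (a j) x) + pol (a j - a 0) x := by
          ext x; rw [pol_sub]; ring
        rw [e1]
        refine (qadd (hφ.sub (measurable_pol _)).aestronglyMeasurable (measurable_pol _).aestronglyMeasurable r).trans ?_
        rw [mul_assoc]
        gcongr
        rw [add_mul, one_mul]
        refine add_le_add h3 (h4.trans ?_)
        rw [mul_assoc, mul_assoc]
        gcongr
    choose! D hD HD using h1
    refine ⟨QC r ^ F.card * ∑ j ∈ F, D j, ENNReal.mul_ne_top (QC_pow_ne_top r _) (ENNReal.sum_ne_top.mpr hD), fun φ hφ P => ?_⟩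
    choose a ha using fun j => poly_repr (P j).1 (P j).2
    simp only [ha]
    have h2 : bestApproxE n l r φ (dilatedCube n 0 0 L) ≤ eLpNorm (fun x => φ x - MvPolynomial.eval x (P 0).1) r (volume.restrict (dilatedCube n 0 0 L)) := iInf_le _ (P 0)
    simp only [ha] at h2
    refine h2.trans ?_
    refine (eLp_cover F (dilatedCube n 0 0 L) (fun j => dilatedCube n 0 j c) (fun j _ => meas_openCube _ _) ?_
      (hφ.sub (measurable_pol _)).aestronglyMeasurable r).trans ?_
    · rw [ae_restrict_iff' (show MeasurableSet (dilatedCube n 0 0 L) from meas_openCube _ _)]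
      filter_upwards [dil_cover n 0 0 L] with x hx hxL
      obtain ⟨j, hj, hj'⟩ := hx hxL
      rw [zero_add] at hj'
      exact ⟨j, hj, dyadic_sub_dil n 0 j hc.le hj'⟩
    · rw [mul_assoc, Finset.sum_mul]
      gcongr with j hj
      exact HD j hj φ hφ a
  obtain ⟨C, hC, H⟩ := key
  refine ⟨C, hC, fun φ hφ => ?_⟩
  refine ENNReal.le_of_forall_pos_le_add fun ε hε hfin => ?_
  by_cases hC0 : C = 0
  · have := H φ hφ (fun _ => ⟨0, by simpa using hl⟩)
    rw [hC0, zero_mul] at this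
    exact this.trans zero_le
  have hfin' : ∑ j ∈ F, bestApproxE n l r φ (dilatedCube n 0 j c) ≠ ∞ := by
    intro h
    rw [h, ENNReal.mul_top hC0] at hfin
    exact lt_irrefl _ hfin
  -- small additive error
  set η : ℝ≥0∞ := ε / (C * F.card + 1) with hη
  have hη0 : η ≠ 0 := by
    rw [hη]
    exact (ENNReal.div_pos (by exact_mod_cast hε.ne') (ENNReal.add_ne_top.mpr ⟨ENNReal.mul_ne_top hC (by simp), by simp⟩)).ne'
  have hex : ∀ j, ∃ P : {P : MvPolynomial (Fin n) ℝ // P.totalDegree < l}, j ∈ F →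
      eLpNorm (fun x => φ x - MvPolynomial.eval x P.1) r (volume.restrict (dilatedCube n 0 j c)) ≤ bestApproxE n l r φ (dilatedCube n 0 j c) + η := by
    intro j
    by_cases hj : j ∈ F
    · have h1 : bestApproxE n l r φ (dilatedCube n 0 j c) < bestApproxE n l r φ (dilatedCube n 0 j c) + η :=
        ENNReal.lt_add_right (ENNReal.sum_ne_top.mp hfin' j hj) hη0
      obtain ⟨P, hP⟩ := iInf_lt_iff.mp h1
      exact ⟨P, fun _ => hP.le⟩
    · exact ⟨⟨0, by simpa using hl⟩, fun h => absurd h hj⟩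
  choose P hP using hex
  calc _ ≤ C * ∑ j ∈ F, (bestApproxE n l r φ (dilatedCube n 0 j c) + η) :=
        (H φ hφ P).trans (mul_le_mul_right (Finset.sum_le_sum hP) _)
    _ = C * ∑ j ∈ F, bestApproxE n l r φ (dilatedCube n 0 j c) + C * F.card * η := by
        rw [Finset.sum_add_distrib, mul_add]; simp; ring
    _ ≤ _ := by
        gcongr
        calc C * F.card * η ≤ (C * F.card + 1) * η := by gcongr; exact le_self_add
          _ ≤ ε := ENNReal.mul_div_le

lemma preim_dil {n k : ℕ} (m j : Fin n → ℤ) (c : ℝ) :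
    aff (fun i => (m i : ℝ) / 2 ^ k) ((2:ℝ) ^ (-(k:ℤ))) ⁻¹' dilatedCube n k (m + j) c = dilatedCube n 0 j c := by
  have h2 : (0:ℝ) < 2 ^ k := by positivity
  ext x
  simp only [Set.mem_preimage, dilatedCube, openCube, Set.mem_ofPred_eq]
  refine forall_congr' fun i => ?_
  have : aff (fun i => (m i : ℝ) / 2 ^ k) ((2:ℝ) ^ (-(k:ℤ))) x i - dyadicCenter n k (m + j) i = (x i - dyadicCenter n 0 j i) / 2 ^ k := by
    simp [aff, dyadicCenter]
    field_simp
    ring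
  rw [this, abs_div, abs_of_pos h2, pow_succ, div_lt_div_iff₀ h2 (by positivity)]
  norm_num
  rw [lt_div_iff₀ (by norm_num : (0:ℝ) < 2)]
  constructor
  · intro h
    have : |x i - dyadicCenter n 0 j i| * 2 * 2 ^ k < c * 2 ^ k := by linarith
    exact lt_of_mul_lt_mul_right this h2.le
  · intro h
    have := mul_lt_mul_of_pos_right h h2
    linarith

lemma chain {n l : ℕ} {r : ℝ≥0∞} {c : ℝ} (hl : 0 < l) (hr : r ≠ 0) (hc : 1 < c) (L : ℝ) :
    ∃ C : ℝ≥0∞, C ≠ ∞ ∧ ∀ φ : Rn n → ℝ, Measurable φ → ∀ (k : ℕ) (m : Fin n → ℤ),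
      (2 : ℝ≥0∞) ^ (((k * n : ℕ) : ℝ) / r.toReal) * bestApproxE n l r φ (dilatedCube n k m L) ≤
      C * ∑ j ∈ FR n (⌈L⌉₊ + 2), (2 : ℝ≥0∞) ^ (((k * n : ℕ) : ℝ) / r.toReal) * bestApproxE n l r φ (dilatedCube n k (m + j) c) := by
  obtain ⟨C, hC, H⟩ := chain_unit (n := n) hl hr hc L
  refine ⟨C, hC, fun φ hφ k m => ?_⟩
  have hs : (0:ℝ) < (2:ℝ) ^ (-(k:ℤ)) := by positivity
  have e : ∀ j d, sf n r ((2:ℝ) ^ (-(k:ℤ))) * bestApproxE n l r φ (dilatedCube n k (m + j) d) =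
      bestApproxE n l r (fun x => φ (aff (fun i => (m i : ℝ) / 2 ^ k) ((2:ℝ) ^ (-(k:ℤ))) x)) (dilatedCube n 0 j d) := by
    intro j d
    rw [← preim_dil (k := k) m j d, bestApprox_aff _ hs (show MeasurableSet (dilatedCube n k (m + j) d) from meas_openCube _ _) hφ]
  simp only [sf_dyadic, e]
  have e0 := e 0 L
  rw [add_zero] at e0
  rw [e0]
  exact H _ (hφ.comp (measurable_aff _ _))

lemma lqNorm_mono {ι : Type*} (q : ℝ≥0∞) {a b : ι → ℝ≥0∞} (h : ∀ i, a i ≤ b i) : lqNorm q a ≤ lqNorm q b := by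
  unfold lqNorm
  split_ifs
  · exact iSup_mono h
  · have : 0 ≤ q.toReal := ENNReal.toReal_nonneg
    refine ENNReal.rpow_le_rpow (ENNReal.tsum_le_tsum fun i => ENNReal.rpow_le_rpow (h i) this) (by positivity)

lemma lqNorm_const_mul {ι : Type*} {q : ℝ≥0∞} (hq : q ≠ 0) (C : ℝ≥0∞) (a : ι → ℝ≥0∞) :
    lqNorm q (fun i => C * a i) = C * lqNorm q a := by
  unfold lqNorm
  split_ifs with h
  · rw [ENNReal.mul_iSup]
  · have hp : 0 < q.toReal := ENNReal.toReal_pos hq h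
    simp only [ENNReal.mul_rpow_of_nonneg _ _ hp.le]
    rw [ENNReal.tsum_mul_left, ENNReal.mul_rpow_of_nonneg _ _ (by positivity), ← ENNReal.rpow_mul, mul_one_div_cancel hp.ne', ENNReal.rpow_one]

lemma lqNorm_fin {ι κ : Type*} {q : ℝ≥0∞} (hq : q ≠ 0) (F : Finset κ) (b : κ → ι → ℝ≥0∞) (X : ℝ≥0∞)
    (h : ∀ j ∈ F, lqNorm q (b j) ≤ X) :
    lqNorm q (fun i => ∑ j ∈ F, b j i) ≤ (F.card : ℝ≥0∞) * (F.card : ℝ≥0∞) ^ (1 / q.toReal) * X := by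
  unfold lqNorm at h ⊢
  split_ifs at h ⊢ with hq'
  · subst hq'
    simp only [ENNReal.toReal_top, div_zero, ENNReal.rpow_zero, mul_one]
    refine iSup_le fun i => ?_
    calc ∑ j ∈ F, b j i ≤ ∑ j ∈ F, X := Finset.sum_le_sum fun j hj => (le_iSup (b j) i).trans (h j hj)
      _ = _ := by simp
  · have hp : 0 < q.toReal := ENNReal.toReal_pos hq hq'
    set p := q.toReal
    have h1 : ∀ j ∈ F, ∑' i, b j i ^ p ≤ X ^ p := by
      intro j hj
      have := ENNReal.rpow_le_rpow (h j hj) hp.le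
      rwa [← ENNReal.rpow_mul, one_div_mul_cancel hp.ne', ENNReal.rpow_one] at this
    have h2 : ∀ i, (∑ j ∈ F, b j i) ^ p ≤ (F.card : ℝ≥0∞) ^ p * ∑ j ∈ F, b j i ^ p := by
      intro i
      by_cases hF : F.Nonempty
      · obtain ⟨j0, hj0, hmax⟩ := Finset.exists_max_image F (fun j => b j i) hF
        calc (∑ j ∈ F, b j i) ^ p ≤ (F.card * b j0 i) ^ p := by
              refine ENNReal.rpow_le_rpow ?_ hp.le
              calc _ ≤ ∑ j ∈ F, b j0 i := Finset.sum_le_sum hmax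
                _ = _ := by simp
          _ = (F.card : ℝ≥0∞) ^ p * b j0 i ^ p := ENNReal.mul_rpow_of_nonneg _ _ hp.le
          _ ≤ _ := mul_le_mul_right (Finset.single_le_sum (f := fun j => b j i ^ p) (fun _ _ => zero_le) hj0) _
      · rw [Finset.not_nonempty_iff_eq_empty.mp hF]; simp [hp]
    have h3 : ∑' i, (∑ j ∈ F, b j i) ^ p ≤ (F.card : ℝ≥0∞) ^ p * (F.card * X ^ p) := by
      calc _ ≤ ∑' i, (F.card : ℝ≥0∞) ^ p * ∑ j ∈ F, b j i ^ p := ENNReal.tsum_le_tsum h2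
        _ = (F.card : ℝ≥0∞) ^ p * ∑ j ∈ F, ∑' i, b j i ^ p := by
            rw [ENNReal.tsum_mul_left, Summable.tsum_finsetSum (fun _ _ => ENNReal.summable)]
        _ ≤ (F.card : ℝ≥0∞) ^ p * ∑ j ∈ F, X ^ p := mul_le_mul_right (Finset.sum_le_sum h1) _
        _ = _ := by simp
    refine (ENNReal.rpow_le_rpow h3 (by positivity)).trans (le_of_eq ?_)
    rw [ENNReal.mul_rpow_of_nonneg _ _ (by positivity), ENNReal.mul_rpow_of_nonneg _ _ (by positivity), ← ENNReal.rpow_mul, ← ENNReal.rpow_mul,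
      mul_one_div_cancel hp.ne', ENNReal.rpow_one, ENNReal.rpow_one, mul_assoc]

lemma lqNorm_shift {ι : Type*} [AddGroup ι] (q : ℝ≥0∞) (f : ι → ℝ≥0∞) (j : ι) :
    lqNorm q (fun m => f (m + j)) = lqNorm q f := by
  unfold lqNorm
  split_ifs
  · exact (Equiv.addRight j).iSup_comp (g := f)
  · congr 1
    exact (Equiv.addRight j).tsum_eq (fun m => f m ^ q.toReal)

lemma doubling {n : ℕ} {D : ℝ≥0∞} {T : (Fin n → ℤ) → ℝ≥0∞} (hT : ∀ m m' : Fin n → ℤ, (∀ i, |m i - m' i| ≤ 1) → T m ≤ D * T m')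
    (N : ℕ) : ∀ j ∈ FR n N, ∀ m, T m ≤ D ^ N * T (m + j) := by
  induction N with
  | zero =>
    intro j hj m
    have : j = 0 := by
      ext i
      simpa using mem_FR.mp hj i
    simp [this]
  | succ N ih =>
    intro j hj m
    set j' : Fin n → ℤ := fun i => j i - (j i).sign with hj'
    have hjj : ∀ t, |(m + j') t - (m + j) t| ≤ 1 := by
      intro t
      have : (m + j') t - (m + j) t = - (j t).sign := by simp [hj']
      rw [this]
      rcases lt_trichotomy (j t) 0 with h | h | h
      · rw [Int.sign_eq_neg_one_of_neg h]; simp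
      · rw [h]; simp
      · rw [Int.sign_eq_one_of_pos h]; simp
    have hj'F : j' ∈ FR n N := by
      rw [mem_FR]
      intro t
      have h1 := mem_FR.mp hj t
      push_cast at h1
      simp only [hj']
      rcases lt_trichotomy (j t) 0 with h | h | h
      · rw [Int.sign_eq_neg_one_of_neg h]; rw [abs_le] at h1 ⊢; constructor <;> omega
      · rw [h]; simp
      · rw [Int.sign_eq_one_of_pos h]; rw [abs_le] at h1 ⊢; constructor <;> omega
    refine (ih j' hj'F m).trans ?_
    rw [pow_succ, mul_assoc]
    gcongr
    exact hT _ _ hjj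

lemma level {n : ℕ} {p D C : ℝ≥0∞} (hp : p ≠ 0) (hD : D ≠ ∞) (hC : C ≠ ∞) (R : ℕ) : ∃ C' : ℝ≥0∞, C' ≠ ∞ ∧
    ∀ T A B : (Fin n → ℤ) → ℝ≥0∞, (∀ m m' : Fin n → ℤ, (∀ i, |m i - m' i| ≤ 1) → T m ≤ D * T m') →
      (∀ m, A m ≤ C * ∑ j ∈ FR n R, B (m + j)) →
      lqNorm p (fun m => T m * A m) ≤ C' * lqNorm p (fun m => T m * B m) := by
  set F := FR n R
  refine ⟨(F.card : ℝ≥0∞) * (F.card : ℝ≥0∞) ^ (1 / p.toReal) * (C * D ^ R), ?_, fun T A B hT hA => ?_⟩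
  · refine ENNReal.mul_ne_top (ENNReal.mul_ne_top (by simp) (ENNReal.rpow_ne_top_of_nonneg (by simp) (by simp))) (ENNReal.mul_ne_top hC (ENNReal.pow_ne_top hD))
  have h1 : ∀ m, T m * A m ≤ ∑ j ∈ F, (C * D ^ R) * (T (m + j) * B (m + j)) := by
    intro m
    refine (mul_le_mul_right (hA m) _).trans ?_
    rw [Finset.mul_sum, Finset.mul_sum]
    refine Finset.sum_le_sum fun j hj => ?_
    calc T m * (C * B (m + j)) ≤ (D ^ R * T (m + j)) * (C * B (m + j)) := mul_le_mul_left (doubling hT R j hj m) _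
      _ = _ := by ring
  refine (lqNorm_mono p h1).trans ?_
  refine (lqNorm_fin hp F (fun j m => (C * D ^ R) * (T (m + j) * B (m + j))) ((C * D ^ R) * lqNorm p (fun m => T m * B m)) fun j _ => ?_).trans
    (le_of_eq (by ring))
  rw [lqNorm_const_mul hp]
  exact mul_le_mul_right (le_of_eq (lqNorm_shift p (fun m => T m * B m) j)) _

lemma disc_le {n : ℕ} {p q r D C : ℝ≥0∞} (hp : p ≠ 0) (hq : q ≠ 0) (hD : D ≠ ∞) (hC : C ≠ ∞) (R : ℕ) : ∃ C' : ℝ≥0∞, C' ≠ ∞ ∧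
    ∀ T A B : ℕ → (Fin n → ℤ) → ℝ≥0∞, (∀ k, ∀ m m' : Fin n → ℤ, (∀ i, |m i - m' i| ≤ 1) → T k m ≤ D * T k m') →
      (∀ k m, A k m ≤ C * ∑ j ∈ FR n R, B k (m + j)) → ∀ φ : Rn n → ℝ,
      discNorm n p q r T A φ ≤ C' * discNorm n p q r T B φ := by
  obtain ⟨C', hC', H⟩ := level (n := n) hp hD hC R
  refine ⟨C' + 1, ENNReal.add_ne_top.mpr ⟨hC', by simp⟩, fun T A B hT hA φ => ?_⟩
  unfold discNorm
  rw [mul_add]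
  refine add_le_add ?_ ?_
  · refine (lqNorm_mono q fun k => H (T (k+1)) (A (k+1)) (B (k+1)) (hT (k+1)) (hA (k+1))).trans ?_
    rw [lqNorm_const_mul hq]
    exact mul_le_mul_left le_self_add _
  · exact le_mul_of_one_le_left' le_add_self

/-! Continuous side -/

lemma lpNormE_mono {α : Type*} [MeasurableSpace α] (p : ℝ≥0∞) (μ : Measure α) {f g : α → ℝ≥0∞} (h : ∀ᵐ x ∂μ, f x ≤ g x) :
    lpNormE p μ f ≤ lpNormE p μ g := by
  unfold lpNormE
  split_ifs
  · exact essSup_mono_ae h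
  · have : 0 ≤ p.toReal := ENNReal.toReal_nonneg
    refine ENNReal.rpow_le_rpow (lintegral_mono_ae ?_) (by positivity)
    filter_upwards [h] with x hx using ENNReal.rpow_le_rpow hx this

lemma lpNormE_const_mul {α : Type*} [MeasurableSpace α] {p : ℝ≥0∞} (hp : p ≠ 0) (μ : Measure α) {C : ℝ≥0∞} (hC : C ≠ ∞) (f : α → ℝ≥0∞) :
    lpNormE p μ (fun x => C * f x) = C * lpNormE p μ f := by
  unfold lpNormE
  split_ifs with h
  · exact ENNReal.essSup_const_mul
  · have hp' : 0 < p.toReal := ENNReal.toReal_pos hp h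
    simp only [ENNReal.mul_rpow_of_nonneg _ _ hp'.le]
    rw [lintegral_const_mul' _ _ (ENNReal.rpow_ne_top_of_nonneg hp'.le hC), ENNReal.mul_rpow_of_nonneg _ _ (by positivity), ← ENNReal.rpow_mul, mul_one_div_cancel hp'.ne', ENNReal.rpow_one]

lemma lpNormE_weight {α : Type*} [MeasurableSpace α] {p : ℝ≥0∞} (hp : p ≠ 0) (μ : Measure α) {w : α → ℝ} (hw : Measurable w)
    (hpos : ∀ x, 0 < w x) (G : ℝ≥0∞) : lpNormE p μ (fun x => ENNReal.ofReal (w x) * G) = eLpNorm w p μ * G := by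
  have e : ∀ x, ENNReal.ofReal (w x) = ‖w x‖ₑ := fun x => (Real.enorm_of_nonneg (hpos x).le).symm
  simp only [e]
  unfold lpNormE
  split_ifs with h
  · subst h
    rw [eLpNorm_exponent_top, mul_comm, eLpNormEssSup, ← ENNReal.essSup_const_mul]
    simp only [mul_comm]
  · have hp' : 0 < p.toReal := ENNReal.toReal_pos hp h
    simp only [ENNReal.mul_rpow_of_nonneg _ _ hp'.le]
    rw [lintegral_mul_const _ (hw.enorm.pow_const _), ENNReal.mul_rpow_of_nonneg _ _ (by positivity), ← ENNReal.rpow_mul, mul_one_div_cancel hp'.ne', ENNReal.rpow_one,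
      eLpNorm_eq_lintegral_rpow_enorm_toReal hp h]

lemma dyadic_disj (n k : ℕ) : Pairwise (Function.onFun Disjoint (dyadicCube n k)) := by
  intro m m' hne
  rw [Function.onFun, Set.disjoint_left]
  intro x hx hx'
  apply hne
  ext i
  have h2 : (0:ℝ) < 2 ^ k := by positivity
  obtain ⟨h3, h4⟩ := hx i
  obtain ⟨h5, h6⟩ := hx' i
  rw [div_lt_iff₀ h2] at h3 h5
  rw [lt_div_iff₀ h2] at h4 h6
  have h7 : (m i : ℝ) < m' i + 1 := by linarith
  have h8 : (m' i : ℝ) < m i + 1 := by linarith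
  have h7' : m i < m' i + 1 := by exact_mod_cast h7
  have h8' : m' i < m i + 1 := by exact_mod_cast h8
  omega

lemma restrict_union (n k : ℕ) : (volume : Measure (Rn n)).restrict (⋃ m, dyadicCube n k m) = volume := by
  refine Measure.restrict_eq_self_of_ae_mem ?_
  filter_upwards [ae_dyadic n k] with x hx
  exact Set.mem_iUnion.mpr ⟨_, hx⟩

lemma glue {n : ℕ} {p : ℝ≥0∞} (hp : p ≠ 0) (k : ℕ) (f : Rn n → ℝ≥0∞) :
    lpNormE p volume f = lqNorm p (fun m : Fin n → ℤ => lpNormE p (volume.restrict (dyadicCube n k m)) f) := by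
  unfold lpNormE lqNorm
  split_ifs with h
  · apply le_antisymm
    · refine essSup_le_of_ae_le _ ?_
      generalize hX : (⨆ m, essSup f (volume.restrict (dyadicCube n k m))) = X
      change ∀ᵐ x ∂(volume : Measure (Rn n)), f x ≤ X
      rw [← restrict_union n k, ae_restrict_iUnion_iff]
      intro m
      filter_upwards [ENNReal.ae_le_essSup (μ := volume.restrict (dyadicCube n k m)) f] with x hx
      rw [← hX]
      exact hx.trans (le_iSup (fun m => essSup f (volume.restrict (dyadicCube n k m))) m)
    · exact iSup_le fun m => essSup_mono_measure Measure.restrict_le_self.absolutelyContinuous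
  · have hp' : 0 < p.toReal := ENNReal.toReal_pos hp h
    congr 1
    simp only [← ENNReal.rpow_mul, one_div_mul_cancel hp'.ne', ENNReal.rpow_one]
    rw [← lintegral_iUnion (fun m => meas_dyadicCube n k m) (dyadic_disj n k), restrict_union]

lemma wtUp {n : ℕ} {p : ℝ≥0∞} (hp : p ≠ 0) {t : ℕ → Rn n → ℝ} (ht : ∀ k, IsWeight (t k)) (k : ℕ) {G : Rn n → ℝ≥0∞}
    {A : (Fin n → ℤ) → ℝ≥0∞} (h : ∀ m, ∀ x ∈ dyadicCube n k m, G x ≤ A m) :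
    lpNormE p volume (fun x => ENNReal.ofReal (t k x) * G x) ≤ lqNorm p (fun m => tkm n p t k m * A m) := by
  rw [glue hp k]
  refine lqNorm_mono p fun m => ?_
  unfold tkm
  rw [← lpNormE_weight hp _ (ht k).1 (ht k).2]
  refine lpNormE_mono p _ ?_
  rw [ae_restrict_iff' (meas_dyadicCube n k m)]
  exact Filter.Eventually.of_forall fun x hx => mul_le_mul_right (h m x hx) _

lemma wtLow {n : ℕ} {p : ℝ≥0∞} (hp : p ≠ 0) {t : ℕ → Rn n → ℝ} (ht : ∀ k, IsWeight (t k)) (k : ℕ) {G : Rn n → ℝ≥0∞}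
    {A : (Fin n → ℤ) → ℝ≥0∞} {C : ℝ≥0∞} (hC : C ≠ ∞) (h : ∀ m, ∀ x ∈ dyadicCube n k m, A m ≤ C * G x) :
    lqNorm p (fun m => tkm n p t k m * A m) ≤ C * lpNormE p volume (fun x => ENNReal.ofReal (t k x) * G x) := by
  rw [← lpNormE_const_mul hp _ hC, glue hp k]
  refine lqNorm_mono p fun m => ?_
  unfold tkm
  rw [← lpNormE_weight hp _ (ht k).1 (ht k).2]
  refine lpNormE_mono p _ ?_
  rw [ae_restrict_iff' (meas_dyadicCube n k m)]
  refine Filter.Eventually.of_forall fun x hx => ?_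
  rw [mul_left_comm]
  exact mul_le_mul_right (h m x hx) _

lemma sum_FR0 {n : ℕ} (f : (Fin n → ℤ) → ℝ≥0∞) (m : Fin n → ℤ) : f m ≤ ∑ j ∈ FR n 0, f (m + j) := by
  have h : (0 : Fin n → ℤ) ∈ FR n 0 := mem_FR.mpr (by simp)
  simpa using Finset.single_le_sum (f := fun j => f (m + j)) (fun _ _ => zero_le) h

lemma tilde_le {n l : ℕ} {p q r D : ℝ≥0∞} {c : ℝ} (hl : 0 < l) (hp : p ≠ 0) (hq : q ≠ 0) (hr : r ≠ 0) (hD : D ≠ ∞) (hc : 1 < c)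
    {t : ℕ → Rn n → ℝ} (ht : ∀ k, IsWeight (t k))
    (hT : ∀ k, ∀ m m' : Fin n → ℤ, (∀ i, |m i - m' i| ≤ 1) → tkm n p t k m ≤ D * tkm n p t k m') :
    ∃ C : ℝ≥0∞, C ≠ ∞ ∧ ∀ φ : Rn n → ℝ, Measurable φ → tildeBnorm n l p q r t φ ≤ C * discNorm3 n l p q r c (tkm n p t) φ := by
  obtain ⟨C6, hC6, H6⟩ := L6loc (n := n) (l := l) hl hr
  obtain ⟨C7, hC7, H7⟩ := chain (n := n) (l := l) hl hr hc (3 + 4 * l)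
  obtain ⟨C8, hC8, H8⟩ := level (n := n) hp hD (ENNReal.mul_ne_top hC6 hC7) (⌈(3 + 4 * l : ℝ)⌉₊ + 2)
  obtain ⟨C9, hC9, H9⟩ := level (n := n) hp hD (QC_pow_ne_top r (FR n (⌈(3:ℝ)⌉₊ + 2)).card) (⌈(3:ℝ)⌉₊ + 2)
  refine ⟨C8 + C9, ENNReal.add_ne_top.mpr ⟨hC8, hC9⟩, fun φ hφ => ?_⟩
  unfold tildeBnorm tildeBnormE discNorm3 discNorm
  rw [mul_add]
  refine add_le_add ?_ ?_
  · refine le_trans ?_ (mul_le_mul_left (le_self_add : C8 ≤ C8 + C9) _)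
    rw [← lqNorm_const_mul hq]
    refine lqNorm_mono q fun k => ?_
    have h1 : ∀ m, ∀ x ∈ dyadicCube n (k+1) m,
        deltaE n l r ((2 : ℝ) ^ (1 - ((k : ℤ) + 1))) (openCube x ((2 : ℝ) ^ (-((k : ℤ) + 1)))) φ ≤
        C6 * ((2 : ℝ≥0∞) ^ ((((k+1) * n : ℕ) : ℝ) / r.toReal) * bestApproxE n l r φ (dilatedCube n (k+1) m (3 + 4 * l))) := by
      intro m x hx
      have := H6 φ hφ (k+1) m x hx
      have e1 : (2:ℝ) * 2 ^ (-((k+1:ℕ):ℤ)) = (2 : ℝ) ^ (1 - ((k : ℤ) + 1)) := by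
        rw [sub_eq_add_neg, zpow_add₀ (by norm_num)]; push_cast; simp
      rw [e1] at this
      push_cast at this ⊢
      exact this
    refine (wtUp hp ht (k+1) h1).trans ?_
    refine H8 _ _ _ (hT (k+1)) fun m => ?_
    rw [mul_assoc]
    exact mul_le_mul_right (H7 φ hφ (k+1) m) _
  · refine le_trans ?_ (mul_le_mul_left (le_add_self : C9 ≤ C8 + C9) _)
    have h1 : ∀ m, ∀ x ∈ dyadicCube n 0 m, eLpNorm φ r (volume.restrict (openCube x 1)) ≤ eLpNorm φ r (volume.restrict (dilatedCube n 0 m 3)) := by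
      intro m x hx
      refine eLp_mono_set ?_ φ r
      have := cube_sub_dil hx (lam := 1)
      norm_num at this
      exact this
    refine (wtUp hp ht 0 h1).trans ?_
    refine H9 _ _ _ (hT 0) fun m => ?_
    refine eLp_cover _ _ _ (fun j _ => meas_dyadicCube n 0 _) ?_ hφ.aestronglyMeasurable r
    rw [ae_restrict_iff' (show MeasurableSet (dilatedCube n 0 m 3) from meas_openCube _ _)]
    exact dil_cover n 0 m 3

lemma disc1_le {n l : ℕ} {p q r : ℝ≥0∞} (hp : p ≠ 0) (hq : q ≠ 0)
    {t : ℕ → Rn n → ℝ} (ht : ∀ k, IsWeight (t k)) :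
    ∃ C : ℝ≥0∞, C ≠ ∞ ∧ ∀ φ : Rn n → ℝ, discNorm1 n l p q r (tkm n p t) φ ≤ C * tildeBnorm n l p q r t φ := by
  set C1 := sf n r (1/2) * sf n r (1/2) with hC1d
  have hC1 : C1 ≠ ∞ := ENNReal.mul_ne_top (sf_ne_top n r (by positivity)) (sf_ne_top n r (by positivity))
  refine ⟨C1 + 1, ENNReal.add_ne_top.mpr ⟨hC1, by simp⟩, fun φ => ?_⟩
  unfold tildeBnorm tildeBnormE discNorm1 discNorm
  rw [mul_add]
  refine add_le_add ?_ ?_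
  · refine le_trans ?_ (mul_le_mul_left (le_self_add : C1 ≤ C1 + 1) _)
    rw [← lqNorm_const_mul hq]
    refine lqNorm_mono q fun k => ?_
    refine wtLow hp ht (k+1) hC1 fun m x hx => ?_
    have := L1loc (n := n) (l := l) (r := r) (φ := φ) (s := (2:ℝ) ^ (-((k+1:ℕ):ℤ))) (by positivity) (dyadic_sub_cube hx)
    have e1 : (2:ℝ) * 2 ^ (-((k+1:ℕ):ℤ)) = (2 : ℝ) ^ (1 - ((k : ℤ) + 1)) := by
      rw [sub_eq_add_neg, zpow_add₀ (by norm_num)]; push_cast; simp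
    rw [e1] at this
    push_cast at this ⊢
    exact this
  · refine le_trans ?_ (mul_le_mul_left (le_add_self : 1 ≤ C1 + 1) _)
    refine wtLow hp ht 0 (by simp) fun m x hx => ?_
    rw [one_mul]
    refine eLp_mono_set ?_ φ r
    simpa using dyadic_sub_cube hx

/-- **Theorem 2.3: the quasinorms `‖·‖^{(i)}`, `i = 1,2,3,4`, are all equivalent to the
defining quasi-norm on `B̃^l_{p,q,r}(ℝⁿ,{t_k})`.** -/
theorem equiv_quasinorms (n l : ℕ) (hn : 0 < n) (hl : 0 < l) (p q r : ℝ≥0∞)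
    (hp : 0 < p) (hq : 0 < q) (hr : 0 < r) (α₁ α₂ α₃ : ℝ) (hα₃ : 0 ≤ α₃)
    (σ₁ σ₂ : ℝ≥0∞) (hσ₁ : 0 < σ₁) (hσ₂ : 0 < σ₂)
    (t : ℕ → Rn n → ℝ) (ht : MemX n α₁ α₂ α₃ σ₁ σ₂ p t) (c : ℝ) (hc : 1 < c) :
    ∃ C : ℝ≥0∞, 0 < C ∧ C < ∞ ∧ ∀ φ : Rn n → ℝ, MemTildeB n l p q r t φ →
      (discNorm1 n l p q r (tkm n p t) φ ≤ C * tildeBnorm n l p q r t φ ∧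
        tildeBnorm n l p q r t φ ≤ C * discNorm1 n l p q r (tkm n p t) φ) ∧
      (discNorm2 n l p q r c (tkm n p t) φ ≤ C * tildeBnorm n l p q r t φ ∧
        tildeBnorm n l p q r t φ ≤ C * discNorm2 n l p q r c (tkm n p t) φ) ∧
      (discNorm3 n l p q r c (tkm n p t) φ ≤ C * tildeBnorm n l p q r t φ ∧
        tildeBnorm n l p q r t φ ≤ C * discNorm3 n l p q r c (tkm n p t) φ) ∧
      (discNorm4 n l p q r c (tkm n p t) φ ≤ C * tildeBnorm n l p q r t φ ∧
        tildeBnorm n l p q r t φ ≤ C * discNorm4 n l p q r c (tkm n p t) φ) := by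
  have hp' := hp.ne'
  have hq' := hq.ne'
  have hr' := hr.ne'
  have hw : ∀ k, IsWeight (t k) := fun k => (ht.1 k).1
  have hD : (2 : ℝ≥0∞) ^ (α₃ : ℝ) ≠ ∞ := ENNReal.rpow_ne_top_of_nonneg hα₃ (by simp)
  have hT : ∀ k, ∀ m m' : Fin n → ℤ, (∀ i, |m i - m' i| ≤ 1) →
      tkm n p t k m ≤ (2 : ℝ≥0∞) ^ (α₃ : ℝ) * tkm n p t k m' := fun k m m' h => (ht.2.2.2 k m m' h).2
  have hc0 : 0 < c := by linarith
  obtain ⟨Ca, hCa, Ha⟩ := tilde_le (l := l) (q := q) (r := r) hl hp' hq' hr' hD hc hw hT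
  obtain ⟨Ch, hCh, Hh⟩ := disc1_le (l := l) (q := q) (r := r) hp' hq' hw
  obtain ⟨C3, hC3, H3⟩ := loc3 (n := n) (l := l) (r := r) hl hr' hc0
  obtain ⟨C4, hC4, H4⟩ := loc4 (n := n) (l := l) (r := r) hr' hc0
  obtain ⟨C5, hC5, H5⟩ := loc5 (n := n) (l := l) (r := r) hl
  obtain ⟨C2, hC2, H2⟩ := L2loc (n := n) (l := l) (r := r) hl hr' hc0
  obtain ⟨Cb, hCb, Hb⟩ := disc_le (n := n) (p := p) (q := q) (r := r) hp' hq' hD hC3 0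
  obtain ⟨Ce, hCe, He⟩ := disc_le (n := n) (p := p) (q := q) (r := r) hp' hq' hD hC4 0
  obtain ⟨Cf, hCf, Hf⟩ := disc_le (n := n) (p := p) (q := q) (r := r) hp' hq' hD hC5 0
  obtain ⟨Cg, hCg, Hg⟩ := disc_le (n := n) (p := p) (q := q) (r := r) hp' hq' hD hC2 (⌈c⌉₊ + 2)
  set K : ℝ≥0∞ := 1 + Ca + Ch + Cb + Ce + Cf + Cg with hK
  have hKt : K ≠ ∞ := by
    simp only [hK]
    finiteness
  have hK1 : 1 ≤ K := by simp only [hK, add_assoc]; exact le_self_add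
  have hKa : Ca ≤ K := by
    calc Ca ≤ Ca + (1 + Ch + Cb + Ce + Cf + Cg) := le_self_add
      _ = K := by rw [hK]; ring
  have hKh : Ch ≤ K := by
    calc Ch ≤ Ch + (1 + Ca + Cb + Ce + Cf + Cg) := le_self_add
      _ = K := by rw [hK]; ring
  have hKb : Cb ≤ K := by
    calc Cb ≤ Cb + (1 + Ca + Ch + Ce + Cf + Cg) := le_self_add
      _ = K := by rw [hK]; ring
  have hKe : Ce ≤ K := by
    calc Ce ≤ Ce + (1 + Ca + Ch + Cb + Cf + Cg) := le_self_add
      _ = K := by rw [hK]; ring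
  have hKf : Cf ≤ K := by
    calc Cf ≤ Cf + (1 + Ca + Ch + Cb + Ce + Cg) := le_self_add
      _ = K := by rw [hK]; ring
  have hKg : Cg ≤ K := le_add_self
  refine ⟨K ^ 4, lt_of_lt_of_le one_pos (one_le_pow₀ hK1), (ENNReal.pow_ne_top hKt).lt_top, fun φ hφ => ?_⟩
  have hφ' : MemLrLoc n r φ := hφ.1
  set d0 := tildeBnorm n l p q r t φ with hd0
  set d1 := discNorm1 n l p q r (tkm n p t) φ with hd1
  set d2 := discNorm2 n l p q r c (tkm n p t) φ with hd2
  set d3 := discNorm3 n l p q r c (tkm n p t) φ with hd3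
  set d4 := discNorm4 n l p q r c (tkm n p t) φ with hd4
  have s03 : d0 ≤ K * d3 := (Ha φ hφ'.1).trans (mul_le_mul_left hKa _)
  have s10 : d1 ≤ K * d0 := (Hh φ).trans (mul_le_mul_left hKh _)
  have s32 : d3 ≤ K * d2 := by
    refine le_trans (Hb _ _ _ hT (fun k m => ?_) φ) (mul_le_mul_left hKb _)
    exact (H3 φ hφ' k m).trans (mul_le_mul_right (sum_FR0 (fun m => deltaEOn n l r (c * (2 : ℝ) ^ (-(k : ℤ)))
      (dilatedCube n k m c) (dilatedCube n k m c) φ) m) _)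
  have s24 : d2 ≤ K * d4 := by
    refine le_trans (He _ _ _ hT (fun k m => ?_) φ) (mul_le_mul_left hKe _)
    exact (H4 φ hφ'.1 k m).trans (mul_le_mul_right (sum_FR0 (fun m => (2 : ℝ≥0∞) ^ (((k * n : ℕ) : ℝ) / r.toReal) *
      modulusE n l r φ (dilatedCube n k m c)) m) _)
  have s43 : d4 ≤ K * d3 := by
    refine le_trans (Hf _ _ _ hT (fun k m => ?_) φ) (mul_le_mul_left hKf _)
    refine le_trans ?_ (mul_le_mul_right (sum_FR0 (fun m => (2 : ℝ≥0∞) ^ (((k * n : ℕ) : ℝ) / r.toReal) *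
      bestApproxE n l r φ (dilatedCube n k m c)) m) _)
    rw [mul_left_comm]
    exact mul_le_mul_right (H5 φ hφ'.1 _ _) _
  have s31 : d3 ≤ K * d1 := by
    refine le_trans (Hg _ _ _ hT (fun k m => ?_) φ) (mul_le_mul_left hKg _)
    exact H2 φ hφ' k m
  have tr : ∀ {x y z : ℝ≥0∞} {i j : ℕ}, x ≤ K ^ i * y → y ≤ K ^ j * z → x ≤ K ^ (i + j) * z := by
    intro x y z i j h1 h2
    refine h1.trans ((mul_le_mul_right h2 _).trans (le_of_eq ?_))
    rw [pow_add, mul_assoc]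
  have up : ∀ {x y : ℝ≥0∞} {i : ℕ}, i ≤ 4 → x ≤ K ^ i * y → x ≤ K ^ 4 * y := fun hi h =>
    h.trans (mul_le_mul_left (pow_le_pow_right₀ hK1 hi) _)
  rw [← pow_one K] at s03 s10 s32 s24 s43 s31
  refine ⟨⟨up (by norm_num) s10, up (by norm_num) (tr s03 s31)⟩,
    ⟨up (by norm_num) (tr s24 (tr s43 (tr s31 s10))), up (by norm_num) (tr s03 s32)⟩,
    ⟨up (by norm_num) (tr s31 s10), up (by norm_num) s03⟩,
    ⟨up (by norm_num) (tr s43 (tr s31 s10)), up (by norm_num) (tr s03 (tr s32 s24))⟩⟩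

end
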